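/- arXiv:2006.09969 — 8 statements merged into one kernel-verified Lean document; each statement's English description precedes it below -/
import Mathlib

section
/- There is a universal constant K > 0 such that for all α ∈ (0,1), all δ with 0 < δ < α and α + δ < 1, and all ε ∈ (0,1), there exists a real univariate polynomial p of degree at most K·(1/δ)·(1 + log(1/ε))² satisfying: (1) |p(x) − s_α(x)| ≤ ε for all x ∈ [0, α−δ] ∪ [α+δ, 1]; (2) 0 ≤ p(x) ≤ 1 for all x ∈ [0,1]; (3) p is monotonically increasing on the interval (α−δ, α+δ). -/
/-! For odd `n` the polynomial `T_n(y) / y` is, up to sign, the Dirichlet kernel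
`sin (n φ) / sin φ` in the variable `y = sin φ`: its absolute value is at least `n / 2` for
`|y| ≤ 1 / n` and at most `1 / |y|` on `[-1, 1]`. An antiderivative `P` of an even power `k + 1` of
it is therefore monotone, grows by at least `(n / 2) ^ k` across `[-1 / n, 1 / n]` and by at most
`(1 / δ) ^ k` on each of `[-1, -δ]` and `[δ, 1]`. Rescaling `P` to run from `0` to `1` on `[-1, 1]`
gives a step at `0` with error `(2 / (n δ)) ^ k`; one takes `n` of order `1 / δ` and `k` of order
`1 + log (1 / ε)`, and translates the step to `α`. -/

open Polynomial Set

lemma exists_derivative_eq_natDegree_le {F : Type*} [Field F] [CharZero F] (q : F[X]) :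
    ∃ p : F[X], derivative p = q ∧ p.natDegree ≤ q.natDegree + 1 := by
  refine ⟨∑ i ∈ Finset.range (q.natDegree + 1), monomial (i + 1) (q.coeff i / (i + 1)), ?_, ?_⟩
  · conv_rhs => rw [q.as_sum_range]
    rw [derivative_sum]
    refine Finset.sum_congr rfl fun i _ => ?_
    rw [derivative_monomial, Nat.cast_succ, div_mul_cancel₀ _ i.cast_add_one_ne_zero,
      Nat.add_sub_cancel]
  · refine natDegree_sum_le_of_forall_le _ _ fun i hi => (natDegree_monomial_le _).trans ?_
    exact Finset.mem_range.1 hi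

lemma sub_le_inv_pow_sub_inv_pow {f f' : ℝ → ℝ} {a b : ℝ} {k : ℕ} (hab : a ≤ b)
    (h0 : (0 : ℝ) ∉ Icc a b) (hf : ∀ x ∈ Icc a b, HasDerivAt f (f' x) x)
    (hf' : ∀ x ∈ Icc a b, f' x ≤ k * x⁻¹ ^ (k + 1)) :
    f b - f a ≤ a⁻¹ ^ k - b⁻¹ ^ k := by
  have hderiv : ∀ x ∈ Icc a b,
      HasDerivAt (fun x => f x + x⁻¹ ^ k) (f' x - k * x⁻¹ ^ (k + 1)) x := by
    intro x hx
    have hx0 : x ≠ 0 := fun h => h0 (h ▸ hx)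
    refine ((hf x hx).add ((hasDerivAt_inv hx0).pow k)).congr_deriv ?_
    cases k with
    | zero => simp
    | succ k => rw [Nat.add_sub_cancel]; ring
  have hanti : AntitoneOn (fun x => f x + x⁻¹ ^ k) (Icc a b) := by
    refine antitoneOn_of_deriv_nonpos (convex_Icc a b)
      (fun x hx => (hderiv x hx).continuousAt.continuousWithinAt)
      (fun x hx => (hderiv x (interior_subset hx)).differentiableAt.differentiableWithinAt)
      fun x hx => ?_
    rw [(hderiv x (interior_subset hx)).deriv]
    exact sub_nonpos.2 (hf' x (interior_subset hx))
  linarith [hanti (left_mem_Icc.2 hab) (right_mem_Icc.2 hab) hab]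

section Trigonometry

variable {n y : ℝ}

lemma abs_arcsin_le_pi_div_two_mul_abs (hy : |y| ≤ 1) :
    |Real.arcsin y| ≤ Real.pi / 2 * |y| := by
  have hjordan := Real.mul_abs_le_abs_sin
    (abs_le.2 ⟨Real.neg_pi_div_two_le_arcsin y, Real.arcsin_le_pi_div_two y⟩)
  rw [Real.sin_arcsin (abs_le.1 hy).1 (abs_le.1 hy).2] at hjordan
  calc |Real.arcsin y| = Real.pi / 2 * (2 / Real.pi * |Real.arcsin y|) := by field_simp
    _ ≤ Real.pi / 2 * |y| := by gcongr

lemma abs_le_abs_arcsin (hy : |y| ≤ 1) : |y| ≤ |Real.arcsin y| := by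
  simpa only [Real.sin_arcsin (abs_le.1 hy).1 (abs_le.1 hy).2] using
    Real.abs_sin_le_abs (x := Real.arcsin y)

lemma half_mul_abs_le_abs_sin_mul_arcsin (hn : 1 ≤ n) (hy : n * |y| ≤ 1) :
    n / 2 * |y| ≤ |Real.sin (n * Real.arcsin y)| := by
  have hn0 : 0 < n := by linarith
  have hy1 : |y| ≤ 1 := (le_mul_of_one_le_left (abs_nonneg y) hn).trans hy
  have habs : |n * Real.arcsin y| = n * |Real.arcsin y| := by rw [abs_mul, abs_of_pos hn0]
  have hsmall : |n * Real.arcsin y| ≤ Real.pi / 2 := by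
    calc |n * Real.arcsin y| ≤ n * (Real.pi / 2 * |y|) := by
          rw [habs]; gcongr; exact abs_arcsin_le_pi_div_two_mul_abs hy1
      _ = Real.pi / 2 * (n * |y|) := by ring
      _ ≤ Real.pi / 2 := mul_le_of_le_one_right (by positivity) hy
  have hpi : 1 / 2 ≤ 2 / Real.pi := by
    rw [div_le_div_iff₀ two_pos Real.pi_pos]; linarith [Real.pi_le_four]
  calc n / 2 * |y| = 1 / 2 * (n * |y|) := by ring
    _ ≤ 2 / Real.pi * (n * |Real.arcsin y|) := by
        have harcsin := abs_le_abs_arcsin hy1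
        gcongr
    _ ≤ |Real.sin (n * Real.arcsin y)| := habs ▸ Real.mul_abs_le_abs_sin hsmall

end Trigonometry

/-- The Dirichlet kernel as an algebraic polynomial: for odd `n`, its value at `sin φ` is
`± sin (n φ) / sin φ`. The even powers of it serve as derivatives of approximate step functions.
For odd `n` the Chebyshev polynomial `T_n` has no constant term, so `divX` is exact division
by `X`. -/
noncomputable def dirichletPoly (n : ℕ) : ℝ[X] := (Chebyshev.T ℝ n).divX

lemma natDegree_dirichletPoly (n : ℕ) : (dirichletPoly n).natDegree = n - 1 := by
  rw [dirichletPoly, natDegree_divX_eq_natDegree_tsub_one, Chebyshev.natDegree_T,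
    Int.natAbs_natCast]

section OddKernel

variable {n : ℕ}

lemma abs_eval_T_sin (hn : Odd n) (φ : ℝ) :
    |(Chebyshev.T ℝ n).eval (Real.sin φ)| = |Real.sin (n * φ)| := by
  obtain ⟨j, rfl⟩ := hn
  have hangle : ((2 * j + 1 : ℕ) : ℝ) * (Real.pi / 2 - φ) =
      Real.pi / 2 - (2 * j + 1 : ℕ) * φ + j * Real.pi := by
    push_cast; ring
  rw [← Real.cos_pi_div_two_sub, Chebyshev.T_real_cos, Int.cast_natCast, hangle,
    Real.cos_add_nat_mul_pi, abs_mul, abs_neg_one_pow, one_mul, Real.cos_pi_div_two_sub]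

lemma abs_eval_dirichletPoly_mul_abs (hn : Odd n) {y : ℝ} (hy : |y| ≤ 1) :
    |(dirichletPoly n).eval y| * |y| = |Real.sin (n * Real.arcsin y)| := by
  have hT0 : (Chebyshev.T ℝ n).coeff 0 = 0 := by
    rw [coeff_zero_eq_eval_zero, Chebyshev.T_eval_zero_of_odd _ (mod_cast hn)]
  have hT : dirichletPoly n * X = Chebyshev.T ℝ n := by
    simpa only [dirichletPoly, hT0, C_0, add_zero] using divX_mul_X_add (Chebyshev.T ℝ n)
  rw [← abs_eval_T_sin hn, Real.sin_arcsin (abs_le.1 hy).1 (abs_le.1 hy).2, ← hT, eval_mul_X,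
    abs_mul]

lemma abs_eval_zero_dirichletPoly (hn : Odd n) : |(dirichletPoly n).eval 0| = n := by
  have heven : Even ((n : ℤ) - 1) := by
    rw [Int.even_sub_one, Int.not_even_iff_odd]; exact_mod_cast hn
  have hcoeff : (dirichletPoly n).eval 0 = (derivative (Chebyshev.T ℝ n)).eval 0 := by
    rw [← coeff_zero_eq_eval_zero, ← coeff_zero_eq_eval_zero, coeff_derivative, dirichletPoly,
      coeff_divX]
    simp
  rw [hcoeff, Chebyshev.T_derivative_eq_U, eval_mul, Chebyshev.U_eval_zero_of_even _ heven]
  rcases Int.even_or_odd (((n : ℤ) - 1) / 2) with h | h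
  · simp [Int.negOnePow_even _ h]
  · simp [Int.negOnePow_odd _ h]

lemma abs_eval_dirichletPoly_le_inv (hn : Odd n) {y : ℝ} (hy : |y| ≤ 1) (hy0 : y ≠ 0) :
    |(dirichletPoly n).eval y| ≤ |y|⁻¹ := by
  rw [← one_div, le_div_iff₀ (abs_pos.2 hy0), abs_eval_dirichletPoly_mul_abs hn hy]
  exact Real.abs_sin_le_one _

lemma half_le_abs_eval_dirichletPoly (hn : Odd n) {y : ℝ} (hy : n * |y| ≤ 1) :
    (n : ℝ) / 2 ≤ |(dirichletPoly n).eval y| := by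
  have hn1 : (1 : ℝ) ≤ n := mod_cast hn.pos
  rcases eq_or_ne y 0 with rfl | hy0
  · rw [abs_eval_zero_dirichletPoly hn]; linarith
  · have hy1 : |y| ≤ 1 := (le_mul_of_one_le_left (abs_nonneg y) hn1).trans hy
    refine le_of_mul_le_mul_right ?_ (abs_pos.2 hy0)
    rw [abs_eval_dirichletPoly_mul_abs hn hy1]
    exact half_mul_abs_le_abs_sin_mul_arcsin hn1 hy

end OddKernel

section Antiderivative

variable {n k : ℕ} {δ : ℝ} {P : ℝ[X]}

lemma monotone_eval_of_derivative_eq_pow {q : ℝ[X]} (hk : Even k) (hP : derivative P = q ^ k) :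
    Monotone fun x => P.eval x := by
  refine monotone_of_deriv_nonneg P.differentiable fun x => ?_
  rw [Polynomial.deriv, hP, eval_pow]
  exact hk.pow_nonneg _

lemma half_pow_le_eval_sub_eval_neg (hn : Odd n) (hk : Odd k)
    (hP : derivative P = dirichletPoly n ^ (k + 1)) (hδ : 1 ≤ n * δ) :
    ((n : ℝ) / 2) ^ k ≤ P.eval δ - P.eval (-δ) := by
  have hn0 : (0 : ℝ) < n := mod_cast hn.pos
  have hmono := monotone_eval_of_derivative_eq_pow hk.add_one hP
  have hinv : (n : ℝ)⁻¹ ≤ δ := (inv_le_iff_one_le_mul₀' hn0).2 hδ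
  have hinv0 : 0 < (n : ℝ)⁻¹ := inv_pos.2 hn0
  have hderiv : ∀ x ∈ interior (Icc (-(n : ℝ)⁻¹) (n : ℝ)⁻¹),
      ((n : ℝ) / 2) ^ (k + 1) ≤ deriv (fun x => P.eval x) x := by
    intro x hx
    rw [interior_Icc] at hx
    have hx' : n * |x| ≤ 1 := by
      rw [mul_comm, ← le_inv_mul_iff₀' hn0, mul_one]
      exact abs_le.2 ⟨hx.1.le, hx.2.le⟩
    rw [Polynomial.deriv, hP, eval_pow, ← hk.add_one.pow_abs (eval x _)]
    exact pow_le_pow_left₀ (by positivity) (half_le_abs_eval_dirichletPoly hn hx') _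
  calc ((n : ℝ) / 2) ^ k = (n / 2) ^ (k + 1) * ((n : ℝ)⁻¹ - -(n : ℝ)⁻¹) := by
        rw [pow_succ]; field_simp; norm_num
    _ ≤ P.eval (n : ℝ)⁻¹ - P.eval (-(n : ℝ)⁻¹) :=
        (convex_Icc _ _).mul_sub_le_image_sub_of_le_deriv P.continuousOn P.differentiableOn hderiv
          _ (left_mem_Icc.2 (by linarith)) _ (right_mem_Icc.2 (by linarith)) (by linarith)
    _ ≤ P.eval δ - P.eval (-δ) := sub_le_sub (hmono hinv) (hmono (neg_le_neg hinv))

lemma eval_sub_eval_le_inv_pow_sub_inv_pow (hn : Odd n) (hk : Odd k)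
    (hP : derivative P = dirichletPoly n ^ (k + 1)) {a b : ℝ} (ha : -1 ≤ a) (hab : a ≤ b)
    (hb : b ≤ 1) (h0 : (0 : ℝ) ∉ Icc a b) :
    P.eval b - P.eval a ≤ a⁻¹ ^ k - b⁻¹ ^ k := by
  refine sub_le_inv_pow_sub_inv_pow hab h0 (fun x _ => hP ▸ P.hasDerivAt x) fun x hx => ?_
  have hx1 : |x| ≤ 1 := abs_le.2 ⟨ha.trans hx.1, hx.2.trans hb⟩
  have hx0 : x ≠ 0 := fun h => h0 (h ▸ hx)
  calc (dirichletPoly n ^ (k + 1)).eval x = |(dirichletPoly n).eval x| ^ (k + 1) := by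
        rw [eval_pow, hk.add_one.pow_abs]
    _ ≤ |x|⁻¹ ^ (k + 1) := by gcongr; exact abs_eval_dirichletPoly_le_inv hn hx1 hx0
    _ = x⁻¹ ^ (k + 1) := by rw [← abs_inv, hk.add_one.pow_abs]
    _ ≤ k * x⁻¹ ^ (k + 1) :=
        le_mul_of_one_le_left (hk.add_one.pow_nonneg _) (mod_cast hk.pos)

lemma eval_one_sub_eval_le_inv_pow (hn : Odd n) (hk : Odd k)
    (hP : derivative P = dirichletPoly n ^ (k + 1)) (hδ : 0 < δ) (hδ1 : δ ≤ 1) :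
    P.eval 1 - P.eval δ ≤ δ⁻¹ ^ k := by
  have h := eval_sub_eval_le_inv_pow_sub_inv_pow hn hk hP (by linarith) hδ1 le_rfl
    fun h0 => hδ.not_ge h0.1
  rw [inv_one, one_pow] at h
  linarith

lemma eval_neg_sub_eval_neg_one_le_inv_pow (hn : Odd n) (hk : Odd k)
    (hP : derivative P = dirichletPoly n ^ (k + 1)) (hδ : 0 < δ) (hδ1 : δ ≤ 1) :
    P.eval (-δ) - P.eval (-1) ≤ δ⁻¹ ^ k := by
  have h := eval_sub_eval_le_inv_pow_sub_inv_pow hn hk hP le_rfl (neg_le_neg hδ1) (by linarith)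
    fun h0 => (neg_lt_zero.2 hδ).not_ge h0.2
  rw [inv_neg, inv_neg, hk.neg_pow, hk.neg_pow, inv_one, one_pow] at h
  linarith

end Antiderivative

/-- `q` approximates the step at `0` on `[-1, 1]`: it increases from `0` at `-1` to `1` at `1`,
growing by at most `ε` on each of `[-1, -δ]` and `[δ, 1]`. Monotonicity is required on all
of `ℝ`. -/
structure IsApproxStep (q : ℝ[X]) (δ ε : ℝ) : Prop where
  monotone : Monotone fun x => q.eval x
  eval_neg_one : q.eval (-1) = 0
  eval_one : q.eval 1 = 1
  eval_neg_le : q.eval (-δ) ≤ ε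
  one_sub_eval_le : 1 - q.eval δ ≤ ε

section IsApproxStep

variable {q : ℝ[X]} {δ ε x : ℝ}

lemma IsApproxStep.mono {ε' : ℝ} (hq : IsApproxStep q δ ε) (h : ε ≤ ε') :
    IsApproxStep q δ ε' where
  __ := hq
  eval_neg_le := hq.eval_neg_le.trans h
  one_sub_eval_le := hq.one_sub_eval_le.trans h

lemma IsApproxStep.eval_mem_Icc (hq : IsApproxStep q δ ε) (hx : x ∈ Icc (-1 : ℝ) 1) :
    q.eval x ∈ Icc (0 : ℝ) 1 :=
  ⟨hq.eval_neg_one ▸ hq.monotone hx.1, hq.eval_one ▸ hq.monotone hx.2⟩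

lemma IsApproxStep.abs_eval_sub_step_le (hq : IsApproxStep q δ ε) (hδ : 0 < δ)
    (hx : x ∈ Icc (-1 : ℝ) (-δ) ∪ Icc δ 1) :
    |q.eval x - (if x < 0 then (0 : ℝ) else 1)| ≤ ε := by
  rcases hx with ⟨hx1, hxδ⟩ | ⟨hxδ, hx1⟩
  · have hmem := hq.eval_mem_Icc ⟨hx1, by linarith⟩
    rw [if_pos (by linarith), sub_zero, abs_of_nonneg hmem.1]
    exact (hq.monotone hxδ).trans hq.eval_neg_le
  · have hmem := hq.eval_mem_Icc ⟨by linarith, hx1⟩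
    rw [if_neg (by linarith), abs_sub_comm, abs_of_nonneg (sub_nonneg.2 hmem.2)]
    exact (sub_le_sub_left (hq.monotone hxδ) 1).trans hq.one_sub_eval_le

end IsApproxStep

lemma exists_isApproxStep_of_growth_le {P : ℝ[X]} {δ ε : ℝ} (hP : Monotone fun x => P.eval x)
    (hpos : P.eval (-1) < P.eval 1)
    (hleft : P.eval (-δ) - P.eval (-1) ≤ ε * (P.eval 1 - P.eval (-1)))
    (hright : P.eval 1 - P.eval δ ≤ ε * (P.eval 1 - P.eval (-1))) :
    ∃ q : ℝ[X], q.natDegree ≤ P.natDegree ∧ IsApproxStep q δ ε := by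
  set D := P.eval 1 - P.eval (-1) with hD
  have hDpos : 0 < D := sub_pos.2 hpos
  have heval : ∀ x, (C D⁻¹ * (P - C (P.eval (-1)))).eval x = (P.eval x - P.eval (-1)) / D := by
    intro x
    rw [eval_mul, eval_C, eval_sub, eval_C, div_eq_inv_mul]
  refine ⟨C D⁻¹ * (P - C (P.eval (-1))),
    (natDegree_C_mul_le _ _).trans_eq natDegree_sub_C, ⟨fun x y hxy => ?_, ?_, ?_, ?_, ?_⟩⟩
  · simp only [heval]
    gcongr
    exact hP hxy
  · rw [heval, sub_self, zero_div]
  · rw [heval, ← hD, div_self hDpos.ne']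
  · rwa [heval, div_le_iff₀ hDpos]
  · rw [heval, one_sub_div hDpos.ne', div_le_iff₀ hDpos]
    linarith

lemma exists_isApproxStep_two_div_pow {n k : ℕ} (hn : Odd n) (hk : Odd k) {δ : ℝ} (hδ : 0 < δ)
    (hδ1 : δ ≤ 1) :
    ∃ q : ℝ[X], q.natDegree ≤ n * (k + 1) ∧ IsApproxStep q δ ((2 / (n * δ)) ^ k) := by
  have hn0 : (0 : ℝ) < n := mod_cast hn.pos
  obtain ⟨P, hP, hPdeg⟩ := exists_derivative_eq_natDegree_le (dirichletPoly n ^ (k + 1))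
  have hmono := monotone_eval_of_derivative_eq_pow hk.add_one hP
  have hgrowth : ((n : ℝ) / 2) ^ k ≤ P.eval 1 - P.eval (-1) :=
    half_pow_le_eval_sub_eval_neg hn hk hP (by simpa only [mul_one] using mod_cast hn.pos)
  have htail : δ⁻¹ ^ k ≤ (2 / (n * δ)) ^ k * (P.eval 1 - P.eval (-1)) := by
    calc δ⁻¹ ^ k = (2 / (n * δ)) ^ k * (n / 2) ^ k := by rw [← mul_pow]; congr 1; field_simp
      _ ≤ _ := by gcongr
  obtain ⟨q, hqdeg, hq⟩ := exists_isApproxStep_of_growth_le hmono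
    (sub_pos.1 ((by positivity : 0 < ((n : ℝ) / 2) ^ k).trans_le hgrowth))
    ((eval_neg_sub_eval_neg_one_le_inv_pow hn hk hP hδ hδ1).trans htail)
    ((eval_one_sub_eval_le_inv_pow hn hk hP hδ hδ1).trans htail)
  refine ⟨q, ?_, hq⟩
  have hpow : (dirichletPoly n ^ (k + 1)).natDegree = (k + 1) * (n - 1) := by
    rw [natDegree_pow, natDegree_dirichletPoly]
  obtain ⟨j, rfl⟩ := Nat.exists_eq_add_of_le' hn.pos
  rw [Nat.add_sub_cancel] at hpow
  nlinarith

lemma half_pow_le_of_log_inv_le {ε : ℝ} (hε : 0 < ε) {j : ℕ} (hj : Real.log (1 / ε) ≤ j) :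
    (1 / 2 : ℝ) ^ (2 * j + 1) ≤ ε := by
  have hexp : 1 / ε ≤ 4 ^ j := by
    calc 1 / ε = Real.exp (Real.log (1 / ε)) := (Real.exp_log (by positivity)).symm
      _ ≤ Real.exp j := Real.exp_le_exp.2 hj
      _ = Real.exp 1 ^ j := by rw [← Real.exp_nat_mul, mul_one]
      _ ≤ 4 ^ j := by gcongr; linarith [Real.exp_one_lt_d9]
  calc (1 / 2 : ℝ) ^ (2 * j + 1) ≤ (1 / 2) ^ (2 * j) :=
        pow_le_pow_of_le_one (by norm_num) (by norm_num) (Nat.le_succ _)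
    _ = 1 / 4 ^ j := by rw [pow_mul, ← one_div_pow]; norm_num
    _ ≤ ε := (one_div_le hε (by positivity)).1 hexp

theorem exists_isApproxStep {δ ε : ℝ} (hδ : 0 < δ) (hδ1 : δ ≤ 1) (hε : 0 < ε) (hε1 : ε ≤ 1) :
    ∃ q : ℝ[X], (q.natDegree : ℝ) ≤ 28 * (1 / δ) * (1 + Real.log (1 / ε)) ∧
      IsApproxStep q δ ε := by
  set L := Real.log (1 / ε)
  have hL : 0 ≤ L := Real.log_nonneg ((one_le_div hε).2 hε1)
  set i := ⌈2 / δ⌉₊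
  set j := ⌈L⌉₊
  have hi : 2 / δ ≤ i := Nat.le_ceil _
  have hi' : (i : ℝ) < 2 / δ + 1 := Nat.ceil_lt_add_one (by positivity)
  have hj' : (j : ℝ) < L + 1 := Nat.ceil_lt_add_one hL
  have hnδ : 4 ≤ ((2 * i + 1 : ℕ) : ℝ) * δ := by
    rw [div_le_iff₀ hδ] at hi
    push_cast
    linarith
  obtain ⟨q, hqdeg, hq⟩ := exists_isApproxStep_two_div_pow (n := 2 * i + 1) (k := 2 * j + 1)
    (odd_two_mul_add_one i) (odd_two_mul_add_one j) hδ hδ1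
  refine ⟨q, ?_, hq.mono ?_⟩
  · have hδinv : 1 ≤ 1 / δ := (one_le_div hδ).2 hδ1
    have hn : (2 * i + 1 : ℝ) ≤ 7 * (1 / δ) := by
      rw [← mul_one_div] at hi'
      linarith
    calc (q.natDegree : ℝ) ≤ (2 * i + 1) * (2 * j + 1 + 1) := mod_cast hqdeg
      _ ≤ 7 * (1 / δ) * (4 * (1 + L)) := by gcongr; linarith
      _ = 28 * (1 / δ) * (1 + L) := by ring
  · calc (2 / (((2 * i + 1 : ℕ) : ℝ) * δ)) ^ (2 * j + 1) ≤ (1 / 2) ^ (2 * j + 1) := by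
          refine pow_le_pow_left₀ (by positivity) ?_ _
          rw [div_le_div_iff₀ (by linarith) two_pos]
          linarith
      _ ≤ ε := half_pow_le_of_log_inv_le hε (Nat.le_ceil L)

theorem stmt3_general {α δ ε : ℝ} (hα : 0 ≤ α) (hα1 : α ≤ 1) (hδ : 0 < δ) (hδ1 : δ ≤ 1)
    (hε : 0 < ε) (hε1 : ε ≤ 1) :
    ∃ p : ℝ[X],
      (p.natDegree : ℝ) ≤ 28 * (1 / δ) * (1 + Real.log (1 / ε)) ∧
      (∀ x ∈ Icc (0 : ℝ) (α - δ) ∪ Icc (α + δ) 1,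
        |p.eval x - (if x < α then (0 : ℝ) else 1)| ≤ ε) ∧
      (∀ x ∈ Icc (0 : ℝ) 1, p.eval x ∈ Icc (0 : ℝ) 1) ∧
      Monotone fun x => p.eval x := by
  obtain ⟨q, hqdeg, hq⟩ := exists_isApproxStep hδ hδ1 hε hε1
  have heval : ∀ x, (q.comp (X - C α)).eval x = q.eval (x - α) := fun x => by
    rw [eval_comp, eval_sub, eval_X, eval_C]
  refine ⟨q.comp (X - C α), ?_, fun x hx => ?_, fun x hx => ?_, fun x y hxy => ?_⟩
  · rwa [natDegree_comp, natDegree_X_sub_C, mul_one]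
  · have hstep := hq.abs_eval_sub_step_le (x := x - α) hδ <| hx.imp
      (fun h => ⟨by linarith [h.1], by linarith [h.2]⟩)
      fun h => ⟨by linarith [h.1], by linarith [h.2]⟩
    simpa only [heval, sub_neg] using hstep
  · rw [heval]
    exact hq.eval_mem_Icc ⟨by linarith [hx.1], by linarith [hx.2]⟩
  · simpa only [heval] using hq.monotone (sub_le_sub_right hxy α)

/-- low-degree SoS-friendly polynomial approximation of the step function s_α
(Diakonikolas et al.): degree O((1/δ)·log²(1/ε)), ε-close to the step outside (α−δ, α+δ),
bounded in [0,1] on [0,1], and monotone on (α−δ, α+δ). -/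
theorem stmt3 :
    ∃ K : ℝ, 0 < K ∧
      ∀ α δ ε : ℝ, 0 < α → α < 1 → 0 < δ → δ < α → α + δ < 1 → 0 < ε → ε < 1 →
        ∃ p : Polynomial ℝ,
          (p.natDegree : ℝ) ≤ K * (1 / δ) * (1 + Real.log (1 / ε)) ^ 2 ∧
          (∀ x : ℝ, x ∈ Set.Icc (0 : ℝ) (α - δ) ∪ Set.Icc (α + δ) 1 →
            |p.eval x - (if x < α then (0 : ℝ) else 1)| ≤ ε) ∧
          (∀ x : ℝ, 0 ≤ x → x ≤ 1 → 0 ≤ p.eval x ∧ p.eval x ≤ 1) ∧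
          MonotoneOn (fun x => p.eval x) (Set.Ioo (α - δ) (α + δ)) := by
  refine ⟨28, by norm_num, fun α δ ε hα hα1 hδ hδα hαδ hε hε1 => ?_⟩
  obtain ⟨p, hdeg, hstep, hmem, hmono⟩ :=
    stmt3_general hα.le hα1.le hδ (by linarith) hε hε1.le
  have hL : 1 ≤ 1 + Real.log (1 / ε) :=
    le_add_of_nonneg_right (Real.log_nonneg ((one_le_div hε).2 hε1.le))
  exact ⟨p, hdeg.trans (by gcongr; exact le_self_pow₀ hL two_ne_zero), hstep,
    fun x h0 h1 => hmem x ⟨h0, h1⟩, hmono.monotoneOn _⟩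
end

section
/- Let q be a real univariate polynomial of degree d that is nonnegative on the interval [a,b], where a < b are real numbers. Then there exist real polynomials s and t, each of degree at most d, such that: if d is even, q(x) = s(x)² + (x−a)(b−x)·t(x)², and if d is odd, q(x) = (x−a)·s(x)² + (b−x)·t(x)², as an identity of polynomials. -/
open Polynomial

/-!
The sums in question are multiplicative: writing `g = X - a` and `h = b - X`, they are the norms of
`s + t√(-gh)` (even degree) and of `s√g + t√(-h)` (odd degree), so Brahmagupta's identity multiplies
them, the parities of the degrees adding up. It therefore suffices to split off from `q` a factor
that is such a sum. A real root outside `(a, b)` gives a linear factor, which is interpolated at the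
endpoints; a real root inside `(a, b)` is a minimum of `q`, hence a double root; this and a pair of
conjugate roots `u ± iv` both give a factor `(X - u)² + v²`. The cofactor is again nonnegative on
`[a, b]`, because the zeros of the factor are isolated.
-/

/-- The polynomials of formal degree `d` of the kind occurring in Lukács' theorem, for two weights
`g` and `h` (there `X - a` and `b - X`). The bounds say that, for weights of degree at most one,
every summand has degree at most `d`; they are what makes these sums closed under products. As the
zero polynomial has degree `⊥`, the bound `t.degree < m` forces `t = 0` for `m = 0`. -/
inductive IsLukacsSum {R : Type*} [CommRing R] (g h : R[X]) : ℕ → R[X] → Prop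
  | even {m : ℕ} {s t : R[X]} (hs : s.degree ≤ m) (ht : t.degree < m) :
      IsLukacsSum g h (2 * m) (s ^ 2 + g * h * t ^ 2)
  | odd {m : ℕ} {s t : R[X]} (hs : s.degree ≤ m) (ht : t.degree ≤ m) :
      IsLukacsSum g h (2 * m + 1) (g * s ^ 2 + h * t ^ 2)

section Degree

variable {R : Type*} [Semiring R] {p q : R[X]} {m n : ℕ}

theorem degree_mul_lt_of_le_of_lt (hp : p.degree ≤ m) (hq : q.degree < n) :
    (p * q).degree < (m + n : ℕ) :=
  calc (p * q).degree ≤ m + q.degree := degree_mul_le_of_le hp le_rfl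
    _ < m + n := WithBot.add_lt_add_left (WithBot.natCast_ne_bot m) hq
    _ = (m + n : ℕ) := (Nat.cast_add m n).symm

theorem degree_mul_le_of_le_one_of_lt (hp : p.degree ≤ 1) (hq : q.degree < m) :
    (p * q).degree ≤ m :=
  calc (p * q).degree ≤ 1 + q.degree := degree_mul_le_of_le hp le_rfl
    _ = q.degree + 1 := add_comm _ _
    _ ≤ m := Nat.WithBot.add_one_le_of_lt hq

end Degree

namespace IsLukacsSum

section CommRing

variable {R : Type*} [CommRing R] {g h p q u v s t : R[X]} {d e m n : ℕ}

theorem even_mul_even (hg : g.degree ≤ 1) (hh : h.degree ≤ 1) (hu : u.degree ≤ m)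
    (hv : v.degree < m) (hs : s.degree ≤ n) (ht : t.degree < n) :
    IsLukacsSum g h (2 * (m + n)) ((u ^ 2 + g * h * v ^ 2) * (s ^ 2 + g * h * t ^ 2)) := by
  have brahmagupta : (u ^ 2 + g * h * v ^ 2) * (s ^ 2 + g * h * t ^ 2) =
      (u * s - (g * v) * (h * t)) ^ 2 + g * h * (u * t + s * v) ^ 2 := by ring
  have hgv := degree_mul_le_of_le_one_of_lt hg hv
  have hht := degree_mul_le_of_le_one_of_lt hh ht
  rw [brahmagupta]
  refine .even ((degree_sub_le _ _).trans (max_le ?_ ?_))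
    ((degree_add_le _ _).trans_lt (max_lt ?_ ?_))
  · exact_mod_cast degree_mul_le_of_le hu hs
  · exact_mod_cast degree_mul_le_of_le hgv hht
  · exact degree_mul_lt_of_le_of_lt hu ht
  · exact add_comm n m ▸ degree_mul_lt_of_le_of_lt hs hv

theorem even_mul_odd (hg : g.degree ≤ 1) (hh : h.degree ≤ 1) (hu : u.degree ≤ m)
    (hv : v.degree < m) (hs : s.degree ≤ n) (ht : t.degree ≤ n) :
    IsLukacsSum g h (2 * (m + n) + 1) ((u ^ 2 + g * h * v ^ 2) * (g * s ^ 2 + h * t ^ 2)) := by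
  have brahmagupta : (u ^ 2 + g * h * v ^ 2) * (g * s ^ 2 + h * t ^ 2) =
      g * (u * s - (h * v) * t) ^ 2 + h * (u * t + (g * v) * s) ^ 2 := by ring
  have hgv := degree_mul_le_of_le_one_of_lt hg hv
  have hhv := degree_mul_le_of_le_one_of_lt hh hv
  rw [brahmagupta]
  refine .odd ((degree_sub_le _ _).trans (max_le ?_ ?_)) ((degree_add_le _ _).trans (max_le ?_ ?_))
  · exact_mod_cast degree_mul_le_of_le hu hs
  · exact_mod_cast degree_mul_le_of_le hhv ht
  · exact_mod_cast degree_mul_le_of_le hu ht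
  · exact_mod_cast degree_mul_le_of_le hgv hs

theorem odd_mul_odd (hg : g.degree ≤ 1) (hh : h.degree ≤ 1) (hu : u.degree ≤ m)
    (hv : v.degree ≤ m) (hs : s.degree ≤ n) (ht : t.degree ≤ n) :
    IsLukacsSum g h (2 * (m + n + 1)) ((g * u ^ 2 + h * v ^ 2) * (g * s ^ 2 + h * t ^ 2)) := by
  have brahmagupta : (g * u ^ 2 + h * v ^ 2) * (g * s ^ 2 + h * t ^ 2) =
      (g * (u * s) - h * (v * t)) ^ 2 + g * h * (u * t + v * s) ^ 2 := by ring
  have degree_lt {p q : R[X]} (hp : p.degree ≤ m) (hq : q.degree ≤ n) :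
      (p * q).degree < (m + n + 1 : ℕ) :=
    degree_mul_lt_of_le_of_lt (n := n + 1) hp (hq.trans_lt (by exact_mod_cast n.lt_succ_self))
  rw [brahmagupta]
  exact .even
    ((degree_sub_le _ _).trans (max_le
      (degree_mul_le_of_le_one_of_lt hg (degree_lt hu hs))
      (degree_mul_le_of_le_one_of_lt hh (degree_lt hv ht))))
    ((degree_add_le _ _).trans_lt (max_lt (degree_lt hu ht) (degree_lt hv hs)))

theorem mul (hg : g.degree ≤ 1) (hh : h.degree ≤ 1) (hp : IsLukacsSum g h d p)
    (hq : IsLukacsSum g h e q) : IsLukacsSum g h (d + e) (p * q) := by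
  cases hp with
  | @even m _ _ hu hv =>
    cases hq with
    | @even n _ _ hs ht => exact mul_add 2 m n ▸ even_mul_even hg hh hu hv hs ht
    | @odd n _ _ hs ht =>
      rw [show 2 * m + (2 * n + 1) = 2 * (m + n) + 1 by ring]
      exact even_mul_odd hg hh hu hv hs ht
  | @odd m _ _ hu hv =>
    cases hq with
    | @even n _ _ hs ht =>
      rw [show 2 * m + 1 + 2 * n = 2 * (n + m) + 1 by ring, mul_comm (_ + _)]
      exact even_mul_odd hg hh hs ht hu hv
    | @odd n _ _ hs ht =>
      rw [show 2 * m + 1 + (2 * n + 1) = 2 * (m + n + 1) by ring]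
      exact odd_mul_odd hg hh hu hv hs ht

theorem eval_nonneg [LinearOrder R] [IsStrictOrderedRing R] (hq : IsLukacsSum g h d q) {x : R}
    (hg : 0 ≤ g.eval x) (hh : 0 ≤ h.eval x) : 0 ≤ q.eval x := by
  cases hq <;> simp only [eval_add, eval_mul, eval_pow] <;> positivity

end CommRing

theorem C_of_nonneg (g h : ℝ[X]) {c : ℝ} (hc : 0 ≤ c) : IsLukacsSum g h 0 (C c) := by
  have hsq : C c = C √c ^ 2 + g * h * 0 ^ 2 := by rw [← C_pow, Real.sq_sqrt hc]; ring
  rw [hsq]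
  exact .even (m := 0) degree_C_le (by simp)

theorem of_natDegree_le_one {a b : ℝ} (hab : a < b) {p : ℝ[X]} (hp : p.natDegree ≤ 1)
    (ha : 0 ≤ p.eval a) (hb : 0 ≤ p.eval b) : IsLukacsSum (X - C a) (C b - X) 1 p := by
  have hba : 0 < b - a := sub_pos.2 hab
  have interpolation : p = (X - C a) * C √(p.eval b / (b - a)) ^ 2 +
      (C b - X) * C √(p.eval a / (b - a)) ^ 2 := by
    rw [← C_pow, ← C_pow, Real.sq_sqrt (by positivity), Real.sq_sqrt (by positivity)]
    obtain ⟨k, l, rfl⟩ := exists_eq_X_add_C_of_natDegree_le_one hp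
    refine Polynomial.funext fun x => ?_
    simp only [eval_add, eval_sub, eval_mul, eval_X, eval_C]
    field_simp
    ring
  rw [interpolation]
  exact .odd (m := 0) degree_C_le degree_C_le

theorem X_sub_C_sq_add_C {a b : ℝ} (hab : a < b) (u : ℝ) {c : ℝ} (hc : 0 ≤ c) :
    IsLukacsSum (X - C a) (C b - X) 2 ((X - C u) ^ 2 + C c) := by
  have hba : 0 < b - a := sub_pos.2 hab
  set α := √((a - u) ^ 2 + c)
  set β := √((b - u) ^ 2 + c)
  have hα_sq : α ^ 2 = (a - u) ^ 2 + c := Real.sq_sqrt (by positivity)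
  have hβ_sq : β ^ 2 = (b - u) ^ 2 + c := Real.sq_sqrt (by positivity)
  have hαβ : b - a ≤ α + β :=
    calc b - a ≤ |a - u| + |b - u| := by linarith [neg_abs_le (a - u), le_abs_self (b - u)]
      _ ≤ α + β := add_le_add (Real.abs_le_sqrt (by linarith)) (Real.abs_le_sqrt (by linarith))
  have hγ : 0 ≤ ((α + β) / (b - a)) ^ 2 - 1 :=
    sub_nonneg.2 (one_le_pow₀ ((one_le_div hba).2 hαβ))
  -- The linear polynomial with values `α` at `a` and `-β` at `b` has the right square at both
  -- endpoints, so the difference is a multiple of `(X - a) * (b - X)`.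
  have interpolation : (X - C u) ^ 2 + C c =
      (C (α / (b - a)) * (C b - X) - C (β / (b - a)) * (X - C a)) ^ 2 +
        (X - C a) * (C b - X) * C √(((α + β) / (b - a)) ^ 2 - 1) ^ 2 := by
    rw [← C_pow, Real.sq_sqrt hγ]
    refine Polynomial.funext fun x => ?_
    simp only [eval_add, eval_sub, eval_mul, eval_pow, eval_X, eval_C]
    field_simp
    linear_combination (x - b) * (b - a) * hα_sq + (a - x) * (b - a) * hβ_sq
  rw [interpolation]
  refine .even (m := 1) ?_ (degree_C_le.trans_lt (by norm_num))
  compute_degree!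

end IsLukacsSum

theorem X_sub_C_sq_dvd_of_isLocalMin {q : ℝ[X]} {r : ℝ} (hr : q.IsRoot r)
    (hmin : IsLocalMin (fun x => q.eval x) r) : (X - C r) ^ 2 ∣ q := by
  rcases eq_or_ne q 0 with rfl | hq
  · exact dvd_zero _
  have hr' : q.derivative.IsRoot r := hmin.hasDerivAt_eq_zero (q.hasDerivAt r)
  exact (le_rootMultiplicity_iff hq).1 ((one_lt_rootMultiplicity_iff_isRoot hq).2 ⟨hr, hr'⟩)

theorem eval_nonneg_of_mul_nonneg {f p : ℝ[X]} {s : Set ℝ} (hs : s ⊆ closure (interior s))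
    (hf0 : f ≠ 0) (hf : ∀ x ∈ s, 0 ≤ f.eval x) (hfp : ∀ x ∈ s, 0 ≤ (f * p).eval x) :
    ∀ x ∈ s, 0 ≤ p.eval x := by
  have dense_nonroots : Dense {x | f.IsRoot x}ᶜ :=
    (finite_setOfPred_isRoot hf0).countable.dense_compl ℝ
  have nonneg_of_not_isRoot : interior s ∩ {x | f.IsRoot x}ᶜ ⊆ {x | 0 ≤ p.eval x} := by
    rintro x ⟨hx, hfx⟩
    have hfx_pos : 0 < f.eval x := (hf x (interior_subset hx)).lt_of_ne' hfx
    have hfpx : 0 ≤ f.eval x * p.eval x := by simpa only [eval_mul] using hfp x (interior_subset hx)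
    exact nonneg_of_mul_nonneg_right hfpx hfx_pos
  have hclosed : IsClosed {x | 0 ≤ p.eval x} := isClosed_le continuous_const p.continuous
  calc s ⊆ closure (interior s) := hs
    _ ⊆ closure (interior s ∩ {x | f.IsRoot x}ᶜ) :=
      closure_minimal (dense_nonroots.open_subset_closure_inter isOpen_interior) isClosed_closure
    _ ⊆ {x | 0 ≤ p.eval x} := closure_minimal nonneg_of_not_isRoot hclosed

theorem exists_X_sub_C_sq_add_C_dvd_of_aeval_eq_zero {q : ℝ[X]} {z : ℂ} (hz : aeval z q = 0)
    (him : z.im ≠ 0) : (X - C z.re) ^ 2 + C (z.im ^ 2) ∣ q := by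
  have hsq : (X - C z.re) ^ 2 + C (z.im ^ 2) = X ^ 2 - C (2 * z.re) * X + C (‖z‖ ^ 2) := by
    rw [Complex.sq_norm, Complex.normSq_apply]
    simp only [map_add, map_mul, map_pow, map_ofNat]
    ring
  exact hsq ▸ quadratic_dvd_of_aeval_eq_zero_im_ne_zero q hz him

section Interval

variable {a b : ℝ} {q : ℝ[X]}

theorem exists_isLukacsSum_dvd_of_isRoot (hab : a < b)
    (hq : ∀ x ∈ Set.Icc a b, 0 ≤ q.eval x) {r : ℝ} (hr : q.IsRoot r) :
    ∃ f, f ∣ q ∧ 0 < f.natDegree ∧ IsLukacsSum (X - C a) (C b - X) f.natDegree f := by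
  have hdvd : X - C r ∣ q := dvd_iff_isRoot.2 hr
  rcases le_or_gt r a with hra | hra
  · refine ⟨X - C r, hdvd, by simp, ?_⟩
    rw [natDegree_X_sub_C]
    exact .of_natDegree_le_one hab (natDegree_X_sub_C_le r) (by simpa) (by simpa using by linarith)
  rcases le_or_gt b r with hbr | hbr
  · have hdeg : (C r - X).natDegree = 1 := by rw [natDegree_sub, natDegree_X_sub_C]
    refine ⟨C r - X, neg_sub X (C r) ▸ (neg_dvd.2 hdvd), by simp [hdeg], ?_⟩
    rw [hdeg]
    exact .of_natDegree_le_one hab hdeg.le (by simpa using by linarith) (by simpa)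
  · have hmin : IsLocalMin (fun x => q.eval x) r := by
      filter_upwards [Icc_mem_nhds hra hbr] with x hx
      exact hr.symm ▸ hq x hx
    refine ⟨(X - C r) ^ 2, X_sub_C_sq_dvd_of_isLocalMin hr hmin, by simp, ?_⟩
    simpa using IsLukacsSum.X_sub_C_sq_add_C hab r le_rfl

theorem exists_isLukacsSum_dvd (hab : a < b) (hq : ∀ x ∈ Set.Icc a b, 0 ≤ q.eval x)
    (hdeg : 0 < q.natDegree) :
    ∃ f, f ∣ q ∧ 0 < f.natDegree ∧ IsLukacsSum (X - C a) (C b - X) f.natDegree f := by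
  obtain ⟨z, hz⟩ : ∃ z : ℂ, aeval z q = 0 :=
    IsAlgClosed.exists_aeval_eq_zero ℂ q (natDegree_pos_iff_degree_pos.1 hdeg).ne'
  by_cases him : z.im = 0
  · lift z to ℝ using him
    have hroot : q.IsRoot z := (aeval_algebraMap_eq_zero_iff ℂ z q).1 hz
    exact exists_isLukacsSum_dvd_of_isRoot hab hq hroot
  · have hf : ((X - C z.re) ^ 2 + C (z.im ^ 2)).natDegree = 2 := by compute_degree!
    refine ⟨_, exists_X_sub_C_sq_add_C_dvd_of_aeval_eq_zero hz him, by omega, ?_⟩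
    rw [hf]
    exact .X_sub_C_sq_add_C hab _ (sq_nonneg _)

theorem isLukacsSum_of_nonneg (hab : a < b) (hq : ∀ x ∈ Set.Icc a b, 0 ≤ q.eval x) :
    IsLukacsSum (X - C a) (C b - X) q.natDegree q := by
  induction hd : q.natDegree using Nat.strong_induction_on generalizing q with
  | _ d ih =>
  subst hd
  rcases q.natDegree.eq_zero_or_pos with hdeg | hdeg
  · obtain ⟨c, rfl⟩ := natDegree_eq_zero.1 hdeg
    rw [natDegree_C]
    exact .C_of_nonneg _ _ (by simpa using hq a (Set.left_mem_Icc.2 hab.le))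
  obtain ⟨f, ⟨p, rfl⟩, hf_deg, hf⟩ := exists_isLukacsSum_dvd hab hq hdeg
  have hfp : f * p ≠ 0 := ne_zero_of_natDegree_gt hdeg
  have hf0 : f ≠ 0 := left_ne_zero_of_mul hfp
  have hmul : (f * p).natDegree = f.natDegree + p.natDegree :=
    natDegree_mul hf0 (right_ne_zero_of_mul hfp)
  have hf_nonneg : ∀ x ∈ Set.Icc a b, 0 ≤ f.eval x := fun x hx =>
    hf.eval_nonneg (by simpa using hx.1) (by simpa using hx.2)
  have hp_nonneg : ∀ x ∈ Set.Icc a b, 0 ≤ p.eval x :=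
    eval_nonneg_of_mul_nonneg (closure_interior_Icc hab.ne).ge hf0 hf_nonneg hq
  have hp := ih p.natDegree (by omega) hp_nonneg rfl
  rw [hmul]
  exact hf.mul (by compute_degree) (by compute_degree) hp

end Interval

/-- Lukács' theorem: a univariate real polynomial of degree d that is
nonnegative on [a,b] admits a weighted sum-of-squares representation adapted to [a,b]. -/
theorem stmt4 (a b : ℝ) (hab : a < b) (q : Polynomial ℝ) (d : ℕ) (hd : q.natDegree = d)
    (hq : ∀ x : ℝ, a ≤ x → x ≤ b → 0 ≤ q.eval x) :
    ∃ s t : Polynomial ℝ, s.natDegree ≤ d ∧ t.natDegree ≤ d ∧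
      (Even d → q = s ^ 2 + (X - C a) * (C b - X) * t ^ 2) ∧
      (Odd d → q = (X - C a) * s ^ 2 + (C b - X) * t ^ 2) := by
  have hsum : IsLukacsSum (X - C a) (C b - X) d q :=
    hd ▸ isLukacsSum_of_nonneg hab fun x hx => hq x hx.1 hx.2
  cases hsum with
  | @even m s t hs ht =>
    have hs' := natDegree_le_of_degree_le hs
    have ht' := natDegree_le_of_degree_le ht.le
    exact ⟨s, t, by omega, by omega, fun _ => rfl, fun h => absurd h (by simp)⟩
  | @odd m s t hs ht =>
    have hs' := natDegree_le_of_degree_le hs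
    have ht' := natDegree_le_of_degree_le ht
    exact ⟨s, t, by omega, by omega, fun h => absurd h (by simp), fun _ => rfl⟩
end

section
/- Fix integers n ≥ ℓ ≥ 1, α ∈ (0,1) with αℓ ∈ ℕ, and identify [n] with ℤ/nℤ. Let A_C be the Johnson-approximating graph operator acting on functions f : [n]^ℓ → ℂ by (A_C f)(x) = E_{b,y}[f(x₁ + b₁y₁, …, x_ℓ + b_ℓ y_ℓ)], where y is uniform in [n]^ℓ and b is uniform among vectors in {0,1}^ℓ of Hamming weight αℓ. Then for every T ∈ [n]^ℓ, the character χ_T is an eigenvector of A_C with eigenvalue λ(T) = C(ℓ−|T|, (1−α)ℓ−|T|) / C(ℓ, (1−α)ℓ) if |T| ≤ (1−α)ℓ, and λ(T) = 0 otherwise, where C(m,k) denotes the binomial coefficient. -/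
open Finset

/-- The character `χ_T(x) = ∏_j exp(2πi·T_j·x_j/n)` on `(ℤ/nℤ)^m`. -/
noncomputable def ugChi (n : ℕ) {m : ℕ} (T x : Fin m → ZMod n) : ℂ :=
  Complex.exp (2 * Real.pi * Complex.I *
    ((∑ j, (T j).val * (x j).val : ℕ) : ℂ) / (n : ℂ))

/-! Fix the set `B` of rerandomised coordinates. Then `E_y χ(x + 1_B y) = χ(x) · E_y χ(1_B y)`,
and `y ↦ χ(1_B y)` is itself a character, so by orthogonality its mean is `1` if `χ` is trivial on
every coordinate in `B`, and `0` otherwise. Hence the eigenvalue is the proportion of `k`-sets `B`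
that avoid the support of `χ`. -/

open scoped BigOperators

theorem choose_sub_eq_ite {m d k : ℕ} (hd : d ≤ m) (hk : k ≤ m) :
    (m - d).choose k = if d ≤ m - k then (m - d).choose (m - k - d) else 0 := by
  split_ifs with h
  · exact (Nat.choose_symm_of_eq_add (by lia)).symm
  · exact Nat.choose_eq_zero_of_lt (by lia)

theorem addChar_sum_eq_prod {ι A M : Type*} [AddCommMonoid A] [CommMonoid M] (χ : AddChar A M)
    (s : Finset ι) (f : ι → A) : χ (∑ i ∈ s, f i) = ∏ i ∈ s, χ (f i) :=
  map_prod χ.toMonoidHom (fun i ↦ Multiplicative.ofAdd (f i)) s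

section ProductGroup

variable {ι : Type*} [DecidableEq ι] {G : ι → Type*}

/-- The projection of a product of groups onto the coordinates in `B`, viewed as an endomorphism:
coordinates outside `B` are set to zero. -/
def coordProj [∀ j, AddZeroClass (G j)] (B : Finset ι) : (∀ j, G j) →+ ∀ j, G j where
  toFun y j := if j ∈ B then y j else 0
  map_zero' := by ext; simp
  map_add' y z := by ext; simp [ite_add_ite]

theorem coordProj_single [∀ j, AddZeroClass (G j)] {B : Finset ι} {j : ι} (hj : j ∈ B) (a : G j) :
    coordProj B (Pi.single j a) = Pi.single j a := by
  ext i
  rcases eq_or_ne i j with rfl | hij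
  · simp [coordProj, hj]
  · simp [coordProj, hij]

theorem coordProj_eq_sum_single [∀ j, AddCommMonoid (G j)] (B : Finset ι) (y : ∀ j, G j) :
    coordProj B y = ∑ j ∈ B, Pi.single j (y j) := by
  ext i
  simp [coordProj, Finset.sum_apply, Finset.sum_pi_single]

variable [Fintype ι]

/-- The support of a character `χ` of a product of groups: the coordinates on which `χ` is
nontrivial. Its cardinality is the degree of `χ`. -/
noncomputable def charSupport {M : Type*} [∀ j, AddMonoid (G j)] [Monoid M]
    (χ : AddChar (∀ j, G j) M) : Finset ι :=
  open Classical in {j | χ.compAddMonoidHom (AddMonoidHom.single G j) ≠ 0}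

theorem mem_charSupport {M : Type*} [∀ j, AddMonoid (G j)] [Monoid M]
    {χ : AddChar (∀ j, G j) M} {j : ι} :
    j ∈ charSupport χ ↔ χ.compAddMonoidHom (AddMonoidHom.single G j) ≠ 0 := by
  simp [charSupport]

theorem compAddMonoidHom_coordProj_eq_zero_iff {M : Type*} [∀ j, AddCommMonoid (G j)]
    [CommMonoid M] {χ : AddChar (∀ j, G j) M} {B : Finset ι} :
    χ.compAddMonoidHom (coordProj B) = 0 ↔ B ⊆ (charSupport χ)ᶜ := by
  simp only [subset_iff, mem_compl, mem_charSupport, not_not, AddChar.eq_zero_iff,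
    AddChar.compAddMonoidHom_apply, AddMonoidHom.single_apply]
  refine ⟨fun h j hj a ↦ by rw [← coordProj_single hj, h], fun h y ↦ ?_⟩
  rw [coordProj_eq_sum_single, addChar_sum_eq_prod]
  exact prod_eq_one fun j hj ↦ h hj (y j)

end ProductGroup

section JohnsonOperator

variable {ι K : Type*} [DecidableEq ι] [Fintype ι] {G : ι → Type*} [∀ j, AddCommGroup (G j)]
  [∀ j, Fintype (G j)] [Field K] [CharZero K]

/-- The Johnson-approximating graph operator on functions on a product of finite groups:
rerandomise a uniformly random set of `k` coordinates of the argument. The set `B` is the support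
of the noise pattern `b ∈ {0,1}^ι`. If `ι` has fewer than `k` elements, the operator is zero. -/
def johnsonOperator (k : ℕ) : Module.End K ((∀ j, G j) → K) where
  toFun f x := 𝔼 B ∈ powersetCard k univ, 𝔼 y, f (x + coordProj B y)
  map_add' f g := by ext; simp [expect_add_distrib]
  map_smul' c f := by ext; simp [mul_expect]

theorem johnsonOperator_apply (k : ℕ) (f : (∀ j, G j) → K) (x : ∀ j, G j) :
    johnsonOperator k f x = 𝔼 B ∈ powersetCard k univ, 𝔼 y, f (x + coordProj B y) :=
  rfl

theorem johnsonOperator_apply_eq_sum_div (k : ℕ) (f : (∀ j, G j) → K) (x : ∀ j, G j) :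
    johnsonOperator k f x =
      (∑ B : Finset ι with #B = k, ∑ y : ∀ j, G j, f (fun j ↦ x j + if j ∈ B then y j else 0)) /
        ((Fintype.card ι).choose k * ∏ j, (Fintype.card (G j) : K)) := by
  simp only [johnsonOperator_apply, expect_eq_sum_div_card, ← sum_div, card_powersetCard,
    card_univ, Fintype.card_pi, Nat.cast_prod, univ_filter_card_eq]
  rw [div_div, mul_comm]
  rfl

theorem expect_addChar_add_coordProj (χ : AddChar (∀ j, G j) K) (B : Finset ι) (x : ∀ j, G j) :
    𝔼 y : ∀ j, G j, χ (x + coordProj B y) = if B ⊆ (charSupport χ)ᶜ then χ x else 0 := by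
  classical
  calc 𝔼 y : ∀ j, G j, χ (x + coordProj B y)
      = χ x * 𝔼 y, χ.compAddMonoidHom (coordProj B) y := by
        simp only [AddChar.map_add_eq_mul, mul_expect, AddChar.compAddMonoidHom_apply]
    _ = if B ⊆ (charSupport χ)ᶜ then χ x else 0 := by
        simp only [AddChar.expect_eq_ite, compAddMonoidHom_coordProj_eq_zero_iff, mul_ite, mul_one,
          mul_zero]

theorem johnsonOperator_addChar (k : ℕ) (χ : AddChar (∀ j, G j) K) :
    johnsonOperator k χ = (((Fintype.card ι - #(charSupport χ)).choose k : K) /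
      (Fintype.card ι).choose k) • ⇑χ := by
  ext x
  have hfilter : {B ∈ powersetCard k (univ : Finset ι) | B ⊆ (charSupport χ)ᶜ} =
      powersetCard k (charSupport χ)ᶜ := by
    ext B
    simp [mem_powersetCard, and_comm]
  simp only [johnsonOperator_apply, expect_addChar_add_coordProj]
  rw [expect_eq_sum_div_card, ← sum_filter, hfilter, sum_const, card_powersetCard,
    card_powersetCard, card_compl, card_univ, nsmul_eq_mul, Pi.smul_apply, smul_eq_mul,
    div_mul_eq_mul_div]

theorem stmt7_general {k : ℕ} (hk : k ≤ Fintype.card ι) (χ : AddChar (∀ j, G j) K) :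
    (johnsonOperator k).HasEigenvector
      (if #(charSupport χ) ≤ Fintype.card ι - k then
        ((Fintype.card ι - #(charSupport χ)).choose (Fintype.card ι - k - #(charSupport χ)) : K) /
          (Fintype.card ι).choose (Fintype.card ι - k)
      else 0) (χ : (∀ j, G j) → K) := by
  refine Module.End.hasEigenvector_iff.2 ⟨Module.End.mem_eigenspace_iff.2 ?_, χ.coe_ne_zero⟩
  rw [johnsonOperator_addChar, choose_sub_eq_ite (card_le_univ _) hk, Nat.choose_symm hk]
  simp only [Nat.cast_ite, Nat.cast_zero, ite_div, zero_div]

end JohnsonOperator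

section DotProduct

variable {ι R M : Type*} [Fintype ι] [CommRing R] [CommMonoid M]

/-- The character `x ↦ ψ (∑ j, T j * x j)` of `ι → R` with frequency vector `T`; for `R = ZMod n`
and `ψ` the standard character it is `ugChi n T`. -/
def dotProductChar (ψ : AddChar R M) (T : ι → R) : AddChar (ι → R) M :=
  ψ.compAddMonoidHom (dotProductBilin R R T).toAddMonoidHom

theorem dotProductChar_apply (ψ : AddChar R M) (T x : ι → R) :
    dotProductChar ψ T x = ψ (T ⬝ᵥ x) :=
  rfl

theorem charSupport_dotProductChar [DecidableEq ι] [DecidableEq R] {ψ : AddChar R M}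
    (hψ : ψ.IsPrimitive) (T : ι → R) :
    charSupport (dotProductChar ψ T) = ({j | T j ≠ 0} : Finset ι) := by
  ext j
  have hsingle : (dotProductChar ψ T).compAddMonoidHom (AddMonoidHom.single (fun _ ↦ R) j) =
      ψ.mulShift (T j) := by
    ext a
    simp [dotProductChar_apply]
  have hshift : ψ.mulShift (T j) = 0 ↔ T j = 0 :=
    ⟨fun h ↦ by_contra fun hT ↦ hψ hT h,
      fun hT ↦ by rw [hT, AddChar.mulShift_zero, AddChar.one_eq_zero]⟩
  rw [mem_charSupport, hsingle, mem_filter_univ, Ne, hshift]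

end DotProduct

theorem ugChi_eq_dotProductChar {n : ℕ} [NeZero n] {m : ℕ} (T : Fin m → ZMod n) :
    ugChi n T = dotProductChar ZMod.stdAddChar T := by
  ext x
  have hdot : T ⬝ᵥ x = ((∑ j, (T j).val * (x j).val : ℕ) : ℤ) := by
    simp [dotProduct]
  rw [dotProductChar_apply, hdot, ZMod.stdAddChar_coe, ugChi, Int.cast_natCast]

/-- eigenvalues of the Johnson-approximating graph operator: each character
χ_T is an eigenvector with eigenvalue C(ℓ−|T|, (1−α)ℓ−|T|)/C(ℓ, (1−α)ℓ) if |T| ≤ (1−α)ℓ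
and 0 otherwise, where k = αℓ is the Hamming weight of the noise pattern b. -/
theorem stmt7 (n ℓ k : ℕ) [NeZero n] (hℓ : 1 ≤ ℓ) (hn : ℓ ≤ n)
    (α : ℝ) (hα0 : 0 < α) (hα1 : α < 1) (hk : (k : ℝ) = α * ℓ)
    (T : Fin ℓ → ZMod n) (x : Fin ℓ → ZMod n) :
    (∑ B ∈ univ.filter (fun B : Finset (Fin ℓ) => B.card = k),
        ∑ y : Fin ℓ → ZMod n, ugChi n T (fun j => x j + if j ∈ B then y j else 0))
      / ((Nat.choose ℓ k : ℂ) * (n : ℂ) ^ ℓ)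
    = (if (univ.filter (fun j : Fin ℓ => T j ≠ 0)).card ≤ ℓ - k then
        ((Nat.choose (ℓ - (univ.filter (fun j : Fin ℓ => T j ≠ 0)).card)
            (ℓ - k - (univ.filter (fun j : Fin ℓ => T j ≠ 0)).card) : ℂ)
          / (Nat.choose ℓ (ℓ - k) : ℂ))
      else 0) * ugChi n T x := by
  have hkℓ : k ≤ Fintype.card (Fin ℓ) := by
    rw [Fintype.card_fin, ← Nat.cast_le (α := ℝ), hk]
    exact mul_le_of_le_one_left ℓ.cast_nonneg hα1.le
  simpa [johnsonOperator_apply_eq_sum_div, charSupport_dotProductChar,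
    ZMod.isPrimitive_stdAddChar, ZMod.card, ugChi_eq_dotProductChar] using
    congrFun (stmt7_general hkℓ (dotProductChar ZMod.stdAddChar T)).apply_eq_smul x
end

section
/- Fix integers n ≥ ℓ ≥ 1 and identify [n] with ℤ/nℤ. Let F : [n]^ℓ → ℝ be permutation-invariant. Then for every a ∈ [n], every integer i with 0 ≤ i ≤ ℓ−1, and every X ∈ [n]^i: f_{i+1,F}(a, X) = f_{i, F|_{(a)}}(X) − f_{i,F}(X), where F|_{(a)} : [n]^{ℓ−1} → ℝ is the restriction F|_{(a)}(x₁,…,x_{ℓ−1}) = F(a, x₁,…,x_{ℓ−1}) and f_{i, F|_{(a)}} is its level-i Fourier function (defined with ℓ−1 in place of ℓ). -/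
open Finset

/-- Fourier coefficient `Ĝ(T) = E_x[G(x)·conj(χ_T(x))]`. -/
noncomputable def ugFHat (n ℓ : ℕ) [NeZero n] (F : (Fin ℓ → ZMod n) → ℝ)
    (T : Fin ℓ → ZMod n) : ℂ :=
  (∑ x : Fin ℓ → ZMod n, (F x : ℂ) * (starRingEnd ℂ) (ugChi n T x)) / ((n : ℂ) ^ ℓ)

/-- Padding a tuple of length `i` with zeros to length `ℓ`. -/
def ugPad (n ℓ i : ℕ) (T : Fin i → ZMod n) : Fin ℓ → ZMod n :=
  fun j => if h : (j : ℕ) < i then T ⟨(j : ℕ), h⟩ else 0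

/-- The level-`i` Fourier function `f_{i,G}(x) = Σ_{T ∈ ([n]∖0)^i} Ĝ(T,0,…,0)·χ_T(x)`. -/
noncomputable def ugFlevel (n ℓ : ℕ) [NeZero n] (F : (Fin ℓ → ZMod n) → ℝ) (i : ℕ)
    (x : Fin i → ZMod n) : ℂ :=
  ∑ T ∈ univ.filter (fun T : Fin i → ZMod n => ∀ j, T j ≠ 0),
    ugFHat n ℓ F (ugPad n ℓ i T) * ugChi n T x

/-- Permutation invariance of a function on `(ℤ/nℤ)^ℓ`. -/
def ugPermInv (n ℓ : ℕ) (F : (Fin ℓ → ZMod n) → ℝ) : Prop :=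
  ∀ (σ : Equiv.Perm (Fin ℓ)) (x : Fin ℓ → ZMod n), F (x ∘ σ) = F x

/-!
For fixed `T`, the function `t ↦ F̂(t, T)` is, up to the factor `n⁻¹`, the discrete Fourier
transform of `b ↦ (F|_(b))^(T)`, so Fourier inversion on `ℤ/nℤ` gives
`∑_t F̂(t, T) χ_t(a) = (F|_(a))^(T)`. The level functions only use `t ≠ 0`, which removes the term
`F̂(0, T)`; permutation invariance moves its zero to the end, where it is one more zero of the
padding.
-/

lemma sum_piFinset_fin_succ {m : ℕ} {α : Fin (m + 1) → Type*} {M : Type*} [AddCommMonoid M]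
    (s : ∀ j, Finset (α j)) (f : (∀ j, α j) → M) :
    ∑ x ∈ Fintype.piFinset s, f x
      = ∑ y ∈ Fintype.piFinset (Fin.tail s), ∑ b ∈ s 0, f (Fin.cons b y) := by
  rw [← sum_product_right']
  refine (sum_equiv (Fin.consEquiv α) (fun p => ?_) fun _ _ => rfl).symm
  simp [Fin.consEquiv, Fin.forall_fin_succ, Fin.tail]

lemma sum_fin_succ_pi {m : ℕ} {α M : Type*} [Fintype α] [AddCommMonoid M]
    (f : (Fin (m + 1) → α) → M) :
    ∑ x, f x = ∑ y : Fin m → α, ∑ b, f (Fin.cons b y) := by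
  simpa [Fin.tail_def] using sum_piFinset_fin_succ (fun _ : Fin (m + 1) => (univ : Finset α)) f

section Padding

variable {n m i : ℕ}

lemma ugPad_cons (t : ZMod n) (T : Fin i → ZMod n) :
    ugPad n (m + 1) (i + 1) (Fin.cons t T) = Fin.cons t (ugPad n m i T) := by
  funext j
  cases j using Fin.cases with
  | zero => rfl
  | succ j => simp only [ugPad, Fin.val_succ, Nat.add_lt_add_iff_right]; rfl

lemma ugPad_eq_insertNth (hi : i ≤ m) (T : Fin i → ZMod n) :
    ugPad n (m + 1) i T
      = Fin.insertNth ⟨i, Nat.lt_succ_of_le hi⟩ (0 : ZMod n) (ugPad n m i T) := by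
  refine Fin.eq_insertNth_iff.mpr ⟨dif_neg (lt_irrefl i), funext fun j => ?_⟩
  by_cases hj : (j : ℕ) < i
  · simp [Fin.removeNth, ugPad, Fin.succAbove, Fin.lt_def, hj]
  · have hj_succ : ¬ (j : ℕ) + 1 < i := by omega
    simp [Fin.removeNth, ugPad, Fin.succAbove, Fin.lt_def, hj, hj_succ]

end Padding

section Fourier

variable {n m : ℕ} [NeZero n]

lemma ugChi_eq_stdAddChar_dotProduct (T x : Fin m → ZMod n) :
    ugChi n T x = ZMod.stdAddChar (T ⬝ᵥ x) := by
  have h_dot : T ⬝ᵥ x = (((∑ j, (T j).val * (x j).val : ℕ) : ℤ) : ZMod n) := by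
    simp [dotProduct]
  rw [h_dot, ZMod.stdAddChar_coe, ugChi, Int.cast_natCast]

lemma ugChi_cons (t a : ZMod n) (T x : Fin m → ZMod n) :
    ugChi n (Fin.cons t T : Fin (m + 1) → ZMod n) (Fin.cons a x)
      = ZMod.stdAddChar (t * a) * ugChi n T x := by
  simp only [ugChi_eq_stdAddChar_dotProduct, ← AddChar.map_add_eq_mul]
  exact congrArg _ (Matrix.cons_dotProduct_cons t T a x)

lemma ugChi_comp_perm (σ : Equiv.Perm (Fin m)) (T x : Fin m → ZMod n) :
    ugChi n (T ∘ σ) (x ∘ σ) = ugChi n T x := by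
  simp only [ugChi_eq_stdAddChar_dotProduct, comp_equiv_dotProduct_comp_equiv]

lemma ugPermInv.ugFHat_comp_perm {F : (Fin m → ZMod n) → ℝ} (hF : ugPermInv n m F)
    (σ : Equiv.Perm (Fin m)) (T : Fin m → ZMod n) :
    ugFHat n m F (T ∘ σ) = ugFHat n m F T := by
  have h_summand (x : Fin m → ZMod n) :
      (F (x ∘ σ) : ℂ) * (starRingEnd ℂ) (ugChi n (T ∘ σ) (x ∘ σ))
        = F x * (starRingEnd ℂ) (ugChi n T x) := by
    rw [hF σ x, ugChi_comp_perm]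
  have h_reindex := Equiv.sum_comp (σ.symm.arrowCongr (Equiv.refl (ZMod n)))
    fun x => (F x : ℂ) * (starRingEnd ℂ) (ugChi n (T ∘ σ) x)
  exact congrArg (· / (n : ℂ) ^ m) (h_reindex.symm.trans (sum_congr rfl fun x _ => h_summand x))

lemma ugPermInv.ugFHat_ugPad_succ {F : (Fin (m + 1) → ZMod n) → ℝ} (hF : ugPermInv n (m + 1) F)
    {i : ℕ} (hi : i ≤ m) (T : Fin i → ZMod n) :
    ugFHat n (m + 1) F (ugPad n (m + 1) i T)
      = ugFHat n (m + 1) F (Fin.cons 0 (ugPad n m i T)) := by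
  rw [ugPad_eq_insertNth hi, ← Fin.cons_comp_cycleRange, hF.ugFHat_comp_perm]

lemma ugFHat_cons (F : (Fin (m + 1) → ZMod n) → ℝ) (t : ZMod n) (T : Fin m → ZMod n) :
    ugFHat n (m + 1) F (Fin.cons t T)
      = (n : ℂ)⁻¹ * ZMod.dft (fun b => ugFHat n m (fun x => F (Fin.cons b x)) T) t := by
  have h_conj (b : ZMod n) (x : Fin m → ZMod n) :
      (starRingEnd ℂ) (ugChi n (Fin.cons t T : Fin (m + 1) → ZMod n) (Fin.cons b x))
        = ZMod.stdAddChar (-(b * t)) * (starRingEnd ℂ) (ugChi n T x) := by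
    rw [ugChi_cons, map_mul, ← AddChar.map_neg_eq_conj, mul_comm t b]
  simp only [ugFHat, ZMod.dft_apply, smul_eq_mul, sum_fin_succ_pi, h_conj, mul_sum, sum_div]
  rw [sum_comm]
  refine sum_congr rfl fun b _ => sum_congr rfl fun x _ => ?_
  ring

lemma sum_stdAddChar_mul_ugFHat_cons (F : (Fin (m + 1) → ZMod n) → ℝ) (a : ZMod n)
    (T : Fin m → ZMod n) :
    ∑ t : ZMod n, ZMod.stdAddChar (t * a) * ugFHat n (m + 1) F (Fin.cons t T)
      = ugFHat n m (fun x => F (Fin.cons a x)) T := by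
  let slice : ZMod n → ℂ := fun b => ugFHat n m (fun x => F (Fin.cons b x)) T
  calc ∑ t : ZMod n, ZMod.stdAddChar (t * a) * ugFHat n (m + 1) F (Fin.cons t T)
      = (n : ℂ)⁻¹ * ∑ t : ZMod n, ZMod.stdAddChar (t * a) * ZMod.dft slice t := by
        simp only [ugFHat_cons, mul_sum, mul_left_comm _ (n : ℂ)⁻¹, slice]
    _ = ZMod.dft.symm (ZMod.dft slice) a := (ZMod.invDFT_apply (ZMod.dft slice) a).symm
    _ = slice a := by rw [LinearEquiv.symm_apply_apply]

lemma ugFlevel_eq_sum_piFinset (F : (Fin m → ZMod n) → ℝ) (i : ℕ) (x : Fin i → ZMod n) :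
    ugFlevel n m F i x
      = ∑ T ∈ Fintype.piFinset fun _ => univ.erase 0,
          ugFHat n m F (ugPad n m i T) * ugChi n T x := by
  refine sum_congr ?_ fun _ _ => rfl
  ext T
  simp

lemma ugFlevel_succ_cons (F : (Fin (m + 1) → ZMod n) → ℝ) (a : ZMod n) {i : ℕ}
    (X : Fin i → ZMod n) :
    ugFlevel n (m + 1) F (i + 1) (Fin.cons a X)
      = ugFlevel n m (fun x => F (Fin.cons a x)) i X
        - ∑ T ∈ Fintype.piFinset fun _ => univ.erase 0,
            ugFHat n (m + 1) F (Fin.cons 0 (ugPad n m i T)) * ugChi n T X := by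
  have h_first (T : Fin i → ZMod n) :
      ∑ t ∈ univ.erase 0, ZMod.stdAddChar (t * a) * ugFHat n (m + 1) F (Fin.cons t (ugPad n m i T))
        = ugFHat n m (fun x => F (Fin.cons a x)) (ugPad n m i T)
          - ugFHat n (m + 1) F (Fin.cons 0 (ugPad n m i T)) := by
    rw [sum_erase_eq_sub (mem_univ 0), sum_stdAddChar_mul_ugFHat_cons, zero_mul,
      AddChar.map_zero_eq_one, one_mul]
  simp only [ugFlevel_eq_sum_piFinset, sum_piFinset_fin_succ]
  rw [← sum_sub_distrib]
  refine sum_congr rfl fun T _ => ?_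
  rw [← sub_mul, ← h_first, sum_mul]
  refine sum_congr rfl fun t _ => ?_
  rw [ugPad_cons, ugChi_cons]
  ring

end Fourier

theorem stmt9_general (n m : ℕ) [NeZero n]
    (F : (Fin (m + 1) → ZMod n) → ℝ) (hF : ugPermInv n (m + 1) F)
    (a : ZMod n) (i : ℕ) (hi : i ≤ m) (X : Fin i → ZMod n) :
    ugFlevel n (m + 1) F (i + 1) (Fin.cons a X)
      = ugFlevel n m (fun x => F (Fin.cons a x)) i X - ugFlevel n (m + 1) F i X := by
  rw [ugFlevel_succ_cons, ugFlevel_eq_sum_piFinset F]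
  simp only [hF.ugFHat_ugPad_succ hi]

/-- restriction identity `f_{i+1,F}(a, X) = f_{i, F|_{(a)}}(X) − f_{i,F}(X)`
for permutation-invariant `F` on `(ℤ/nℤ)^{m+1}` (here ℓ = m+1 ≥ 1). -/
theorem stmt9 (n m : ℕ) [NeZero n] (hn : m + 1 ≤ n)
    (F : (Fin (m + 1) → ZMod n) → ℝ) (hF : ugPermInv n (m + 1) F)
    (a : ZMod n) (i : ℕ) (hi : i ≤ m) (X : Fin i → ZMod n) :
    ugFlevel n (m + 1) F (i + 1) (Fin.cons a X)
      = ugFlevel n m (fun x => F (Fin.cons a x)) i X - ugFlevel n (m + 1) F i X :=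
  stmt9_general n m F hF a i hi X
end

section
/- Let α ∈ (0,1), let ℓ be a positive integer with αℓ ∈ ℕ and αℓ ≥ 1, and let n ≥ ℓ be an integer; identify [n] with ℤ/nℤ. Let A_C be the Johnson-approximating graph operator, let π be the uniform distribution on [n]^ℓ, and write ⟨f,g⟩_π = E_{x∼π}[f(x)g(x)] and L_C = Id − A_C. Then for every positive integer r ≤ ℓ/2 and every permutation-invariant function F : [n]^ℓ → [0,1]: ⟨F, L_C F⟩_π ≥ (1 − (1−α)^{r+1}) · [ E_π[F] − 8^r · C(ℓ, r) · (Σ_{j=0}^{r} E_{Y ∈ [n]^j}[δ_Y(F)²]) + B(F) ], where B(F) = E_π[F²] − E_π[F], C(ℓ,r) is the binomial coefficient, and δ_Y(F) = E_{x ∈ [n]^{ℓ−j}}[F(Y, x)]. -/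
open Finset

/-- Concatenation of a prefix tuple of length `r` with a suffix tuple of length `ℓ − r`. -/
def ugConcat {α : Type*} (ℓ r : ℕ) (A : Fin r → α) (x : Fin (ℓ - r) → α) : Fin ℓ → α :=
  fun j => if hj : (j : ℕ) < r then A ⟨(j : ℕ), hj⟩
    else x ⟨(j : ℕ) - r, by have h := j.isLt; omega⟩

/-- The restricted density `δ_Y(F) = E_{x ∈ [n]^{ℓ−j}}[F(Y, x)]`. -/
noncomputable def ugDelta (n ℓ r : ℕ) [NeZero n] (F : (Fin ℓ → ZMod n) → ℝ)
    (A : Fin r → ZMod n) : ℝ :=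
  (∑ x : Fin (ℓ - r) → ZMod n, F (ugConcat ℓ r A x)) / (n : ℝ) ^ (ℓ - r)

/-- The Johnson-approximating graph operator on `(ℤ/nℤ)^ℓ` with noise weight `k = αℓ`:
`(A_C f)(x) = E_{b,y}[f(x + b⊙y)]` where `b` is uniform of Hamming weight `k` and `y`
uniform in `[n]^ℓ`. -/
noncomputable def ugACop (n ℓ k : ℕ) [NeZero n] (f : (Fin ℓ → ZMod n) → ℝ)
    (x : Fin ℓ → ZMod n) : ℝ :=
  (∑ B ∈ univ.filter (fun B : Finset (Fin ℓ) => B.card = k),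
      ∑ y : Fin ℓ → ZMod n, f (fun j => x j + if j ∈ B then y j else 0))
    / ((Nat.choose ℓ k : ℝ) * (n : ℝ) ^ ℓ)

/-!
Write `f_S` for the Efron–Stein component of `f` at `S`. Resampling the coordinates in `B` keeps
`f_S` if `S` is disjoint from `B` and kills it otherwise, so `A_C` acts on `f_S` by the probability
`C(ℓ - |S|, k) / C(ℓ, k) ≤ (1 - α) ^ |S|` that a random `k`-set `B` misses `S`. Thus `L_C` is at
least `1 - (1 - α) ^ (r + 1)` on the components with `|S| > r`. The mass of each component with
`|S| = j ≤ r` is at most `E[E[F | x_S] ^ 2]`, which by permutation invariance is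
`E_Y[δ_Y(F) ^ 2]`, and there are `C(ℓ, j) ≤ C(ℓ, r)` such components.
-/

open scoped BigOperators

section MoebiusInversion

variable {ι M : Type*} [DecidableEq ι] [AddCommGroup M]

/-- The Möbius transform of `g` on the lattice of finite sets, `S ↦ ∑_{T ⊆ S} (-1)^{|S \ T|} g T`:
the function whose sums over the subsets of `S` give `g S`. -/
def powersetMoebius (g : Finset ι → M) (S : Finset ι) : M :=
  ∑ T ∈ S.powerset, (-1 : ℤ) ^ #(S \ T) • g T

lemma powersetMoebius_insert (g : Finset ι → M) {i : ι} {S : Finset ι} (hi : i ∉ S) :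
    powersetMoebius g (insert i S) =
      powersetMoebius (fun T => g (insert i T)) S - powersetMoebius g S := by
  have hsign : ∀ T ∈ S.powerset, (-1 : ℤ) ^ #(insert i S \ T) • g T = -((-1) ^ #(S \ T) • g T) := by
    intro T hT
    have hiT : i ∉ T := fun h => hi (mem_powerset.1 hT h)
    rw [insert_sdiff_of_notMem _ hiT, card_insert_of_notMem (by simp [hi]), pow_succ, mul_neg_one,
      neg_smul]
  have hsdiff : ∀ T, insert i S \ insert i T = S \ T := fun T => by
    rw [insert_sdiff_insert, sdiff_insert_of_notMem hi]
  simp only [powersetMoebius, sum_powerset_insert hi, sum_congr rfl hsign, hsdiff,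
    sum_neg_distrib]
  abel

lemma sum_powerset_powersetMoebius (g : Finset ι → M) (S : Finset ι) :
    ∑ T ∈ S.powerset, powersetMoebius g T = g S := by
  induction S using Finset.induction_on generalizing g with
  | empty => simp [powersetMoebius]
  | insert i S hi ih =>
    have hinsert : ∀ T ∈ S.powerset, powersetMoebius g (insert i T) =
        powersetMoebius (fun U => g (insert i U)) T - powersetMoebius g T := fun T hT =>
      powersetMoebius_insert g fun h => hi (mem_powerset.1 hT h)
    rw [sum_powerset_insert hi, sum_congr rfl hinsert, sum_sub_distrib, ih, ih, add_sub_cancel]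

lemma powersetMoebius_eq_zero {g : Finset ι → M} {i : ι} {S : Finset ι} (hi : i ∈ S)
    (hg : ∀ T, g (insert i T) = g T) : powersetMoebius g S = 0 := by
  rw [← insert_erase hi, powersetMoebius_insert g (notMem_erase i S)]
  simp only [hg, sub_self]

lemma mul_powersetMoebius {R : Type*} [Ring R] (a : R) (g : Finset ι → R) (S : Finset ι) :
    a * powersetMoebius g S = powersetMoebius (fun T => a * g T) S := by
  simp only [powersetMoebius, mul_sum, mul_smul_comm]

end MoebiusInversion

section Counting

variable {ι : Type*} [Fintype ι]

lemma card_filter_disjoint_powersetCard [DecidableEq ι] (k : ℕ) (S : Finset ι) :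
    #{B ∈ powersetCard k univ | Disjoint S B} = (Fintype.card ι - #S).choose k := by
  have hfilter : {B ∈ powersetCard k (univ : Finset ι) | Disjoint S B} = powersetCard k Sᶜ := by
    ext B
    simp only [mem_filter, mem_powersetCard, subset_univ, true_and, subset_compl_comm (s := B),
      le_compl_iff_disjoint_right, and_comm]
  rw [hfilter, card_powersetCard, card_compl]

lemma sum_filter_card_le {M : Type*} [AddCommMonoid M] (r : ℕ) (g : Finset ι → M) :
    ∑ S with #S ≤ r, g S = ∑ j ∈ range (r + 1), ∑ S ∈ powersetCard j univ, g S := by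
  rw [← sum_fiberwise_of_maps_to (t := range (r + 1)) (g := card)
    fun S hS => mem_range_succ_iff.2 (mem_filter.1 hS).2]
  refine sum_congr rfl fun j hj => sum_congr ?_ fun _ _ => rfl
  ext S
  have hjr : j ≤ r := mem_range_succ_iff.1 hj
  simp only [mem_filter, mem_univ, true_and, mem_powersetCard, subset_univ]
  lia

lemma mul_choose_le_mul_choose_succ {N m : ℕ} (k : ℕ) (hm : m < N) :
    N * m.choose k ≤ (N - k) * (m + 1).choose k := by
  refine le_of_mul_le_mul_right ?_ m.succ_pos
  calc N * m.choose k * (m + 1) = N * (m + 1 - k) * (m + 1).choose k := by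
        rw [mul_assoc, Nat.choose_mul_succ_eq]
        ring
    _ ≤ (N - k) * (m + 1) * (m + 1).choose k := by
        gcongr ?_ * _
        rw [Nat.mul_sub, Nat.sub_mul]
        exact Nat.sub_le_sub_left (mul_comm k N ▸ Nat.mul_le_mul_left k hm) _
    _ = (N - k) * (m + 1).choose k * (m + 1) := by ring

lemma pow_mul_choose_sub_le (N k : ℕ) {s : ℕ} (hs : s ≤ N) :
    N ^ s * (N - s).choose k ≤ (N - k) ^ s * N.choose k := by
  induction s with
  | zero => simp
  | succ s ih =>
    calc N ^ (s + 1) * (N - (s + 1)).choose k = N ^ s * (N * (N - (s + 1)).choose k) := by ring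
      _ ≤ N ^ s * ((N - k) * (N - (s + 1) + 1).choose k) := by
        gcongr _ * ?_
        exact mul_choose_le_mul_choose_succ k (by lia)
      _ = (N - k) * (N ^ s * (N - s).choose k) := by
        rw [show N - (s + 1) + 1 = N - s by lia]
        ring
      _ ≤ (N - k) * ((N - k) ^ s * N.choose k) := Nat.mul_le_mul_left _ (ih (by lia))
      _ = (N - k) ^ (s + 1) * N.choose k := by ring

lemma choose_sub_div_choose_le {N k s : ℕ} {α : ℝ} (hα : α ≤ 1) (hk : (k : ℝ) = α * N)
    (hs : s ≤ N) : ((N - s).choose k / N.choose k : ℝ) ≤ (1 - α) ^ s := by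
  have hkN : k ≤ N := by
    have : (k : ℝ) ≤ N := hk ▸ mul_le_of_le_one_left N.cast_nonneg hα
    exact_mod_cast this
  have hcast : ((N - k : ℕ) : ℝ) = (1 - α) * N := by
    rw [Nat.cast_sub hkN, hk]
    ring
  have hpow : (0 : ℝ) < (N : ℝ) ^ s := by
    rcases N.eq_zero_or_pos with rfl | hN
    · simp [Nat.le_zero.1 hs]
    · positivity
  rw [div_le_iff₀ (by exact_mod_cast Nat.choose_pos hkN)]
  refine le_of_mul_le_mul_left ?_ hpow
  calc (N : ℝ) ^ s * (N - s).choose k ≤ ((N - k : ℕ) : ℝ) ^ s * N.choose k := by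
        exact_mod_cast pow_mul_choose_sub_le N k hs
    _ = (N : ℝ) ^ s * ((1 - α) ^ s * N.choose k) := by
        rw [hcast, mul_pow]
        ring

lemma choose_le_choose_of_two_mul_le {j r ℓ : ℕ} (hjr : j ≤ r) (hr : 2 * r ≤ ℓ) :
    ℓ.choose j ≤ ℓ.choose r := by
  induction r, hjr using Nat.le_induction with
  | base => rfl
  | succ r _ ih => exact (ih (by lia)).trans (Nat.choose_le_succ_of_lt_half_left (by lia))

lemma sum_choose_mul_le {r ℓ : ℕ} (hr : 2 * r ≤ ℓ) {C : ℝ} (hC : ℓ.choose r ≤ C) {D : ℕ → ℝ}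
    (hD : ∀ j, 0 ≤ D j) :
    ∑ j ∈ range (r + 1), ℓ.choose j * D j ≤ C * ∑ j ∈ range (r + 1), D j := by
  rw [mul_sum]
  refine sum_le_sum fun j hj => mul_le_mul_of_nonneg_right (le_trans ?_ hC) (hD j)
  exact_mod_cast choose_le_choose_of_two_mul_le (mem_range_succ_iff.1 hj) hr

end Counting

section EfronStein

variable {ι : Type*} {Ω : ι → Type*} [Fintype ι] [DecidableEq ι] [∀ i, Fintype (Ω i)]

omit [Fintype ι] [∀ i, Fintype (Ω i)] in
lemma piecewise_swap_involutive (S : Finset ι) : Function.Involutive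
    fun p : (∀ i, Ω i) × (∀ i, Ω i) => (S.piecewise p.1 p.2, S.piecewise p.2 p.1) := by
  intro p
  ext i <;> by_cases h : i ∈ S <;> simp [h]

lemma expect_expect_piecewise_swap {M : Type*} [AddCommMonoid M] [Module ℚ≥0 M] (S : Finset ι)
    (G : (∀ i, Ω i) → (∀ i, Ω i) → M) :
    𝔼 x, 𝔼 y, G (S.piecewise x y) (S.piecewise y x) = 𝔼 x, 𝔼 y, G x y := by
  simp only [← expect_product', univ_product_univ]
  exact Fintype.expect_equiv (piecewise_swap_involutive S).toPerm _ _ fun _ => rfl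

/-- The conditional expectation operator `f ↦ E[f | x_S]` for the uniform measure on `∏ i, Ω i`:
the coordinates outside `S` are resampled. -/
noncomputable def condAvg (S : Finset ι) : Module.End ℝ ((∀ i, Ω i) → ℝ) where
  toFun f x := 𝔼 y, f (S.piecewise x y)
  map_add' f g := by
    ext x
    exact expect_add_distrib ..
  map_smul' c f := by
    ext x
    exact (mul_expect ..).symm

lemma condAvg_apply (S : Finset ι) (f : (∀ i, Ω i) → ℝ) (x : ∀ i, Ω i) :
    condAvg S f x = 𝔼 y, f (S.piecewise x y) := rfl

lemma expect_condAvg_mul (S : Finset ι) (f g : (∀ i, Ω i) → ℝ) :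
    𝔼 x, condAvg S f x * g x = 𝔼 x, f x * condAvg S g x := by
  simp only [condAvg_apply, expect_mul, mul_expect]
  rw [← expect_expect_piecewise_swap S fun x y => f x * g (S.piecewise x y)]
  simp only [piecewise_idem_left, piecewise_idem_right, piecewise_same]

/-- The Efron–Stein projection onto the part of a function depending on exactly the coordinates
in `S`. -/
noncomputable def efronStein (S : Finset ι) : Module.End ℝ ((∀ i, Ω i) → ℝ) :=
  powersetMoebius condAvg S

lemma sum_powerset_efronStein (S : Finset ι) :
    ∑ U ∈ S.powerset, efronStein U = condAvg (Ω := Ω) S :=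
  sum_powerset_powersetMoebius _ _

lemma expect_efronStein_mul (S : Finset ι) (f g : (∀ i, Ω i) → ℝ) :
    𝔼 x, efronStein S f x * g x = 𝔼 x, f x * efronStein S g x := by
  simp only [efronStein, powersetMoebius, LinearMap.sum_apply, LinearMap.smul_apply,
    Finset.sum_apply, Pi.smul_apply, sum_mul, mul_sum, expect_sum_comm, smul_mul_assoc,
    mul_smul_comm, ← smul_expect, expect_condAvg_mul]

variable [∀ i, Nonempty (Ω i)]

lemma condAvg_univ : condAvg (Ω := Ω) univ = 1 := by
  ext f x
  simp [condAvg_apply]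

lemma condAvg_mul_condAvg (S T : Finset ι) :
    condAvg (Ω := Ω) S * condAvg T = condAvg (S ∩ T) := by
  ext f x
  have hpiecewise : ∀ y z : ∀ i, Ω i,
      T.piecewise (S.piecewise x y) z = (S ∩ T).piecewise x (T.piecewise y z) := by
    intro y z
    ext i
    by_cases hS : i ∈ S <;> by_cases hT : i ∈ T <;> simp [hS, hT]
  simp only [Module.End.mul_apply, condAvg_apply, hpiecewise]
  rw [expect_expect_piecewise_swap T fun y _ => f ((S ∩ T).piecewise x y)]
  simp

lemma condAvg_mul_efronStein (S U : Finset ι) :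
    condAvg (Ω := Ω) U * efronStein S = if S ⊆ U then efronStein S else 0 := by
  rw [efronStein, mul_powersetMoebius]
  simp only [condAvg_mul_condAvg]
  split_ifs with h
  · refine sum_congr rfl fun T hT => ?_
    simp only [inter_eq_right.2 ((mem_powerset.1 hT).trans h)]
  · obtain ⟨i, hiS, hiU⟩ := not_subset.1 h
    refine powersetMoebius_eq_zero hiS fun T => ?_
    rw [inter_insert_of_notMem hiU]

lemma efronStein_mul_self (S : Finset ι) :
    efronStein (Ω := Ω) S * efronStein S = efronStein S := by
  nth_rewrite 1 [efronStein]
  rw [powersetMoebius, sum_mul, sum_eq_single_of_mem S (mem_powerset_self S)]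
  · simp [condAvg_mul_efronStein]
  · intro T hT hTS
    have hST : ¬S ⊆ T := fun h => hTS ((mem_powerset.1 hT).antisymm h)
    rw [smul_mul_assoc, condAvg_mul_efronStein, if_neg hST, smul_zero]

lemma expect_mul_efronStein (S : Finset ι) (f : (∀ i, Ω i) → ℝ) :
    𝔼 x, f x * efronStein S f x = 𝔼 x, efronStein S f x ^ 2 := by
  simp only [sq]
  rw [expect_efronStein_mul, ← Module.End.mul_apply, efronStein_mul_self]

lemma expect_mul_condAvg (S : Finset ι) (f : (∀ i, Ω i) → ℝ) :
    𝔼 x, f x * condAvg S f x = ∑ U ∈ S.powerset, 𝔼 x, efronStein U f x ^ 2 := by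
  simp only [← sum_powerset_efronStein, LinearMap.sum_apply, Finset.sum_apply, mul_sum,
    expect_sum_comm, expect_mul_efronStein]

lemma expect_sq_eq_sum_efronStein (f : (∀ i, Ω i) → ℝ) :
    𝔼 x, f x ^ 2 = ∑ S, 𝔼 x, efronStein S f x ^ 2 := by
  simpa [condAvg_univ, sq] using expect_mul_condAvg univ f

lemma expect_condAvg_sq (S : Finset ι) (f : (∀ i, Ω i) → ℝ) :
    𝔼 x, condAvg S f x ^ 2 = ∑ U ∈ S.powerset, 𝔼 x, efronStein U f x ^ 2 := by
  simp only [sq, expect_condAvg_mul]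
  rw [← Module.End.mul_apply, condAvg_mul_condAvg, inter_self, expect_mul_condAvg]
  simp only [sq]

lemma expect_efronStein_sq_le (S : Finset ι) (f : (∀ i, Ω i) → ℝ) :
    𝔼 x, efronStein S f x ^ 2 ≤ 𝔼 x, condAvg S f x ^ 2 := by
  rw [expect_condAvg_sq]
  exact single_le_sum (f := fun U => 𝔼 x, efronStein U f x ^ 2)
    (fun U _ => expect_nonneg fun x _ => sq_nonneg _) (mem_powerset_self S)

end EfronStein

section JohnsonNoise

variable {ι : Type*} {Ω : ι → Type*} [Fintype ι] [DecidableEq ι] [∀ i, Fintype (Ω i)]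

/-- The noise operator resampling a uniformly random set of exactly `k` coordinates. It is the
Johnson-approximating graph operator on an arbitrary product space: adding a uniform `y` to
a coordinate in `ℤ/nℤ` is the same as resampling that coordinate. -/
noncomputable def johnsonNoise (k : ℕ) (f : (∀ i, Ω i) → ℝ) (x : ∀ i, Ω i) : ℝ :=
  𝔼 B ∈ powersetCard k univ, condAvg Bᶜ f x

lemma expect_mul_johnsonNoise [∀ i, Nonempty (Ω i)] (k : ℕ) (f : (∀ i, Ω i) → ℝ) :
    𝔼 x, f x * johnsonNoise k f x =
      ∑ S, ((Fintype.card ι - #S).choose k / (Fintype.card ι).choose k : ℝ) *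
        𝔼 x, efronStein S f x ^ 2 := by
  have hpowerset : ∀ B : Finset ι, Bᶜ.powerset = ({S | Disjoint S B} : Finset (Finset ι)) := by
    intro B
    ext S
    simp only [mem_powerset, mem_filter_univ, le_compl_iff_disjoint_right]
  simp only [johnsonNoise, mul_expect]
  rw [expect_comm]
  simp only [expect_mul_condAvg, hpowerset, sum_filter, expect_sum_comm]
  refine sum_congr rfl fun S _ => ?_
  rw [expect_eq_sum_div_card, ← sum_filter, sum_const, card_filter_disjoint_powersetCard,
    card_powersetCard, card_univ, nsmul_eq_mul, mul_div_right_comm, mul_expect]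

theorem mul_expect_sq_sub_le_expect_mul_sub_johnsonNoise [∀ i, Nonempty (Ω i)] {k : ℕ} {α : ℝ}
    (hα0 : 0 ≤ α) (hα1 : α ≤ 1) (hk : (k : ℝ) = α * Fintype.card ι) (r : ℕ)
    (f : (∀ i, Ω i) → ℝ) :
    (1 - (1 - α) ^ (r + 1)) * (𝔼 x, f x ^ 2 - ∑ S with #S ≤ r, 𝔼 x, condAvg S f x ^ 2) ≤
      𝔼 x, f x * (f x - johnsonNoise k f x) := by
  set c := 1 - (1 - α) ^ (r + 1)
  have hc : 0 ≤ c := sub_nonneg.2 (pow_le_one₀ (by linarith) (by linarith))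
  let w : Finset ι → ℝ := fun S => 𝔼 x, efronStein S f x ^ 2
  let eigenvalue : Finset ι → ℝ := fun S =>
    (Fintype.card ι - #S).choose k / (Fintype.card ι).choose k
  have hw : ∀ S, 0 ≤ w S := fun S => expect_nonneg fun x _ => sq_nonneg _
  have heigenvalue : ∀ S, eigenvalue S ≤ (1 - α) ^ #S := fun S =>
    choose_sub_div_choose_le hα1 hk S.card_le_univ
  have hlow : ∀ S, 0 ≤ (1 - eigenvalue S) * w S := fun S =>
    mul_nonneg (sub_nonneg.2 <| (heigenvalue S).trans <|
      pow_le_one₀ (by linarith) (by linarith)) (hw S)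
  have hhigh : ∀ S, r < #S → c * w S ≤ (1 - eigenvalue S) * w S := fun S hS =>
    mul_le_mul_of_nonneg_right (sub_le_sub_left ((heigenvalue S).trans <|
      pow_le_pow_of_le_one (by linarith) (by linarith) hS) 1) (hw S)
  calc c * (𝔼 x, f x ^ 2 - ∑ S with #S ≤ r, 𝔼 x, condAvg S f x ^ 2)
      ≤ c * (∑ S, w S - ∑ S with #S ≤ r, w S) := by
        rw [expect_sq_eq_sum_efronStein]
        gcongr with S
        exact expect_efronStein_sq_le S f
    _ = ∑ S with ¬#S ≤ r, c * w S := by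
        rw [← sum_filter_add_sum_filter_not univ fun S => #S ≤ r, add_sub_cancel_left, mul_sum]
    _ ≤ ∑ S with ¬#S ≤ r, (1 - eigenvalue S) * w S :=
        sum_le_sum fun S hS => hhigh S (not_le.1 (mem_filter.1 hS).2)
    _ ≤ ∑ S, (1 - eigenvalue S) * w S :=
        sum_le_univ_sum_of_nonneg hlow
    _ = 𝔼 x, f x * (f x - johnsonNoise k f x) := by
        simp only [mul_sub, sub_mul, one_mul, sum_sub_distrib, expect_sub_distrib, ← sq,
          expect_sq_eq_sum_efronStein f, expect_mul_johnsonNoise, w, eigenvalue]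

end JohnsonNoise

section PermutationInvariant

variable {ι Ω : Type*} [Fintype ι] [DecidableEq ι] [Fintype Ω]

lemma condAvg_map_perm {F : (ι → Ω) → ℝ} (hF : ∀ (σ : Equiv.Perm ι) x, F (x ∘ σ) = F x)
    (σ : Equiv.Perm ι) (S : Finset ι) (x : ι → Ω) :
    condAvg (S.map σ.toEmbedding) F x = condAvg S F (x ∘ σ) := by
  refine Fintype.expect_equiv (σ.symm.arrowCongr (Equiv.refl Ω)) _ _ fun y => ?_
  rw [← hF σ]
  congr 1
  ext i
  by_cases h : i ∈ S <;> simp [piecewise, h]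

omit [Fintype ι] [DecidableEq ι] in
lemma exists_perm_map_eq [Finite ι] {S T : Finset ι} (h : #S = #T) :
    ∃ σ : Equiv.Perm ι, S.map σ.toEmbedding = T := by
  classical
  let σ : Equiv.Perm ι := (equivOfCardEq h).extendSubtype
  refine ⟨σ, eq_of_subset_of_card_le (fun i hi => ?_) (by rw [card_map, h])⟩
  obtain ⟨j, hj, rfl⟩ := mem_map.1 hi
  exact (equivOfCardEq h).extendSubtype_mem j hj

lemma expect_condAvg_sq_eq_of_card_eq {F : (ι → Ω) → ℝ}
    (hF : ∀ (σ : Equiv.Perm ι) x, F (x ∘ σ) = F x) {S T : Finset ι} (h : #S = #T) :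
    𝔼 x, condAvg S F x ^ 2 = 𝔼 x, condAvg T F x ^ 2 := by
  obtain ⟨σ, rfl⟩ := exists_perm_map_eq h
  simp only [condAvg_map_perm hF]
  exact (Fintype.expect_equiv (σ.symm.arrowCongr (Equiv.refl Ω)) _ _ fun x => rfl).symm

end PermutationInvariant

section Concat

variable {Ω : Type*}

/-- Splitting a tuple of length `ℓ` after its first `j` entries, with `ugConcat` as the inverse. -/
def ugConcatEquiv {ℓ j : ℕ} (hj : j ≤ ℓ) : (Fin j → Ω) × (Fin (ℓ - j) → Ω) ≃ (Fin ℓ → Ω) where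
  toFun p := ugConcat ℓ j p.1 p.2
  invFun x := (fun i => x ⟨i, by lia⟩, fun i => x ⟨i + j, by lia⟩)
  left_inv p := by ext i <;> simp [ugConcat]
  right_inv x := by
    ext i
    by_cases h : (i : ℕ) < j
    · simp [ugConcat, h]
    · simp [ugConcat, h, Nat.sub_add_cancel (not_lt.1 h)]

variable [Fintype Ω]

lemma expect_ugConcat {ℓ j : ℕ} (hj : j ≤ ℓ) (G : (Fin ℓ → Ω) → ℝ) :
    𝔼 x, G x = 𝔼 Y : Fin j → Ω, 𝔼 z, G (ugConcat ℓ j Y z) := by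
  rw [← expect_product', univ_product_univ]
  exact (Fintype.expect_equiv (ugConcatEquiv hj) _ _ fun _ => rfl).symm

variable [Nonempty Ω]

lemma condAvg_ugConcat {ℓ j : ℕ} (hj : j ≤ ℓ) (F : (Fin ℓ → Ω) → ℝ) (Y : Fin j → Ω)
    (z : Fin (ℓ - j) → Ω) :
    condAvg {i : Fin ℓ | (i : ℕ) < j} F (ugConcat ℓ j Y z) = 𝔼 x, F (ugConcat ℓ j Y x) := by
  have hpiecewise : ∀ (Y' : Fin j → Ω) (x : Fin (ℓ - j) → Ω),
      ({i : Fin ℓ | (i : ℕ) < j} : Finset (Fin ℓ)).piecewise (ugConcat ℓ j Y z)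
        (ugConcat ℓ j Y' x) = ugConcat ℓ j Y x := by
    intro Y' x
    ext i
    by_cases h : (i : ℕ) < j <;> simp [ugConcat, h]
  rw [condAvg_apply, expect_ugConcat hj]
  simp only [hpiecewise, Fintype.expect_const]

lemma expect_condAvg_sq_eq_expect_ugConcat {ℓ : ℕ} {F : (Fin ℓ → Ω) → ℝ}
    (hF : ∀ (σ : Equiv.Perm (Fin ℓ)) x, F (x ∘ σ) = F x) {j : ℕ} {S : Finset (Fin ℓ)}
    (hS : #S = j) :
    𝔼 x, condAvg S F x ^ 2 = 𝔼 Y : Fin j → Ω, (𝔼 x, F (ugConcat ℓ j Y x)) ^ 2 := by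
  have hj : j ≤ ℓ := by simpa [hS] using S.card_le_univ
  have hcard : #S = #{i : Fin ℓ | (i : ℕ) < j} := by
    rw [Fin.card_filter_val_lt, hS, min_eq_right hj]
  rw [expect_condAvg_sq_eq_of_card_eq hF hcard, expect_ugConcat hj]
  simp only [condAvg_ugConcat hj, Fintype.expect_const]

theorem stmt13_general {ℓ k : ℕ} {α : ℝ} (hα0 : 0 ≤ α) (hα1 : α ≤ 1) (hk : (k : ℝ) = α * ℓ)
    (r : ℕ) {F : (Fin ℓ → Ω) → ℝ} (hF : ∀ (σ : Equiv.Perm (Fin ℓ)) x, F (x ∘ σ) = F x) :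
    (1 - (1 - α) ^ (r + 1)) * (𝔼 x, F x ^ 2 - ∑ j ∈ range (r + 1),
        ℓ.choose j * 𝔼 Y : Fin j → Ω, (𝔼 x, F (ugConcat ℓ j Y x)) ^ 2) ≤
      𝔼 x, F x * (F x - johnsonNoise k F x) := by
  have hlow : ∑ S with #S ≤ r, 𝔼 x, condAvg S F x ^ 2 = ∑ j ∈ range (r + 1),
      ℓ.choose j * 𝔼 Y : Fin j → Ω, (𝔼 x, F (ugConcat ℓ j Y x)) ^ 2 := by
    rw [sum_filter_card_le]
    refine sum_congr rfl fun j _ => ?_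
    rw [sum_congr rfl fun S hS =>
      expect_condAvg_sq_eq_expect_ugConcat hF (mem_powersetCard.1 hS).2]
    simp
  rw [← hlow]
  exact mul_expect_sq_sub_le_expect_mul_sub_johnsonNoise hα0 hα1 (by simpa using hk) r F

end Concat

lemma expect_zmod_tuple {n : ℕ} [NeZero n] {m : ℕ} (f : (Fin m → ZMod n) → ℝ) :
    𝔼 x, f x = (∑ x, f x) / (n : ℝ) ^ m := by
  simp [Fintype.expect_eq_sum_div_card, ZMod.card]

lemma ugDelta_eq_expect {n ℓ j : ℕ} [NeZero n] (F : (Fin ℓ → ZMod n) → ℝ) (Y : Fin j → ZMod n) :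
    ugDelta n ℓ j F Y = 𝔼 x, F (ugConcat ℓ j Y x) :=
  (expect_zmod_tuple _).symm

lemma ugACop_eq_johnsonNoise {n ℓ k : ℕ} [NeZero n] (f : (Fin ℓ → ZMod n) → ℝ)
    (x : Fin ℓ → ZMod n) : ugACop n ℓ k f x = johnsonNoise k f x := by
  have hresample : ∀ B : Finset (Fin ℓ),
      𝔼 y : Fin ℓ → ZMod n, f (fun j => x j + if j ∈ B then y j else 0) = condAvg Bᶜ f x := by
    refine fun B => Fintype.expect_equiv (Equiv.addLeft x) _ _ fun y => ?_
    congr 1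
    ext j
    by_cases h : j ∈ B <;> simp [h]
  have hlevel : ({B | #B = k} : Finset (Finset (Fin ℓ))) = powersetCard k univ := by
    ext B
    simp [mem_powersetCard]
  simp only [ugACop, johnsonNoise, ← hresample, expect_zmod_tuple, hlevel]
  rw [expect_eq_sum_div_card, ← sum_div, div_div, card_powersetCard, card_univ, Fintype.card_fin,
    mul_comm]

/-- structure theorem for the Johnson-approximating graph: every
permutation-invariant `F : [n]^ℓ → [0,1]` not correlated with any `r`-restricted subcube
has high expansion. -/
theorem stmt13 (n ℓ k : ℕ) [NeZero n] (hℓ : 1 ≤ ℓ) (hn : ℓ ≤ n) (hk1 : 1 ≤ k)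
    (α : ℝ) (hα0 : 0 < α) (hα1 : α < 1) (hk : (k : ℝ) = α * ℓ)
    (r : ℕ) (hr1 : 1 ≤ r) (hr : 2 * r ≤ ℓ)
    (F : (Fin ℓ → ZMod n) → ℝ) (hF01 : ∀ x, 0 ≤ F x ∧ F x ≤ 1)
    (hFinv : ugPermInv n ℓ F) :
    (∑ x : Fin ℓ → ZMod n, F x * (F x - ugACop n ℓ k F x)) / (n : ℝ) ^ ℓ
      ≥ (1 - (1 - α) ^ (r + 1)) *
          ((∑ x : Fin ℓ → ZMod n, F x) / (n : ℝ) ^ ℓ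
            - 8 ^ r * (Nat.choose ℓ r : ℝ) *
                (∑ j ∈ Finset.range (r + 1),
                  (∑ Y : Fin j → ZMod n, (ugDelta n ℓ j F Y) ^ 2) / (n : ℝ) ^ j)
            + ((∑ x : Fin ℓ → ZMod n, (F x) ^ 2) / (n : ℝ) ^ ℓ
                - (∑ x : Fin ℓ → ZMod n, F x) / (n : ℝ) ^ ℓ)) := by
  simp only [← expect_zmod_tuple, ugDelta_eq_expect, ugACop_eq_johnsonNoise]
  have hfactor : 0 ≤ 1 - (1 - α) ^ (r + 1) :=
    sub_nonneg.2 (pow_le_one₀ (by linarith) (by linarith))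
  have hC : (ℓ.choose r : ℝ) ≤ 8 ^ r * ℓ.choose r :=
    le_mul_of_one_le_left (ℓ.choose r).cast_nonneg (one_le_pow₀ (by norm_num))
  have hnonneg : ∀ j, 0 ≤ 𝔼 Y : Fin j → ZMod n, (𝔼 x, F (ugConcat ℓ j Y x)) ^ 2 :=
    fun _ => expect_nonneg fun _ _ => sq_nonneg _
  refine (mul_le_mul_of_nonneg_left ?_ hfactor).trans
    (stmt13_general hα0.le hα1.le hk r hFinv)
  linarith [sum_choose_mul_le hr hC hnonneg]
end

section
/- Let α ∈ (0,1/2) with αℓ ∈ ℕ and αℓ ≥ 1, let ℓ ≥ 1 and n ≥ 2ℓ be integers, and let J = J_{n,ℓ,α} be the Johnson graph. Let π be the uniform distribution on the vertices of J and ⟨F, L_J F⟩_π = (1/2)·E_{(U,V)}[(F(U) − F(V))²], the expectation over a uniformly random ordered edge (U,V) of J. Then for every integer r with 0 ≤ r ≤ ℓ/2 and every F : V(J) → [0,1]: ⟨F, L_J F⟩_π ≥ (1 − (1−α)^{r+1}) · [ (1 − ℓ²/n)·E_π[F] − 8^r · C(ℓ, r) · (Σ_{j=0}^{r} E_{Y}[δ_Y(F)²])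 + E_π[F²] − E_π[F] ] − ((2ℓ² + ℓ)/(2n))·E_π[F], where for each j the inner expectation is over a uniformly random j-element subset Y of {1,…,n}, δ_Y(F) is the average of F(S) over ℓ-element subsets S ⊇ Y, and C(ℓ,r) is the binomial coefficient. -/
open Finset

/-- The (ordered) edge set of the Johnson graph `J_{n,ℓ,α}` with `k = αℓ`: pairs of
ℓ-element subsets intersecting in exactly `ℓ − k` elements. -/
def ugJEdges (n ℓ k : ℕ) : Finset (Finset (Fin n) × Finset (Fin n)) :=
  univ.filter (fun p => p.1.card = ℓ ∧ p.2.card = ℓ ∧ (p.1 ∩ p.2).card = ℓ - k)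

/-- The Laplacian quadratic form `⟨F, L_J F⟩_π = (1/2)·E_{(U,V)}[(F U − F V)²]` over a
uniformly random ordered edge of the Johnson graph. -/
noncomputable def ugJLap (n ℓ k : ℕ) (F : Finset (Fin n) → ℝ) : ℝ :=
  (1 / 2) * ((∑ p ∈ ugJEdges n ℓ k, (F p.1 - F p.2) ^ 2) / ((ugJEdges n ℓ k).card : ℝ))

/-- The average `E_π[F]` of `F` over the vertices (ℓ-element subsets of [n]). -/
noncomputable def ugJAvg (n ℓ : ℕ) (F : Finset (Fin n) → ℝ) : ℝ :=
  (∑ S ∈ univ.filter (fun S : Finset (Fin n) => S.card = ℓ), F S) / (Nat.choose n ℓ : ℝ)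

/-- The restricted density `δ_Y(F)`: the average of `F(S)` over ℓ-element sets `S ⊇ Y`. -/
noncomputable def ugJDelta (n ℓ : ℕ) (F : Finset (Fin n) → ℝ) (Y : Finset (Fin n)) : ℝ :=
  (∑ S ∈ univ.filter (fun S : Finset (Fin n) => S.card = ℓ ∧ Y ⊆ S), F S)
    / (Nat.choose (n - Y.card) (ℓ - Y.card) : ℝ)

/-!
Let `U` and `D` be the up and down operators of the Boolean lattice of `[n]`. They are adjoint to
each other and satisfy `D U - U D = n - 2 j` on level `j`, so Cauchy-Schwarz gives by induction
upper and lower bounds for the norms of iterated down steps.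

On level `ℓ`, split `F = G + H` with `G` in the image of `U ^ (ℓ - r)` and `H` in the kernel of
`D ^ (ℓ - r)`; all `D ^ k G` and `D ^ k H` are orthogonal. The lower bound controls `‖G‖` by the
densities of `G` on `r`-element sets. The upper bound shows that going down `k = αℓ` levels
contracts the mean square of the densities of `H` by
`C(ℓ - r - 1, k) / C(ℓ, k) ≤ (1 - α) ^ (r + 1)`.

Finally, the mean square density on level `ℓ - k` is `E[F(U) F(V)]` for independent random
`ℓ`-element supersets `U`, `V` of a random `(ℓ - k)`-element set. They have no further common
element, and so form a uniformly random Johnson edge, with probability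
`C(n - ℓ, k) / C(n - ℓ + k, k) ≥ 1 - ℓ² / n`. For `F ≥ 0` the edge correlation is therefore at most
this mean square density, up to an error of order `ℓ² / n`.
-/

lemma filter_card_eq_card_and_subset {α : Type*} [Fintype α] [DecidableEq α] (s : Finset α) :
    ({t | #t = #s ∧ s ⊆ t} : Finset (Finset α)) = {s} := by
  ext t
  simp only [mem_filter_univ, mem_singleton]
  exact ⟨fun h ↦ (eq_of_subset_of_card_le h.2 h.1.le).symm, by rintro rfl; simp⟩

lemma one_sub_one_sub_pow_nonneg {x : ℝ} (hx₀ : 0 ≤ x) (hx₁ : x ≤ 1) (m : ℕ) :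
    0 ≤ 1 - (1 - x) ^ m :=
  sub_nonneg.2 (pow_le_one₀ (sub_nonneg.2 hx₁) (sub_le_self 1 hx₀))

section Adjoint

variable {𝕜 E F : Type*} [RCLike 𝕜] [NormedAddCommGroup E] [InnerProductSpace 𝕜 E]
  [FiniteDimensional 𝕜 E] [NormedAddCommGroup F] [InnerProductSpace 𝕜 F] [FiniteDimensional 𝕜 F]

lemma norm_apply_sq_le_norm_mul_norm_adjoint (A : E →ₗ[𝕜] F) (x : E) :
    ‖A x‖ ^ 2 ≤ ‖x‖ * ‖A.adjoint (A x)‖ := by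
  rw [← inner_self_eq_norm_sq (𝕜 := 𝕜), ← LinearMap.adjoint_inner_right]
  exact re_inner_le_norm _ _

lemma mul_norm_apply_sq_le_of_mul_norm_sq_le (A : E →ₗ[𝕜] F) {c : ℝ} {x : E}
    (h : c * ‖x‖ ^ 2 ≤ ‖A x‖ ^ 2) : c * ‖A x‖ ^ 2 ≤ ‖A.adjoint (A x)‖ ^ 2 := by
  have hx := norm_apply_sq_le_norm_mul_norm_adjoint A x
  rcases eq_or_ne (A x) 0 with h0 | h0
  · simp [h0]
  rcases le_or_gt c 0 with hc | hc
  · exact (mul_nonpos_of_nonpos_of_nonneg hc (sq_nonneg _)).trans (sq_nonneg _)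
  refine le_of_mul_le_mul_right ?_ (show 0 < ‖A x‖ ^ 2 by positivity)
  calc c * ‖A x‖ ^ 2 * ‖A x‖ ^ 2 = c * (‖A x‖ ^ 2) ^ 2 := by ring
    _ ≤ c * (‖x‖ * ‖A.adjoint (A x)‖) ^ 2 := by gcongr
    _ = ‖A.adjoint (A x)‖ ^ 2 * (c * ‖x‖ ^ 2) := by ring
    _ ≤ ‖A.adjoint (A x)‖ ^ 2 * ‖A x‖ ^ 2 := by gcongr

lemma norm_apply_sq_le_of_norm_adjoint_sq_le (A : E →ₗ[𝕜] F) {c : ℝ} (hc : 0 ≤ c) {x : E}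
    (h : ‖A.adjoint (A x)‖ ^ 2 ≤ c * ‖A x‖ ^ 2) : ‖A x‖ ^ 2 ≤ c * ‖x‖ ^ 2 := by
  have hx := norm_apply_sq_le_norm_mul_norm_adjoint A x
  rcases eq_or_ne (A x) 0 with h0 | h0
  · simpa [h0] using by positivity
  refine le_of_mul_le_mul_right ?_ (show 0 < ‖A x‖ ^ 2 by positivity)
  calc ‖A x‖ ^ 2 * ‖A x‖ ^ 2 = (‖A x‖ ^ 2) ^ 2 := by ring
    _ ≤ (‖x‖ * ‖A.adjoint (A x)‖) ^ 2 := by gcongr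
    _ = ‖x‖ ^ 2 * ‖A.adjoint (A x)‖ ^ 2 := by ring
    _ ≤ ‖x‖ ^ 2 * (c * ‖A x‖ ^ 2) := by gcongr
    _ = c * ‖x‖ ^ 2 * ‖A x‖ ^ 2 := by ring

end Adjoint

/-- Real functions on the subsets of `α`, with the counting (unnormalized) `ℓ²` inner product.
Functions on the `j`-element subsets are encoded by extension by zero, see `SetFun.level`. -/
abbrev SetFun (α : Type*) : Type _ := EuclideanSpace ℝ (Finset α)

namespace SetFun

open scoped InnerProductSpace

variable {α : Type*} {f g : SetFun α} {j : ℕ}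

/-- The functions supported on the `j`-element subsets, i.e. on the `j`-th level of the Boolean
lattice. -/
def level (α : Type*) (j : ℕ) : Submodule ℝ (SetFun α) where
  carrier := {f | ∀ S, #S ≠ j → f S = 0}
  add_mem' hf hg S hS := by simp [hf S hS, hg S hS]
  zero_mem' _ _ := rfl
  smul_mem' c f hf S hS := by simp [hf S hS]

/-- The element of `SetFun.level α j` that agrees with `F` on the `j`-element subsets. -/
def restrict (j : ℕ) (F : Finset α → ℝ) : SetFun α :=
  WithLp.toLp 2 fun S ↦ if #S = j then F S else 0

lemma restrict_mem_level (j : ℕ) (F : Finset α → ℝ) : restrict j F ∈ level α j :=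
  fun _ hS ↦ if_neg hS

variable [DecidableEq α]

/-- The unnormalized up operator of the Boolean lattice, from each level to the next one. -/
def up : Module.End ℝ (SetFun α) where
  toFun f := WithLp.toLp 2 fun S ↦ ∑ x ∈ S, f (S.erase x)
  map_add' f g := by ext S; simp [sum_add_distrib]
  map_smul' c f := by ext S; simp [mul_sum]

lemma up_apply (f : SetFun α) (S : Finset α) : up f S = ∑ x ∈ S, f (S.erase x) := rfl

lemma up_mem_level (hf : f ∈ level α j) : up f ∈ level α (j + 1) := fun S hS ↦
  sum_eq_zero fun x hx ↦ hf _ fun h ↦ hS (by rw [← card_erase_add_one hx, h])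

lemma up_pow_mem_level (hf : f ∈ level α j) (a : ℕ) : (up ^ a) f ∈ level α (j + a) := by
  induction a with
  | zero => simpa
  | succ a ih => rw [pow_succ']; exact up_mem_level ih

lemma map_up_pow_le_level (r a : ℕ) : (level α r).map (up ^ a) ≤ level α (r + a) := by
  rintro _ ⟨g, hg, rfl⟩
  exact up_pow_mem_level hg a

variable [Fintype α]

/-- The unnormalized down operator of the Boolean lattice, from each level to the previous one. -/
def down : Module.End ℝ (SetFun α) where
  toFun f := WithLp.toLp 2 fun S ↦ ∑ x ∈ Sᶜ, f (insert x S)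
  map_add' f g := by ext S; simp [sum_add_distrib]
  map_smul' c f := by ext S; simp [mul_sum]

lemma down_apply (f : SetFun α) (S : Finset α) : down f S = ∑ x ∈ Sᶜ, f (insert x S) := rfl

lemma down_mem_level (hf : f ∈ level α (j + 1)) : down f ∈ level α j := fun S hS ↦
  sum_eq_zero fun x hx ↦ hf _ (by rw [card_insert_of_notMem (mem_compl.1 hx)]; lia)

lemma down_eq_zero (hf : f ∈ level α 0) : down f = 0 := by
  ext S
  exact sum_eq_zero fun x _ ↦ hf _ (by simp)

lemma down_pow_mem_level {a : ℕ} (hf : f ∈ level α (j + a)) : (down ^ a) f ∈ level α j := by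
  induction a generalizing f with
  | zero => simpa using hf
  | succ a ih => rw [pow_succ]; exact ih (down_mem_level hf)

lemma down_pow_succ_eq_zero (hf : f ∈ level α j) : (down ^ (j + 1)) f = 0 := by
  rw [pow_succ']
  exact down_eq_zero (down_pow_mem_level (by simpa using hf))

lemma adjoint_up : LinearMap.adjoint (up : Module.End ℝ (SetFun α)) = down := by
  refine ((LinearMap.eq_adjoint_iff _ _).2 fun f g ↦ ?_).symm
  simp only [PiLp.inner_apply, RCLike.inner_apply, conj_trivial, up_apply, down_apply, sum_mul,
    mul_sum]
  rw [sum_sigma', sum_sigma']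
  refine sum_nbij' (fun p ↦ ⟨insert p.2 p.1, p.2⟩) (fun p ↦ ⟨p.1.erase p.2, p.2⟩) ?_ ?_ ?_ ?_ ?_ <;>
    simp +contextual [insert_erase]

lemma adjoint_down : LinearMap.adjoint (down : Module.End ℝ (SetFun α)) = up := by
  rw [← adjoint_up, LinearMap.adjoint_adjoint]

lemma adjoint_up_pow (a : ℕ) :
    LinearMap.adjoint ((up : Module.End ℝ (SetFun α)) ^ a) = down ^ a := by
  rw [← adjoint_up, ← LinearMap.star_eq_adjoint, ← LinearMap.star_eq_adjoint, star_pow]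

lemma inner_up_pow (a : ℕ) (f g : SetFun α) : ⟪(up ^ a) f, g⟫_ℝ = ⟪f, (down ^ a) g⟫_ℝ := by
  rw [← adjoint_up_pow, LinearMap.adjoint_inner_right]

lemma down_up_apply (f : SetFun α) (S : Finset α) :
    down (up f) S = up (down f) S + (Fintype.card α - 2 * #S : ℝ) * f S := by
  have h_up : ∀ x ∈ Sᶜ, up f (insert x S) = f S + ∑ y ∈ S, f ((insert x S).erase y) := by
    intro x hx
    rw [up_apply, sum_insert (mem_compl.1 hx), erase_insert (mem_compl.1 hx)]
  have h_down : ∀ y ∈ S, down f (S.erase y) = f S + ∑ x ∈ Sᶜ, f ((insert x S).erase y) := by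
    intro y hy
    rw [down_apply, compl_erase, sum_insert (by simpa using hy), insert_erase hy]
    congr 1
    refine sum_congr rfl fun x hx ↦ ?_
    rw [erase_insert_of_ne (by rintro rfl; exact mem_compl.1 hx hy)]
  rw [down_apply, up_apply, sum_congr rfl h_up, sum_congr rfl h_down, sum_add_distrib,
    sum_add_distrib, sum_comm, sum_const, sum_const, card_compl, nsmul_eq_mul, nsmul_eq_mul,
    Nat.cast_sub (card_le_univ S)]
  ring

lemma down_up_of_mem_level (hf : f ∈ level α j) :
    down (up f) = up (down f) + (Fintype.card α - 2 * j : ℝ) • f := by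
  ext S
  rcases eq_or_ne (#S) j with rfl | hS
  · exact down_up_apply f S
  · simpa [hf S hS] using down_up_apply f S

lemma norm_up_sq (hf : f ∈ level α j) :
    ‖up f‖ ^ 2 = ‖down f‖ ^ 2 + (Fintype.card α - 2 * j) * ‖f‖ ^ 2 := by
  have inner_up (g h : SetFun α) : ⟪up g, h⟫_ℝ = ⟪g, down h⟫_ℝ := by
    simpa only [pow_one] using inner_up_pow 1 g h
  rw [← real_inner_self_eq_norm_sq, inner_up, down_up_of_mem_level hf, inner_add_right,
    inner_smul_right, real_inner_comm, inner_up, real_inner_self_eq_norm_sq,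
    real_inner_self_eq_norm_sq]

lemma norm_down_sq_le {t p N : ℕ} (hN : t + p + N = Fintype.card α + 1)
    (hf : f ∈ level α (t + p)) (h : (down ^ (p + 1)) f = 0) :
    ‖down f‖ ^ 2 ≤ p * N * ‖f‖ ^ 2 := by
  induction p generalizing f N with
  | zero => simp_all
  | succ p ih =>
    have h_down : down f ∈ level α (t + p) := down_mem_level hf
    have h_ind : ‖down (down f)‖ ^ 2 ≤ p * (N + 1 : ℕ) * ‖down f‖ ^ 2 :=
      ih (by lia) h_down (by rwa [pow_succ] at h)
    refine norm_apply_sq_le_of_norm_adjoint_sq_le (down : Module.End ℝ (SetFun α))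
      (by positivity) ?_
    have hN' : (Fintype.card α : ℝ) = t + p + N := by exact_mod_cast (by lia : _ = t + p + N)
    rw [adjoint_down, norm_up_sq h_down, hN']
    push_cast at h_ind ⊢
    nlinarith [mul_nonneg (Nat.cast_nonneg (α := ℝ) t) (sq_nonneg ‖down f‖)]

lemma norm_down_pow_sq_le {t p N : ℕ} (hN : t + p + N = Fintype.card α)
    (hf : f ∈ level α (t + p)) (h : (down ^ (p + 1)) f = 0) (k : ℕ) :
    ‖(down ^ k) f‖ ^ 2 ≤ p.descFactorial k * (N + 1).ascFactorial k * ‖f‖ ^ 2 := by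
  induction k with
  | zero => simp
  | succ k ih =>
    rcases lt_or_ge p k with hk | hk
    · obtain ⟨b, rfl⟩ := Nat.exists_eq_add_of_le' hk
      rw [show b + p.succ + 1 = b + 1 + (p + 1) by lia, pow_add _ (b + 1), Module.End.mul_apply, h,
        map_zero, norm_zero, zero_pow two_ne_zero]
      positivity
    have h_step : ‖down ((down ^ k) f)‖ ^ 2 ≤ (p - k : ℕ) * (N + 1 + k : ℕ) * ‖(down ^ k) f‖ ^ 2 :=
      norm_down_sq_le (t := t) (by lia)
        (down_pow_mem_level (by rwa [add_assoc, Nat.sub_add_cancel hk]))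
        (by rwa [← Module.End.mul_apply, ← pow_add, show p - k + 1 + k = p + 1 by lia])
    rw [pow_succ' down k, Module.End.mul_apply, Nat.descFactorial_succ, Nat.ascFactorial_succ]
    calc ‖down ((down ^ k) f)‖ ^ 2
      _ ≤ (p - k : ℕ) * (N + 1 + k : ℕ) * ‖(down ^ k) f‖ ^ 2 := h_step
      _ ≤ (p - k : ℕ) * (N + 1 + k : ℕ) *
          (p.descFactorial k * (N + 1).ascFactorial k * ‖f‖ ^ 2) := by gcongr
      _ = _ := by push_cast; ring

lemma mul_norm_up_pow_sq_le {r b N : ℕ} (hN : 2 * r + b + N = Fintype.card α)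
    (hg : g ∈ level α r) : (b + 1) * N * ‖(up ^ b) g‖ ^ 2 ≤ ‖(up ^ (b + 1)) g‖ ^ 2 := by
  induction b generalizing N with
  | zero =>
    have hN' : (Fintype.card α : ℝ) = 2 * r + N := by exact_mod_cast hN.symm
    simp [norm_up_sq hg, hN']
  | succ b ih =>
    have hN' : (Fintype.card α : ℝ) = 2 * r + (b + 1) + N := by exact_mod_cast hN.symm
    have h_ind : (b + 1) * (N + 1 : ℕ) * ‖(up ^ b) g‖ ^ 2 ≤ ‖up ((up ^ b) g)‖ ^ 2 := by
      simpa only [pow_succ' up b, Module.End.mul_apply] using ih (by lia)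
    have h_adj := mul_norm_apply_sq_le_of_mul_norm_sq_le (up : Module.End ℝ (SetFun α)) h_ind
    rw [adjoint_up, ← Module.End.mul_apply up, ← pow_succ'] at h_adj
    rw [pow_succ' up (b + 1), Module.End.mul_apply, norm_up_sq (up_pow_mem_level hg _), hN']
    push_cast at h_adj ⊢
    linarith

lemma mul_norm_sq_le_norm_up_pow_sq {r M a : ℕ} (hM : 2 * r + M = Fintype.card α) (ha : a ≤ M)
    (hg : g ∈ level α r) :
    a.factorial * M.descFactorial a * ‖g‖ ^ 2 ≤ ‖(up ^ a) g‖ ^ 2 := by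
  induction a with
  | zero => simp
  | succ a ih =>
    rw [Nat.descFactorial_succ, Nat.factorial_succ]
    calc ((a + 1) * a.factorial : ℕ) * ((M - a) * M.descFactorial a : ℕ) * ‖g‖ ^ 2
      _ = (a + 1) * (M - a : ℕ) * (a.factorial * M.descFactorial a * ‖g‖ ^ 2) := by
        push_cast; ring
      _ ≤ (a + 1) * (M - a : ℕ) * ‖(up ^ a) g‖ ^ 2 := by gcongr; exact ih (by lia)
      _ ≤ ‖(up ^ (a + 1)) g‖ ^ 2 := mul_norm_up_pow_sq_le (by lia) hg

lemma mul_norm_sq_le_norm_down_pow_sq {r M a : ℕ} (hM : 2 * r + M = Fintype.card α)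
    (ha : a ≤ M) (hf : f ∈ (level α r).map (up ^ a)) :
    a.factorial * M.descFactorial a * ‖f‖ ^ 2 ≤ ‖(down ^ a) f‖ ^ 2 := by
  obtain ⟨g, hg, rfl⟩ := hf
  rw [← adjoint_up_pow]
  exact mul_norm_apply_sq_le_of_mul_norm_sq_le _ (mul_norm_sq_le_norm_up_pow_sq hM ha hg)

lemma down_mem_map_up_pow {r a : ℕ} (hf : f ∈ (level α r).map (up ^ (a + 1))) :
    down f ∈ (level α r).map (up ^ a) := by
  obtain ⟨g, hg, rfl⟩ := hf
  induction a with
  | zero => exact ⟨_, down_mem_level (up_mem_level hg), by simp⟩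
  | succ a ih =>
    rw [pow_succ' up (a + 1), Module.End.mul_apply, down_up_of_mem_level (up_pow_mem_level hg _)]
    refine add_mem ?_ (Submodule.smul_mem _ _ ⟨g, hg, rfl⟩)
    obtain ⟨g', hg', h⟩ := ih
    exact ⟨g', hg', by rw [← h, pow_succ', Module.End.mul_apply]⟩

lemma down_pow_mem_map_up_pow {r a : ℕ} (k : ℕ) (hf : f ∈ (level α r).map (up ^ (a + k))) :
    (down ^ k) f ∈ (level α r).map (up ^ a) := by
  induction k generalizing f with
  | zero => simpa using hf
  | succ k ih => rw [pow_succ]; exact ih (down_mem_map_up_pow hf)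

lemma inner_down_pow_eq_zero {r a : ℕ} (hf : f ∈ (level α r).map (up ^ a))
    (hg : (down ^ a) g = 0) (k : ℕ) : ⟪(down ^ k) f, (down ^ k) g⟫_ℝ = 0 := by
  rcases le_total a k with hk | hk
  · obtain ⟨b, rfl⟩ := Nat.exists_eq_add_of_le' hk
    rw [pow_add, Module.End.mul_apply _ _ g, hg, map_zero, inner_zero_right]
  · obtain ⟨b, rfl⟩ := Nat.exists_eq_add_of_le' hk
    obtain ⟨f', -, hf'⟩ := down_pow_mem_map_up_pow k hf
    rw [← hf', inner_up_pow, ← Module.End.mul_apply, ← pow_add, hg, inner_zero_right]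

lemma exists_add_of_mem_level {r a : ℕ} (hf : f ∈ level α (r + a)) :
    ∃ G ∈ (level α r).map (up ^ a), ∃ H ∈ level α (r + a), (down ^ a) H = 0 ∧ f = G + H := by
  obtain ⟨G, hG, H, hH, rfl⟩ := ((level α r).map (up ^ a)).exists_add_mem_mem_orthogonal f
  have hH_level : H ∈ level α (r + a) :=
    (Submodule.add_mem_iff_right _ (map_up_pow_le_level r a hG)).1 hf
  refine ⟨G, hG, H, hH_level, ?_, rfl⟩
  rw [← inner_self_eq_zero (𝕜 := ℝ), ← inner_up_pow]
  exact hH _ ⟨_, down_pow_mem_level hH_level, rfl⟩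

lemma down_pow_apply (a : ℕ) (f : SetFun α) (Y : Finset α) :
    (down ^ a) f Y = a.factorial * ∑ S with #S = #Y + a ∧ Y ⊆ S, f S := by
  induction a generalizing Y with
  | zero => simp [filter_card_eq_card_and_subset]
  | succ a ih =>
    have h_between (S : Finset α) :
        #{x ∈ Yᶜ | #S = #(insert x Y) + a ∧ insert x Y ⊆ S} =
          if #S = #Y + (a + 1) ∧ Y ⊆ S then a + 1 else 0 := by
      have h_insert : {x ∈ Yᶜ | #S = #(insert x Y) + a ∧ insert x Y ⊆ S} =
          (S \ Y).filter fun _ ↦ #S = #Y + (a + 1) ∧ Y ⊆ S := by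
        ext
        simp only [mem_filter, mem_compl, mem_sdiff, insert_subset_iff]
        grind
      split_ifs with hS
      · rw [h_insert, filter_true_of_mem fun _ _ ↦ hS, card_sdiff_of_subset hS.2, hS.1,
          Nat.add_sub_cancel_left]
      · rw [h_insert, filter_false_of_mem fun _ _ ↦ hS, card_empty]
    rw [pow_succ', Module.End.mul_apply, down_apply]
    simp_rw [ih, ← mul_sum, sum_filter]
    rw [sum_comm]
    simp_rw [← sum_filter, sum_const, h_between, ite_smul, zero_smul, ← sum_filter, ← smul_sum]
    rw [nsmul_eq_mul, Nat.factorial_succ]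
    push_cast
    ring

end SetFun

section Choose

lemma choose_add_le_two_pow_mul_choose {M a : ℕ} (h : 2 * a ≤ M + 1) (r : ℕ) :
    (M + r).choose a ≤ 2 ^ r * M.choose a := by
  induction r with
  | zero => simp
  | succ r ih =>
    have h_step : (M + r + 1).choose a ≤ 2 * (M + r).choose a := by
      refine Nat.le_of_mul_le_mul_right ?_ (show 0 < M + r + 1 - a by lia)
      rw [← Nat.choose_mul_succ_eq, mul_comm, mul_right_comm]
      exact Nat.mul_le_mul_right _ (by lia)
    rw [pow_succ', mul_assoc]
    exact h_step.trans (by gcongr)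

lemma choose_le_one_sub_mul_choose_succ {M k ℓ : ℕ} (hM : M < ℓ) (hk : k ≤ ℓ) :
    (M.choose k : ℝ) ≤ (1 - k / ℓ) * (M + 1).choose k := by
  rcases lt_or_ge M k with hMk | hMk
  · have h_div : (k : ℝ) / ℓ ≤ 1 := div_le_one_of_le₀ (mod_cast hk) (Nat.cast_nonneg ℓ)
    rw [Nat.choose_eq_zero_of_lt hMk, Nat.cast_zero]
    exact mul_nonneg (sub_nonneg.2 h_div) (Nat.cast_nonneg _)
  have h_eq : (M.choose k : ℝ) = (1 - k / (M + 1)) * (M + 1).choose k := by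
    have h := congrArg (Nat.cast (R := ℝ)) (Nat.choose_mul_succ_eq M k)
    rw [Nat.cast_mul, Nat.cast_mul, Nat.cast_sub (by lia)] at h
    push_cast at h
    field_simp
    linarith
  have hM' : (M + 1 : ℝ) ≤ ℓ := by exact_mod_cast hM
  rw [h_eq]
  gcongr

lemma choose_sub_le_pow_mul_choose {k ℓ : ℕ} (hk : k ≤ ℓ) (t : ℕ) :
    ((ℓ - t).choose k : ℝ) ≤ (1 - k / ℓ) ^ t * ℓ.choose k := by
  have h_div : (k : ℝ) / ℓ ≤ 1 := div_le_one_of_le₀ (mod_cast hk) (Nat.cast_nonneg ℓ)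
  induction t with
  | zero => simp
  | succ t ih =>
    have h_step : ((ℓ - (t + 1)).choose k : ℝ) ≤ (1 - k / ℓ) * (ℓ - t).choose k := by
      rcases lt_or_ge t ℓ with ht | ht
      · rw [show ℓ - t = ℓ - (t + 1) + 1 by lia]
        exact choose_le_one_sub_mul_choose_succ (by lia) hk
      · rw [Nat.sub_eq_zero_of_le ht, Nat.sub_eq_zero_of_le (ht.trans t.le_succ)]
        rcases k with - | k <;> simp
    calc ((ℓ - (t + 1)).choose k : ℝ)
      _ ≤ (1 - k / ℓ) * (ℓ - t).choose k := h_step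
      _ ≤ (1 - k / ℓ) * ((1 - k / ℓ) ^ t * ℓ.choose k) := by gcongr
      _ = _ := by ring

lemma one_sub_mul_choose_le_choose_sub (j k M : ℕ) :
    (1 - (j * k : ℝ) / M) * M.choose k ≤ (M - j).choose k := by
  rcases M with - | M
  · simp
  rcases k with - | k
  · simp
  induction j with
  | zero => simp
  | succ j ih =>
    have h_ratio : ((k + 1) / (M + 1) : ℝ) * (M + 1).choose (k + 1) = M.choose k := by
      have h := congrArg (Nat.cast (R := ℝ)) (Nat.add_one_mul_choose_eq M k)
      push_cast at h
      field_simp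
      linarith
    have h_pascal :
        ((M + 1 - j).choose (k + 1) : ℝ) ≤ (M - j).choose (k + 1) + M.choose k := by
      rcases Nat.eq_zero_or_pos (M + 1 - j) with h0 | h0
      · rw [h0, Nat.choose_zero_succ, Nat.cast_zero]
        positivity
      obtain ⟨N, hN⟩ := Nat.exists_eq_add_one_of_ne_zero h0.ne'
      rw [hN, show M - j = N by lia, Nat.choose_succ_succ, add_comm (N.choose k)]
      exact_mod_cast Nat.add_le_add_left (Nat.choose_le_choose k (by lia)) _
    rw [Nat.add_sub_add_right]
    push_cast at ih ⊢
    calc (1 - (j + 1) * (k + 1) / (M + 1) : ℝ) * (M + 1).choose (k + 1)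
      _ = (1 - j * (k + 1) / (M + 1)) * (M + 1).choose (k + 1) - M.choose k := by
        rw [← h_ratio]; ring
      _ ≤ (M - j).choose (k + 1) := by linarith

lemma choose_mul_choose_sub (n m k : ℕ) :
    n.choose m * (n - m).choose k = n.choose (m + k) * (m + k).choose k := by
  rw [← Nat.choose_symm_add, Nat.choose_mul (Nat.le_add_right m k), Nat.add_sub_cancel_left]

end Choose

/-- The mean square `E_Y[δ_Y(F)²]` of the restricted densities of `F`, over a uniformly random
`j`-element set `Y`. -/
noncomputable def ugJDeltaSq (n ℓ j : ℕ) (F : Finset (Fin n) → ℝ) : ℝ :=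
  (∑ Y with #Y = j, ugJDelta n ℓ F Y ^ 2) / n.choose j

section DeltaSq

variable {n ℓ k r a : ℕ} {f G H : SetFun (Fin n)}

open SetFun

lemma ugJDeltaSq_nonneg (n ℓ j : ℕ) (F : Finset (Fin n) → ℝ) : 0 ≤ ugJDeltaSq n ℓ j F :=
  div_nonneg (sum_nonneg fun _ _ ↦ sq_nonneg _) (Nat.cast_nonneg _)

lemma ugJDeltaSq_le_sum_range (n ℓ r : ℕ) (F : Finset (Fin n) → ℝ) :
    ugJDeltaSq n ℓ r F ≤ ∑ j ∈ range (r + 1), ugJDeltaSq n ℓ j F :=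
  single_le_sum (fun j _ ↦ ugJDeltaSq_nonneg n ℓ j F) (self_mem_range_succ r)

lemma ugJDeltaSq_self (n ℓ : ℕ) (F : Finset (Fin n) → ℝ) :
    ugJDeltaSq n ℓ ℓ F = ugJAvg n ℓ (fun S ↦ F S ^ 2) := by
  refine congrArg (· / _) (sum_congr rfl fun Y hY ↦ ?_)
  obtain rfl := (mem_filter.1 hY).2
  simp [ugJDelta, filter_card_eq_card_and_subset]

lemma norm_down_pow_sq_eq_mul_ugJDeltaSq (h : r + a ≤ n) (hf : f ∈ level (Fin n) (r + a)) :
    ‖(down ^ a) f‖ ^ 2 =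
      n.choose r * (a.factorial * (n - r).choose a : ℝ) ^ 2 * ugJDeltaSq n (r + a) r f := by
  have h_choose : ((n - r).choose a : ℝ) ≠ 0 :=
    Nat.cast_ne_zero.2 (Nat.choose_pos (by lia)).ne'
  have h_choose' : (n.choose r : ℝ) ≠ 0 := Nat.cast_ne_zero.2 (Nat.choose_pos (by lia)).ne'
  have h_down (Y : Finset (Fin n)) (hY : #Y = r) :
      (down ^ a) f Y = a.factorial * (n - r).choose a * ugJDelta n (r + a) f Y := by
    rw [down_pow_apply, ugJDelta, hY, Nat.add_sub_cancel_left]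
    field_simp
  have h_supp : ∀ Y ∈ univ, (down ^ a) f Y ^ 2 ≠ 0 → #Y = r := fun Y _ hY ↦ by
    contrapose! hY
    rw [down_pow_mem_level hf Y hY, zero_pow two_ne_zero]
  rw [EuclideanSpace.real_norm_sq_eq, ← sum_filter_of_ne h_supp, ugJDeltaSq,
    mul_comm (n.choose r : ℝ), mul_assoc, mul_div_cancel₀ _ h_choose', mul_sum]
  exact sum_congr rfl fun Y hY ↦ by rw [h_down Y (mem_filter.1 hY).2, mul_pow]

lemma norm_sq_eq_mul_ugJDeltaSq (h : ℓ ≤ n) (hf : f ∈ level (Fin n) ℓ) :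
    ‖f‖ ^ 2 = n.choose ℓ * ugJDeltaSq n ℓ ℓ f := by
  simpa using norm_down_pow_sq_eq_mul_ugJDeltaSq (a := 0) h hf

lemma choose_mul_ugJDeltaSq_sub_le (hn : ℓ ≤ n) (hk : k ≤ ℓ) (ha : a ≤ ℓ + 1)
    (hf : f ∈ level (Fin n) ℓ) (h : (down ^ a) f = 0) :
    ℓ.choose k * ugJDeltaSq n ℓ (ℓ - k) f ≤ (a - 1).choose k * ugJDeltaSq n ℓ ℓ f := by
  obtain ⟨m, rfl⟩ := Nat.exists_eq_add_of_le' hk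
  rw [Nat.add_sub_cancel]
  rcases a with - | p
  · obtain rfl : f = 0 := h
    simp [ugJDeltaSq, ugJDelta]
  obtain ⟨t, ht⟩ := Nat.exists_eq_add_of_le' (Nat.le_of_succ_le_succ ha)
  obtain ⟨N, hN⟩ := Nat.exists_eq_add_of_le hn
  have h_norm := norm_down_pow_sq_le (t := t) (N := N) (by simp [hN, ht]) (ht ▸ hf) h k
  have h_asc : (N + 1).ascFactorial k = k.factorial * (n - m).choose k := by
    rw [Nat.ascFactorial_eq_factorial_mul_choose, show N + k = n - m by lia]
  have h_mul : (n.choose m * (n - m).choose k : ℝ) = n.choose (m + k) * (m + k).choose k :=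
    mod_cast choose_mul_choose_sub n m k
  have h_pos : (0 : ℝ) < k.factorial ^ 2 * (n - m).choose k * n.choose (m + k) := by
    have := Nat.choose_pos (show k ≤ n - m by lia)
    have := Nat.choose_pos hn
    positivity
  rw [norm_down_pow_sq_eq_mul_ugJDeltaSq hn hf, norm_sq_eq_mul_ugJDeltaSq hn hf,
    Nat.descFactorial_eq_factorial_mul_choose, h_asc] at h_norm
  push_cast at h_norm
  refine le_of_mul_le_mul_left ?_ h_pos
  calc _ = k.factorial ^ 2 * (n - m).choose k * (n.choose (m + k) * (m + k).choose k) *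
        ugJDeltaSq n (m + k) m f := by ring
    _ = n.choose m * (k.factorial * (n - m).choose k) ^ 2 * ugJDeltaSq n (m + k) m f := by
      rw [← h_mul]; ring
    _ ≤ _ := h_norm
    _ = _ := by rw [Nat.add_sub_cancel]; ring

lemma ugJDeltaSq_self_le_of_mem_map (hn : 2 * (r + a) ≤ n)
    (hf : f ∈ (level (Fin n) r).map (up ^ a)) :
    ugJDeltaSq n (r + a) (r + a) f ≤
      2 ^ r * (r + a).choose r * ugJDeltaSq n (r + a) r f := by
  obtain ⟨M, hM⟩ := Nat.exists_eq_add_of_le (show 2 * r ≤ n by lia)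
  have hf_level : f ∈ level (Fin n) (r + a) := map_up_pow_le_level r a hf
  have h_norm := mul_norm_sq_le_norm_down_pow_sq (M := M) (by simp [hM]) (by lia) hf
  have h_mul : (n.choose r * (n - r).choose a : ℝ) = n.choose (r + a) * (r + a).choose r := by
    rw [Nat.choose_symm_add]
    exact_mod_cast choose_mul_choose_sub n r a
  have h_choose : ((n - r).choose a : ℝ) ≤ 2 ^ r * M.choose a := by
    rw [show n - r = M + r by lia]
    exact_mod_cast choose_add_le_two_pow_mul_choose (by lia) r
  have h_pos : (0 : ℝ) < a.factorial ^ 2 * M.choose a * n.choose (r + a) := by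
    have := Nat.choose_pos (show a ≤ M by lia)
    have := Nat.choose_pos (show r + a ≤ n by lia)
    positivity
  have h_nonneg := ugJDeltaSq_nonneg n (r + a) r f
  rw [norm_down_pow_sq_eq_mul_ugJDeltaSq (by lia) hf_level,
    norm_sq_eq_mul_ugJDeltaSq (by lia) hf_level,
    Nat.descFactorial_eq_factorial_mul_choose] at h_norm
  push_cast at h_norm
  refine le_of_mul_le_mul_left ?_ h_pos
  calc _ = a.factorial * (a.factorial * M.choose a) *
        (n.choose (r + a) * ugJDeltaSq n (r + a) (r + a) f) := by ring
    _ ≤ n.choose r * (a.factorial * (n - r).choose a) ^ 2 * ugJDeltaSq n (r + a) r f := h_norm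
    _ = a.factorial ^ 2 * (n.choose r * (n - r).choose a) * (n - r).choose a *
        ugJDeltaSq n (r + a) r f := by ring
    _ ≤ a.factorial ^ 2 * (n.choose r * (n - r).choose a) * (2 ^ r * M.choose a) *
        ugJDeltaSq n (r + a) r f := by gcongr
    _ = _ := by rw [h_mul]; ring

lemma ugJDeltaSq_add {j : ℕ} (hn : ℓ ≤ n) (hj : j ≤ ℓ) (hG : G ∈ level (Fin n) ℓ)
    (hG_map : G ∈ (level (Fin n) r).map (up ^ a)) (hH : H ∈ level (Fin n) ℓ)
    (hH_down : (down ^ a) H = 0) :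
    ugJDeltaSq n ℓ j (G + H) = ugJDeltaSq n ℓ j G + ugJDeltaSq n ℓ j H := by
  obtain ⟨k, rfl⟩ := Nat.exists_eq_add_of_le hj
  have h_pos : (0 : ℝ) < n.choose j * (k.factorial * (n - j).choose k : ℝ) ^ 2 := by
    have := Nat.choose_pos (show k ≤ n - j by lia)
    have := Nat.choose_pos (show j ≤ n by lia)
    positivity
  refine mul_left_cancel₀ h_pos.ne' ?_
  rw [← WithLp.ofLp_add, mul_add, ← norm_down_pow_sq_eq_mul_ugJDeltaSq hn hG,
    ← norm_down_pow_sq_eq_mul_ugJDeltaSq hn hH,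
    ← norm_down_pow_sq_eq_mul_ugJDeltaSq hn (add_mem hG hH), map_add, norm_add_sq_real,
    inner_down_pow_eq_zero hG_map hH_down]
  ring

lemma ugJDeltaSq_restrict (n ℓ j : ℕ) (F : Finset (Fin n) → ℝ) :
    ugJDeltaSq n ℓ j (restrict ℓ F) = ugJDeltaSq n ℓ j F := by
  have h_sum (Y : Finset (Fin n)) : ∑ S with #S = ℓ ∧ Y ⊆ S, restrict ℓ F S =
      ∑ S with #S = ℓ ∧ Y ⊆ S, F S := sum_congr rfl fun S hS ↦ if_pos (mem_filter.1 hS).2.1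
  simp only [ugJDeltaSq, ugJDelta, h_sum]

lemma ugJDeltaSq_sub_le_self (hn : ℓ ≤ n) (hk : k ≤ ℓ) (hf : f ∈ level (Fin n) ℓ) :
    ugJDeltaSq n ℓ (ℓ - k) f ≤ ugJDeltaSq n ℓ ℓ f :=
  le_of_mul_le_mul_left
    (choose_mul_ugJDeltaSq_sub_le hn hk le_rfl hf (down_pow_succ_eq_zero hf))
    (mod_cast Nat.choose_pos hk)

lemma ugJDeltaSq_sub_le_pow_mul_self (hn : ℓ ≤ n) (hk : k ≤ ℓ) (hf : f ∈ level (Fin n) ℓ)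
    (h : (down ^ (ℓ - r)) f = 0) :
    ugJDeltaSq n ℓ (ℓ - k) f ≤ (1 - k / ℓ : ℝ) ^ (r + 1) * ugJDeltaSq n ℓ ℓ f := by
  refine le_of_mul_le_mul_left ?_ (show (0 : ℝ) < ℓ.choose k from mod_cast Nat.choose_pos hk)
  calc ℓ.choose k * ugJDeltaSq n ℓ (ℓ - k) f
    _ ≤ (ℓ - r - 1).choose k * ugJDeltaSq n ℓ ℓ f :=
      choose_mul_ugJDeltaSq_sub_le hn hk (by lia) hf h
    _ ≤ (1 - k / ℓ : ℝ) ^ (r + 1) * ℓ.choose k * ugJDeltaSq n ℓ ℓ f := by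
      gcongr
      · exact ugJDeltaSq_nonneg n ℓ ℓ f
      · exact choose_sub_le_pow_mul_choose hk (r + 1)
    _ = _ := by ring

theorem one_sub_pow_mul_le_ugJDeltaSq_sub (hn : 2 * ℓ ≤ n) (hk : k ≤ ℓ) (hr : r ≤ ℓ)
    (F : Finset (Fin n) → ℝ) :
    (1 - (1 - k / ℓ : ℝ) ^ (r + 1)) *
        (ugJDeltaSq n ℓ ℓ F - 2 ^ r * ℓ.choose r * ugJDeltaSq n ℓ r F) ≤
      ugJDeltaSq n ℓ ℓ F - ugJDeltaSq n ℓ (ℓ - k) F := by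
  obtain ⟨a, rfl⟩ := Nat.exists_eq_add_of_le hr
  obtain ⟨G, hG_map, H, hH, hH_down, hGH⟩ :=
    exists_add_of_mem_level (restrict_mem_level (r + a) F)
  have hG : G ∈ level (Fin n) (r + a) := map_up_pow_le_level r a hG_map
  have h_add (j : ℕ) (hj : j ≤ r + a) : ugJDeltaSq n (r + a) j F =
      ugJDeltaSq n (r + a) j G + ugJDeltaSq n (r + a) j H := by
    rw [← ugJDeltaSq_restrict, hGH]
    exact ugJDeltaSq_add (by lia) hj hG hG_map hH hH_down
  have hG_sub := ugJDeltaSq_sub_le_self (by lia) hk hG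
  have hG_self := ugJDeltaSq_self_le_of_mem_map hn hG_map
  have hH_sub := ugJDeltaSq_sub_le_pow_mul_self (r := r) (by lia) hk hH (by simpa)
  have hH_nonneg := ugJDeltaSq_nonneg n (r + a) r H
  rw [h_add _ le_rfl, h_add _ hr, h_add _ (Nat.sub_le _ k)]
  set β : ℝ := (1 - k / (r + a : ℕ)) ^ (r + 1)
  have hβ : 0 ≤ 1 - β := one_sub_one_sub_pow_nonneg (by positivity)
    (div_le_one_of_le₀ (mod_cast hk) (Nat.cast_nonneg _)) _
  set c : ℝ := 2 ^ r * (r + a).choose r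
  have hc : 0 ≤ c := by positivity
  calc _ ≤ (1 - β) * ugJDeltaSq n (r + a) (r + a) H := by
        gcongr
        linarith [mul_nonneg hc hH_nonneg]
    _ ≤ _ := by linarith

end DeltaSq

section Edges

lemma card_filter_card_inter_and_card_sdiff {α : Type*} [Fintype α] [DecidableEq α]
    (s : Finset α) (i j : ℕ) :
    #{t | #(s ∩ t) = i ∧ #(t \ s) = j} = (#s).choose i * (Fintype.card α - #s).choose j := by
  rw [← card_compl, ← card_powersetCard, ← card_powersetCard, ← card_product]
  refine card_nbij' (fun t ↦ (s ∩ t, t \ s)) (fun p ↦ p.1 ∪ p.2) ?_ ?_ ?_ ?_ <;> intro x hx <;>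
    simp only [coe_filter_univ, Set.mem_ofPred_eq, mem_coe, mem_product, mem_powersetCard] at hx ⊢
  · grind [mem_compl]
  · obtain ⟨⟨h_sub, rfl⟩, h_compl, rfl⟩ := hx
    constructor <;> congr 1 <;> grind [mem_compl]
  · grind
  · refine Prod.ext ?_ ?_ <;> grind [mem_compl]

/-- The edge correlation `E_{(U,V)}[F(U) F(V)]` over a uniformly random ordered edge of the Johnson
graph. -/
noncomputable def ugJCorr (n ℓ k : ℕ) (F : Finset (Fin n) → ℝ) : ℝ :=
  (∑ p ∈ ugJEdges n ℓ k, F p.1 * F p.2) / #(ugJEdges n ℓ k)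

variable {n ℓ k : ℕ} {F : Finset (Fin n) → ℝ}

lemma sum_ugJEdges_fst (hk : k ≤ ℓ) (f : Finset (Fin n) → ℝ) :
    ∑ p ∈ ugJEdges n ℓ k, f p.1 = ℓ.choose k * (n - ℓ).choose k * ∑ S with #S = ℓ, f S := by
  have h_nbr (U : Finset (Fin n)) (hU : #U = ℓ) :
      #{V | #V = ℓ ∧ #(U ∩ V) = ℓ - k} = ℓ.choose k * (n - ℓ).choose k := by
    have h_iff (V : Finset (Fin n)) :
        #V = ℓ ∧ #(U ∩ V) = ℓ - k ↔ #(U ∩ V) = ℓ - k ∧ #(V \ U) = k := by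
      have := card_sdiff_add_card_inter V U
      rw [inter_comm] at this
      lia
    simp_rw [h_iff]
    rw [card_filter_card_inter_and_card_sdiff, hU, Fintype.card_fin, Nat.choose_symm hk]
  rw [ugJEdges, ← univ_product_univ, sum_filter, sum_product, mul_sum, sum_filter]
  refine sum_congr rfl fun U _ ↦ ?_
  split_ifs with hU
  · simp only [hU, true_and, ← sum_filter, sum_const, h_nbr U hU, nsmul_eq_mul]
    push_cast
    rfl
  · simp [hU]

lemma sum_ugJEdges_snd (n ℓ k : ℕ) (f : Finset (Fin n) → ℝ) :
    ∑ p ∈ ugJEdges n ℓ k, f p.2 = ∑ p ∈ ugJEdges n ℓ k, f p.1 :=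
  sum_equiv (Equiv.prodComm _ _) (by simp [ugJEdges, inter_comm, and_left_comm]) (by simp)

lemma card_ugJEdges (n : ℕ) (hk : k ≤ ℓ) :
    #(ugJEdges n ℓ k) = ℓ.choose k * (n - ℓ).choose k * n.choose ℓ := by
  have h := sum_ugJEdges_fst (n := n) hk fun _ ↦ 1
  simp only [sum_const, nsmul_eq_mul, mul_one, univ_filter_card_eq, card_powersetCard, card_univ,
    Fintype.card_fin] at h
  exact_mod_cast h

lemma sum_ugJEdges_div_card (hn : 2 * ℓ ≤ n) (hk : k ≤ ℓ) (f : Finset (Fin n) → ℝ) :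
    (∑ p ∈ ugJEdges n ℓ k, f p.1) / #(ugJEdges n ℓ k) = ugJAvg n ℓ f := by
  have h_pos : (0 : ℝ) < ℓ.choose k * (n - ℓ).choose k := by
    have := Nat.choose_pos hk
    have := Nat.choose_pos (show k ≤ n - ℓ by lia)
    positivity
  rw [sum_ugJEdges_fst hk, card_ugJEdges n hk, ugJAvg]
  push_cast
  exact mul_div_mul_left _ _ h_pos.ne'

lemma ugJLap_eq_sub (hn : 2 * ℓ ≤ n) (hk : k ≤ ℓ) (F : Finset (Fin n) → ℝ) :
    ugJLap n ℓ k F = ugJAvg n ℓ (fun S ↦ F S ^ 2) - ugJCorr n ℓ k F := by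
  rw [← sum_ugJEdges_div_card hn hk, ugJLap, ugJCorr, ← sub_div, mul_div_assoc']
  congr 1
  have h_sq := sum_ugJEdges_snd n ℓ k fun S ↦ F S ^ 2
  simp only [sub_sq, sum_add_distrib, sum_sub_distrib, mul_assoc, ← mul_sum, h_sq]
  ring

lemma ugJCorr_le (hn : 2 * ℓ ≤ n) (hk : k ≤ ℓ) (F : Finset (Fin n) → ℝ) :
    ugJCorr n ℓ k F ≤ ugJAvg n ℓ (fun S ↦ F S ^ 2) := by
  have h_nonneg : 0 ≤ ugJLap n ℓ k F :=
    mul_nonneg (by norm_num) (div_nonneg (sum_nonneg fun _ _ ↦ sq_nonneg _) (Nat.cast_nonneg _))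
  rw [ugJLap_eq_sub hn hk] at h_nonneg
  exact sub_nonneg.1 h_nonneg

lemma sum_ugJEdges_mul_le {m : ℕ} (hF : ∀ S, #S = m + k → 0 ≤ F S) :
    ∑ p ∈ ugJEdges n (m + k) k, F p.1 * F p.2 ≤
      ∑ Y with #Y = m, (∑ S with #S = m + k ∧ Y ⊆ S, F S) ^ 2 := by
  have h_maps : ∀ p ∈ ugJEdges n (m + k) k, p.1 ∩ p.2 ∈ ({Y | #Y = m} : Finset _) := by
    simp [ugJEdges]
  rw [← sum_fiberwise_of_maps_to h_maps]
  refine sum_le_sum fun Y _ ↦ ?_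
  rw [sq, sum_mul_sum, ← sum_product']
  refine sum_le_sum_of_subset_of_nonneg (fun p hp ↦ ?_) fun p hp _ ↦ ?_
  · simp only [ugJEdges, mem_filter, mem_univ, true_and, mem_product] at hp ⊢
    obtain ⟨⟨h_fst, h_snd, -⟩, rfl⟩ := hp
    exact ⟨⟨h_fst, inter_subset_left⟩, h_snd, inter_subset_right⟩
  · simp only [mem_filter_univ, mem_product] at hp
    exact mul_nonneg (hF _ hp.1.1) (hF _ hp.2.1)

lemma choose_mul_ugJCorr_le (hn : 2 * ℓ ≤ n) (hk : k ≤ ℓ) (hF : ∀ S, #S = ℓ → 0 ≤ F S) :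
    (n - ℓ).choose k * ugJCorr n ℓ k F ≤ (n - ℓ + k).choose k * ugJDeltaSq n ℓ (ℓ - k) F := by
  obtain ⟨m, rfl⟩ := Nat.exists_eq_add_of_le' hk
  have h_sum := sum_ugJEdges_mul_le hF
  have h_pos : (0 : ℝ) < (n - m).choose k := mod_cast Nat.choose_pos (by lia)
  have h_pos' : (0 : ℝ) < (n - (m + k)).choose k := mod_cast Nat.choose_pos (by lia)
  have h_mul : (n.choose m * (n - m).choose k : ℝ) = n.choose (m + k) * (m + k).choose k :=
    mod_cast choose_mul_choose_sub n m k
  have h_delta : (n - m).choose k * ugJDeltaSq n (m + k) m F =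
      (∑ Y with #Y = m, (∑ S with #S = m + k ∧ Y ⊆ S, F S) ^ 2) /
        (n.choose (m + k) * (m + k).choose k) := by
    have h_term (Y) (hY : Y ∈ ({Y | #Y = m} : Finset (Finset (Fin n)))) :
        ugJDelta n (m + k) F Y ^ 2 =
          (∑ S with #S = m + k ∧ Y ⊆ S, F S) ^ 2 / (n - m).choose k ^ 2 := by
      rw [ugJDelta, (mem_filter.1 hY).2, Nat.add_sub_cancel_left, div_pow]
    rw [ugJDeltaSq, sum_congr rfl h_term, ← sum_div, ← h_mul]
    field_simp
  rw [show n - (m + k) + k = n - m by lia, Nat.add_sub_cancel, h_delta, ugJCorr,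
    card_ugJEdges n hk]
  push_cast
  calc _ = (∑ p ∈ ugJEdges n (m + k) k, F p.1 * F p.2) /
        (n.choose (m + k) * (m + k).choose k) := by field_simp
    _ ≤ _ := by gcongr

lemma one_sub_mul_choose_add_le (hn : 2 * ℓ ≤ n) (hk : k ≤ ℓ) :
    (1 - (ℓ : ℝ) ^ 2 / n) * (n - ℓ + k).choose k ≤ (n - ℓ).choose k := by
  have h_ratio : (k * k : ℝ) / (n - ℓ + k : ℕ) ≤ (ℓ : ℝ) ^ 2 / n := by
    rcases Nat.eq_zero_or_pos k with rfl | hk_pos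
    · simpa using by positivity
    have h_cast : ((n - ℓ + k : ℕ) : ℝ) = n - ℓ + k := by
      rw [Nat.cast_add, Nat.cast_sub (by lia)]
    have hk_le : (k : ℝ) ≤ ℓ := mod_cast hk
    have hn_le : 2 * (ℓ : ℝ) ≤ n := mod_cast hn
    have hk_pos' : (0 : ℝ) < k := mod_cast hk_pos
    rw [h_cast, div_le_div_iff₀ (by linarith) (by linarith)]
    have h_factor : 0 ≤ (ℓ - k : ℝ) * ((ℓ + k) * n - ℓ ^ 2) :=
      mul_nonneg (by linarith) (by nlinarith)
    linarith
  calc _ ≤ (1 - (k * k : ℝ) / (n - ℓ + k : ℕ)) * (n - ℓ + k).choose k := by gcongr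
    _ ≤ (n - ℓ + k - k).choose k := one_sub_mul_choose_le_choose_sub k k (n - ℓ + k)
    _ = _ := by rw [Nat.add_sub_cancel]

lemma ugJCorr_le_ugJDeltaSq_add (hn : 2 * ℓ ≤ n) (hk : k ≤ ℓ) (hF : ∀ S, #S = ℓ → 0 ≤ F S) :
    ugJCorr n ℓ k F ≤
      ugJDeltaSq n ℓ (ℓ - k) F + ℓ ^ 2 / n * ugJAvg n ℓ (fun S ↦ F S ^ 2) := by
  have h_pos : (0 : ℝ) < (n - ℓ + k).choose k := mod_cast Nat.choose_pos (by lia)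
  have h_gap := one_sub_mul_choose_add_le hn hk
  have h_corr := choose_mul_ugJCorr_le hn hk hF
  have h_nonneg : 0 ≤ ugJCorr n ℓ k F := div_nonneg (sum_nonneg fun p hp ↦ by
    obtain ⟨h_fst, h_snd, -⟩ := (mem_filter.1 hp).2
    exact mul_nonneg (hF _ h_fst) (hF _ h_snd)) (Nat.cast_nonneg _)
  have h_le : (1 - (ℓ : ℝ) ^ 2 / n) * ugJCorr n ℓ k F ≤ ugJDeltaSq n ℓ (ℓ - k) F := by
    refine le_of_mul_le_mul_left ?_ h_pos
    calc _ = (1 - (ℓ : ℝ) ^ 2 / n) * (n - ℓ + k).choose k * ugJCorr n ℓ k F := by ring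
      _ ≤ (n - ℓ).choose k * ugJCorr n ℓ k F := by gcongr
      _ ≤ _ := h_corr
  have h_error : (ℓ : ℝ) ^ 2 / n * ugJCorr n ℓ k F ≤
      ℓ ^ 2 / n * ugJAvg n ℓ (fun S ↦ F S ^ 2) := by
    gcongr
    exact ugJCorr_le hn hk F
  linarith

theorem one_sub_pow_mul_sub_le_ugJLap {r : ℕ} (hn : 2 * ℓ ≤ n) (hk : k ≤ ℓ) (hr : r ≤ ℓ)
    (hF : ∀ S, #S = ℓ → 0 ≤ F S) :
    (1 - (1 - k / ℓ : ℝ) ^ (r + 1)) *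
        (ugJAvg n ℓ (fun S ↦ F S ^ 2) - 2 ^ r * ℓ.choose r * ugJDeltaSq n ℓ r F) -
      ℓ ^ 2 / n * ugJAvg n ℓ (fun S ↦ F S ^ 2) ≤ ugJLap n ℓ k F := by
  have h_spec := one_sub_pow_mul_le_ugJDeltaSq_sub hn hk hr F
  rw [ugJDeltaSq_self] at h_spec
  rw [ugJLap_eq_sub hn hk]
  linarith [ugJCorr_le_ugJDeltaSq_add hn hk hF]

end Edges

lemma ugJAvg_nonneg {n ℓ : ℕ} {F : Finset (Fin n) → ℝ} (hF : ∀ S, #S = ℓ → 0 ≤ F S) :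
    0 ≤ ugJAvg n ℓ F :=
  div_nonneg (sum_nonneg fun _ hS ↦ hF _ (mem_filter.1 hS).2) (Nat.cast_nonneg _)

lemma ugJAvg_mono {n ℓ : ℕ} {F G : Finset (Fin n) → ℝ} (h : ∀ S, #S = ℓ → F S ≤ G S) :
    ugJAvg n ℓ F ≤ ugJAvg n ℓ G :=
  div_le_div_of_nonneg_right (sum_le_sum fun _ hS ↦ h _ (mem_filter.1 hS).2) (Nat.cast_nonneg _)

theorem stmt14_general (n ℓ k : ℕ) (hℓ : 1 ≤ ℓ) (hn : 2 * ℓ ≤ n)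
    (α : ℝ) (hα : α ≤ 1) (hk : (k : ℝ) = α * ℓ) (r : ℕ) (hr : r ≤ ℓ)
    (F : Finset (Fin n) → ℝ)
    (hF : ∀ S, #S = ℓ → 0 ≤ F S ∧ F S ≤ 1) :
    ugJLap n ℓ k F ≥
      (1 - (1 - α) ^ (r + 1)) *
          ((1 - (ℓ : ℝ) ^ 2 / n) * ugJAvg n ℓ F
            - 8 ^ r * (ℓ.choose r : ℝ) *
                (∑ j ∈ range (r + 1), ugJDeltaSq n ℓ j F)
            + ugJAvg n ℓ (fun S ↦ F S ^ 2) - ugJAvg n ℓ F)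
        - ((2 * (ℓ : ℝ) ^ 2 + ℓ) / (2 * n)) * ugJAvg n ℓ F := by
  have hℓ_pos : (0 : ℝ) < ℓ := mod_cast hℓ
  have hn_pos : (0 : ℝ) < n := mod_cast (by lia : 0 < n)
  have hα_eq : α = k / ℓ := by rw [hk, mul_div_cancel_right₀ _ hℓ_pos.ne']
  have hα_nonneg : 0 ≤ α := hα_eq ▸ by positivity
  have hkℓ : k ≤ ℓ := by
    rw [← Nat.cast_le (α := ℝ), hk]
    exact mul_le_of_le_one_left hℓ_pos.le hα
  have h_lap := one_sub_pow_mul_sub_le_ugJLap hn hkℓ hr fun S hS ↦ (hF S hS).1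
  rw [← hα_eq] at h_lap
  have h_sq : ugJAvg n ℓ (fun S ↦ F S ^ 2) ≤ ugJAvg n ℓ F :=
    ugJAvg_mono fun S hS ↦ pow_le_of_le_one (hF S hS).1 (hF S hS).2 two_ne_zero
  have h_avg : 0 ≤ ugJAvg n ℓ F := ugJAvg_nonneg fun S hS ↦ (hF S hS).1
  have hβ : 0 ≤ 1 - (1 - α) ^ (r + 1) := one_sub_one_sub_pow_nonneg hα_nonneg hα _
  have h_delta : 2 ^ r * (ℓ.choose r : ℝ) * ugJDeltaSq n ℓ r F ≤
      8 ^ r * ℓ.choose r * ∑ j ∈ range (r + 1), ugJDeltaSq n ℓ j F := by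
    gcongr
    · exact ugJDeltaSq_nonneg n ℓ r F
    · norm_num
    · exact ugJDeltaSq_le_sum_range n ℓ r F
  have h_error : (ℓ : ℝ) ^ 2 / n * ugJAvg n ℓ (fun S ↦ F S ^ 2) ≤
      (2 * (ℓ : ℝ) ^ 2 + ℓ) / (2 * n) * ugJAvg n ℓ F := by
    refine mul_le_mul ?_ h_sq (ugJAvg_nonneg fun S _ ↦ sq_nonneg _) (by positivity)
    rw [div_le_div_iff₀ hn_pos (by positivity)]
    nlinarith [mul_pos hℓ_pos hn_pos]
  refine ge_iff_le.2 (le_trans ?_ h_lap)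
  refine sub_le_sub (mul_le_mul_of_nonneg_left ?_ hβ) h_error
  have h_slack : 0 ≤ (ℓ : ℝ) ^ 2 / n * ugJAvg n ℓ F := by positivity
  linarith

/-- structure theorem for the Johnson graph: every `F : V(J) → [0,1]`
not correlated with any `r`-restricted subcube has high expansion. -/
theorem stmt14 (n ℓ k : ℕ) (hℓ : 1 ≤ ℓ) (hn : 2 * ℓ ≤ n) (hk1 : 1 ≤ k)
    (α : ℝ) (hα0 : 0 < α) (hα2 : α < 1 / 2) (hk : (k : ℝ) = α * ℓ)
    (r : ℕ) (hr : 2 * r ≤ ℓ)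
    (F : Finset (Fin n) → ℝ)
    (hF : ∀ S : Finset (Fin n), S.card = ℓ → 0 ≤ F S ∧ F S ≤ 1) :
    ugJLap n ℓ k F ≥
      (1 - (1 - α) ^ (r + 1)) *
          ((1 - (ℓ : ℝ) ^ 2 / n) * ugJAvg n ℓ F
            - 8 ^ r * (Nat.choose ℓ r : ℝ) *
                (∑ j ∈ Finset.range (r + 1),
                  (∑ Y ∈ univ.filter (fun Y : Finset (Fin n) => Y.card = j),
                      (ugJDelta n ℓ F Y) ^ 2) / (Nat.choose n j : ℝ))
            + ugJAvg n ℓ (fun S => F S ^ 2) - ugJAvg n ℓ F)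
        - ((2 * (ℓ : ℝ) ^ 2 + ℓ) / (2 * n)) * ugJAvg n ℓ F :=
  stmt14_general n ℓ k hℓ hn α (by linarith) hk r (by lia) F hF
end

section
/- Let ε > 0, let α ∈ (0, 1/2), and let ℓ be a positive integer with αℓ ∈ ℕ and αℓ ≥ 1. Set r = ⌊32ε/α⌋ and suppose r ≤ ℓ/4. Then for every integer s with 0 ≤ s ≤ r, the binomial ratio satisfies C(ℓ−s, αℓ) / C(ℓ, αℓ) ≥ (1 − 4α/3)^r ≥ 1 − (4/3)·r·α ≥ 1 − 200ε. Consequently, in the Johnson graph J_{n,ℓ,α} (for n ≥ 2ℓ), every vertex U containing a fixed s-element set Y has at least a (1 − 200ε)-fraction of its neighbors V also containing Y; that is, the edge expansion of the s-restricted subcube induced by Y is at most 200ε. -/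
open Finset

/-!
Passing from `C(m + 1, k)` to `C(m, k)` multiplies by `1 - k / (m + 1)`. If `k = αℓ` and
`m + 1 ≥ 3ℓ/4`, this factor is at least `1 - 4α/3`, so removing `s ≤ r ≤ ℓ/4` points costs at most
a factor `(1 - 4α/3) ^ r`, which Bernoulli's inequality bounds below by `1 - (4/3) r α`.

A neighbour `W` of `U` in the Johnson graph is determined by the `k`-sets `U \ W ⊆ U` and
`W \ U ⊆ Uᶜ`, and `W` contains `Y ⊆ U` iff `U \ W` avoids `Y`. Hence the fraction of neighbours
of `U` that contain `Y` is exactly `C(ℓ - s, k) / C(ℓ, k)`.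
-/

section Choose

theorem one_sub_mul_choose_succ_le_choose {R : Type*} [CommRing R] [LinearOrder R]
    [IsStrictOrderedRing R] {β : R} {m k : ℕ} (h : (k : R) ≤ β * (m + 1)) :
    (1 - β) * ((m + 1).choose k : R) ≤ m.choose k := by
  have hpos : (0 : R) < m + 1 := by positivity
  have hfactor : (1 - β) * (m + 1) ≤ ((m + 1 - k : ℕ) : R) := by
    have hsub : ((m + 1 : ℕ) : R) ≤ ((m + 1 - k : ℕ) : R) + k :=
      mod_cast le_tsub_add
    push_cast at hsub
    linarith
  refine le_of_mul_le_mul_right ?_ hpos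
  calc (1 - β) * ((m + 1).choose k : R) * (m + 1)
      = ((m + 1).choose k : R) * ((1 - β) * (m + 1)) := by ring
    _ ≤ ((m + 1).choose k : R) * ((m + 1 - k : ℕ) : R) := by gcongr
    _ = m.choose k * (m + 1) := mod_cast (Nat.choose_mul_succ_eq m k).symm

theorem one_sub_pow_mul_choose_add_le_choose {R : Type*} [CommRing R] [LinearOrder R]
    [IsStrictOrderedRing R] {β : R} (hβ₀ : 0 ≤ β) (hβ₁ : β ≤ 1) {m k : ℕ}
    (h : (k : R) ≤ β * (m + 1)) (s : ℕ) :
    (1 - β) ^ s * ((m + s).choose k : R) ≤ m.choose k := by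
  induction s with
  | zero => simp
  | succ s ih =>
    have hstep : (k : R) ≤ β * ((m + s : ℕ) + 1) := by
      refine h.trans ?_
      gcongr
      exact Nat.le_add_right m s
    calc (1 - β) ^ (s + 1) * ((m + s + 1).choose k : R)
        = (1 - β) ^ s * ((1 - β) * ((m + s + 1).choose k : R)) := by ring
      _ ≤ (1 - β) ^ s * ((m + s).choose k : R) := by
          have := sub_nonneg.mpr hβ₁
          gcongr
          exact one_sub_mul_choose_succ_le_choose hstep
      _ ≤ m.choose k := ih

variable {K : Type*} [Field K] [LinearOrder K] [IsStrictOrderedRing K]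

theorem one_sub_pow_le_choose_sub_div_choose {α : K} (hα₀ : 0 ≤ α) (hα : α ≤ 3 / 4)
    {ℓ k r s : ℕ} (hk : (k : K) ≤ α * ℓ) (hr : 4 * r ≤ ℓ) (hs : s ≤ r) :
    (1 - 4 * α / 3) ^ r ≤ ((ℓ - s).choose k : K) / (ℓ.choose k : K) := by
  have hkℓ : k ≤ ℓ := by
    have : (k : K) ≤ ℓ := hk.trans (mul_le_of_le_one_left (by positivity) (by linarith))
    exact_mod_cast this
  have hchoose : (0 : K) < ℓ.choose k := mod_cast Nat.choose_pos hkℓ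
  obtain ⟨m, rfl⟩ := Nat.exists_eq_add_of_le' (show s ≤ ℓ by omega)
  have hk_le : (k : K) ≤ 4 * α / 3 * (m + 1) := by
    have hm : 3 * ((m + s : ℕ) : K) ≤ 4 * (m + 1) := mod_cast (by omega)
    calc (k : K) ≤ α / 3 * (3 * ((m + s : ℕ) : K)) := by linarith
      _ ≤ α / 3 * (4 * (m + 1)) := by gcongr
      _ = 4 * α / 3 * (m + 1) := by ring
  rw [Nat.add_sub_cancel, le_div_iff₀ hchoose]
  calc (1 - 4 * α / 3) ^ r * ((m + s).choose k : K)
      ≤ (1 - 4 * α / 3) ^ s * ((m + s).choose k : K) := by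
        gcongr ?_ * _
        exact pow_le_pow_of_le_one (by linarith) (by linarith) hs
    _ ≤ m.choose k :=
        one_sub_pow_mul_choose_add_le_choose (by positivity) (by linarith) hk_le s

end Choose

section JohnsonGraph

variable {V : Type*} [Fintype V] [DecidableEq V]

/-- The neighbourhood of `U` in the Johnson graph whose edges exchange `k` elements; for `#U = ℓ`
and `k = αℓ` this graph is `J_{n,ℓ,α}`. Adjacency is encoded by the sizes of the two differences,
which avoids the truncated subtraction `ℓ - k`. -/
def johnsonNeighborFinset (k : ℕ) (U : Finset V) : Finset (Finset V) :=
  {W | #(U \ W) = k ∧ #(W \ U) = k}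

theorem mem_johnsonNeighborFinset_iff_card_inter {k : ℕ} {U : Finset V} (hk : k ≤ #U)
    (W : Finset V) :
    W ∈ johnsonNeighborFinset k U ↔ #W = #U ∧ #(U ∩ W) = #U - k := by
  have hU := card_sdiff_add_card_inter U W
  have hW := card_sdiff_add_card_inter W U
  rw [inter_comm] at hW
  simp only [johnsonNeighborFinset, mem_filter_univ]
  omega

theorem card_filter_subset_johnsonNeighborFinset {Y U : Finset V} (hYU : Y ⊆ U) (k : ℕ) :
    #{W ∈ johnsonNeighborFinset k U | Y ⊆ W} = (#U - #Y).choose k * (#Uᶜ).choose k := by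
  rw [← card_sdiff_of_subset hYU, ← card_powersetCard, ← card_powersetCard, ← card_product]
  have hsdiff {A B : Finset V} (hA : A ⊆ U \ Y) (hB : B ⊆ Uᶜ) :
      U \ (U \ A ∪ B) = A ∧ (U \ A ∪ B) \ U = B := by
    constructor <;> grind [mem_compl]
  have hunion (W : Finset V) : U \ (U \ W) ∪ W \ U = W := by grind
  refine card_nbij' (fun W ↦ (U \ W, W \ U)) (fun p ↦ U \ p.1 ∪ p.2) ?_ ?_
    (fun W _ ↦ hunion W) ?_
  · intro W hW
    simp only [johnsonNeighborFinset, mem_coe, mem_filter, mem_univ, true_and, mem_product,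
      mem_powersetCard] at hW ⊢
    obtain ⟨⟨hUW, hWU⟩, hYW⟩ := hW
    exact ⟨⟨sdiff_subset_sdiff le_rfl hYW, hUW⟩, by grind [mem_compl], hWU⟩
  · rintro ⟨A, B⟩ hAB
    simp only [johnsonNeighborFinset, mem_coe, mem_filter, mem_univ, true_and, mem_product,
      mem_powersetCard] at hAB ⊢
    obtain ⟨⟨hA, hAk⟩, hB, hBk⟩ := hAB
    rw [(hsdiff hA hB).1, (hsdiff hA hB).2]
    exact ⟨⟨hAk, hBk⟩, by grind⟩
  · rintro ⟨A, B⟩ hAB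
    simp only [mem_coe, mem_product, mem_powersetCard] at hAB
    obtain ⟨⟨hA, -⟩, hB, -⟩ := hAB
    exact Prod.ext (hsdiff hA hB).1 (hsdiff hA hB).2

theorem card_johnsonNeighborFinset (k : ℕ) (U : Finset V) :
    #(johnsonNeighborFinset k U) = (#U).choose k * (#Uᶜ).choose k := by
  simpa using card_filter_subset_johnsonNeighborFinset (empty_subset U) k

theorem choose_sub_div_choose_mul_card_johnsonNeighborFinset (K : Type*) [Field K] [CharZero K]
    {Y U : Finset V} (hYU : Y ⊆ U) {k : ℕ} (hk : k ≤ #U) :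
    ((#U - #Y).choose k : K) / ((#U).choose k : K) * #(johnsonNeighborFinset k U) =
      #{W ∈ johnsonNeighborFinset k U | Y ⊆ W} := by
  have hchoose : ((#U).choose k : K) ≠ 0 := mod_cast (Nat.choose_pos hk).ne'
  rw [card_filter_subset_johnsonNeighborFinset hYU, card_johnsonNeighborFinset]
  push_cast
  field_simp

end JohnsonGraph

theorem stmt17_general.{u} (ε α : ℝ) (hα₀ : 0 < α) (hα : α ≤ 3 / 4)
    (ℓ k : ℕ) (hk : (k : ℝ) = α * ℓ) (r : ℕ) (hr : r ≤ 32 * ε / α) (hr4 : 4 * r ≤ ℓ) :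
    (∀ s : ℕ, s ≤ r →
      (Nat.choose (ℓ - s) k : ℝ) / (Nat.choose ℓ k : ℝ) ≥ (1 - 4 * α / 3) ^ r ∧
      (1 - 4 * α / 3) ^ r ≥ 1 - (4 / 3) * r * α ∧
      1 - (4 / 3) * r * α ≥ 1 - 200 * ε) ∧
    (∀ (V : Type u) [Fintype V] [DecidableEq V] (Y U : Finset V),
      #Y ≤ r → #U = ℓ → Y ⊆ U →
      (#{W : Finset V | #W = ℓ ∧ #(U ∩ W) = ℓ - k ∧ Y ⊆ W} : ℝ)
        ≥ (1 - 200 * ε) * #{W : Finset V | #W = ℓ ∧ #(U ∩ W) = ℓ - k}) := by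
  have hkℓ : k ≤ ℓ := by
    have : (k : ℝ) ≤ ℓ := hk.trans_le (mul_le_of_le_one_left (by positivity) (by linarith))
    exact_mod_cast this
  have hbernoulli : (1 - 4 * α / 3) ^ r ≥ 1 - (4 / 3) * r * α := by
    have := one_add_mul_le_pow (a := -(4 * α / 3)) (by linarith) r
    ring_nf at this ⊢
    linarith
  have hrα : 1 - (4 / 3) * r * α ≥ 1 - 200 * ε := by
    rw [le_div_iff₀ hα₀] at hr
    have : 0 ≤ r * α := by positivity
    linarith
  have hratio {s : ℕ} (hs : s ≤ r) :=
    one_sub_pow_le_choose_sub_div_choose hα₀.le hα hk.le hr4 hs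
  refine ⟨fun s hs ↦ ⟨hratio hs, hbernoulli, hrα⟩, ?_⟩
  rintro V _ _ Y U hY rfl hYU
  simp only [← and_assoc, ← mem_johnsonNeighborFinset_iff_card_inter hkℓ, ge_iff_le]
  rw [← filter_filter, filter_univ_mem,
    ← choose_sub_div_choose_mul_card_johnsonNeighborFinset ℝ hYU hkℓ]
  gcongr
  exact hrα.le.trans (hbernoulli.le.trans (hratio hY))

/-- bounded expansion of `s`-restricted subcubes of the Johnson graph
`J_{n,ℓ,α}` with `k = αℓ` and `r = ⌊32ε/α⌋ ≤ ℓ/4`: the binomial ratio chain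
`C(ℓ−s, αℓ)/C(ℓ, αℓ) ≥ (1 − 4α/3)^r ≥ 1 − (4/3)rα ≥ 1 − 200ε`, and consequently every
vertex `U ⊇ Y` (with `|Y| = s ≤ r`) has at least a `(1 − 200ε)`-fraction of its
neighbors containing `Y`. -/
theorem stmt17 (ε α : ℝ) (hε : 0 < ε) (hα0 : 0 < α) (hα : α < 1 / 2)
    (ℓ k : ℕ) (hℓ : 1 ≤ ℓ) (hk : (k : ℝ) = α * ℓ) (hk1 : 1 ≤ k)
    (r : ℕ) (hr : r = ⌊32 * ε / α⌋₊) (hr4 : 4 * r ≤ ℓ) :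
    (∀ s : ℕ, s ≤ r →
      (Nat.choose (ℓ - s) k : ℝ) / (Nat.choose ℓ k : ℝ) ≥ (1 - 4 * α / 3) ^ r ∧
      (1 - 4 * α / 3) ^ r ≥ 1 - (4 / 3) * r * α ∧
      1 - (4 / 3) * r * α ≥ 1 - 200 * ε) ∧
    (∀ n : ℕ, 2 * ℓ ≤ n → ∀ s : ℕ, s ≤ r → ∀ Y U : Finset (Fin n),
      Y.card = s → U.card = ℓ → Y ⊆ U →
      ((univ.filter (fun W : Finset (Fin n) =>
            W.card = ℓ ∧ (U ∩ W).card = ℓ - k ∧ Y ⊆ W)).card : ℝ)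
        ≥ (1 - 200 * ε) *
            ((univ.filter (fun W : Finset (Fin n) =>
              W.card = ℓ ∧ (U ∩ W).card = ℓ - k)).card : ℝ)) := by
  obtain ⟨hchain, hexpansion⟩ := stmt17_general ε α hα0 (by linarith) ℓ k hk r
    (hr ▸ Nat.floor_le (by positivity)) hr4
  exact ⟨hchain, fun n _ _ hs Y U hY ↦ hexpansion (Fin n) Y U (hY.trans_le hs)⟩
end

section
/- Let I = (G, Π) be an affine unique games instance over a finite abelian group Σ, on a finite weighted graph G = (V,E) with stationary distribution π and edge constraints X_u − X_v = a_{uv}. Let μ be a shift-symmetric probability distribution over assignments X ∈ Σ^V, i.e. for every s ∈ Σ the globally shifted assignment X + s has the same law as X. Define Ψ(μ) = E_{u,v∼π}[ Σ_{s∈Σ} Pr_μ[X_v − X_u = s]² · E_μ[val_v(X) | X_v − X_u = s] ], where val_v(X) = E_{w∼v}[1(X_v − X_w = a_{vw})] (a neighbor w of v sampled proportionally to the weight of (v,w)), and a term is taken to be 0 when the conditioning event has probability 0. If Ψ(μ) ≥ δ, then the condition-and-round procedure achieves expected value at least δ: E_{u∼π}[ E_Y[val(Y)] ] ≥ δ,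 where given u the random assignment Y ∈ Σ^V has independent coordinates with Y_v distributed according to the conditional law of X_v given X_u = 0, and val(Y) = E_{(v,w)∼E}[1(Y_v − Y_w = a_{vw})] over a weighted random edge. (Shift-symmetry guarantees Pr_μ[X_u = 0] = 1/|Σ| > 0, so the conditioning is well defined.) -/
open Finset

/-!
Fix the conditioning vertex `u` and write `D i = X i - X u`, with marginals `p i`. By
shift-symmetry `p v` is also the conditional law of `X v` given `X u = 0`, so the rounded
assignment `Y` has independent coordinates with the marginals of `D`. A constraint `D v - D x = b`
determines `D x` from `D v`, hence
`E[p v (D v); D v - D x = b] = ∑ s, p v s * Pr[D v = s, D x = -b + s] ≤ ∑ s, p v s * p x (-b + s)`,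
and for `x ≠ v` the right-hand side is the probability that `Y` satisfies the constraint; for
`x = v` it is enough that `p v ≤ 1`. Averaging the left-hand side over the edges `(v, x)` and over
`u` gives the potential `Ψ`.
-/

section ProductExpectation

variable {V Γ R : Type*} [Fintype V] [DecidableEq V] [Fintype Γ] [CommSemiring R]
  {p : V → Γ → R}

lemma sum_prod_mul_prod_apply (hp : ∀ i, ∑ s, p i s = 1) (S : Finset V) (f : V → Γ → R) :
    ∑ Y : V → Γ, (∏ i, p i (Y i)) * ∏ i ∈ S, f i (Y i) = ∏ i ∈ S, ∑ s, p i s * f i s := by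
  calc ∑ Y : V → Γ, (∏ i, p i (Y i)) * ∏ i ∈ S, f i (Y i)
      = ∑ Y : V → Γ, ∏ i, p i (Y i) * (if i ∈ S then f i (Y i) else 1) := by
        simp only [prod_mul_distrib, prod_ite_mem, univ_inter]
    _ = ∏ i, ∑ s, p i s * (if i ∈ S then f i s else 1) :=
        (Fintype.prod_sum fun i s => p i s * (if i ∈ S then f i s else 1)).symm
    _ = ∏ i, if i ∈ S then ∑ s, p i s * f i s else 1 :=
        prod_congr rfl fun i _ => by split_ifs <;> simp only [mul_one, hp]
    _ = ∏ i ∈ S, ∑ s, p i s * f i s := by rw [prod_ite_mem, univ_inter]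

lemma sum_prod_mul_apply (hp : ∀ i, ∑ s, p i s = 1) (v : V) (f : Γ → R) :
    ∑ Y : V → Γ, (∏ i, p i (Y i)) * f (Y v) = ∑ s, p v s * f s := by
  simpa only [prod_singleton] using sum_prod_mul_prod_apply hp {v} fun _ => f

lemma sum_prod_mul_ite_apply_eq [DecidableEq Γ] (hp : ∀ i, ∑ s, p i s = 1) {v x : V}
    (hvx : v ≠ x) (g : Γ → Γ) :
    ∑ Y : V → Γ, (∏ i, p i (Y i)) * (if Y x = g (Y v) then 1 else 0)
      = ∑ s, p v s * p x (g s) := by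
  have joint (s : Γ) : ∑ Y : V → Γ, (∏ i, p i (Y i)) *
      ((if Y v = s then 1 else 0) * (if Y x = g s then 1 else 0)) = p v s * p x (g s) := by
    simpa [prod_pair hvx, hvx.symm] using sum_prod_mul_prod_apply hp {v, x}
      fun i t => if t = (if i = v then s else g s) then 1 else 0
  rw [← sum_congr rfl fun s _ => joint s, sum_comm]
  simp only [← mul_sum, ite_mul, one_mul, zero_mul, sum_ite_eq, mem_univ, if_true]

end ProductExpectation

section Marginal

variable {Ω Γ : Type*} [Fintype Ω] [DecidableEq Γ]

/-- The mass function of a random variable `X` on a finite sample space with mass function `P`. -/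
def marginal (P : Ω → ℝ) (X : Ω → Γ) (s : Γ) : ℝ :=
  ∑ ω, P ω * (if X ω = s then 1 else 0)

variable {P : Ω → ℝ}

lemma marginal_nonneg (hP : ∀ ω, 0 ≤ P ω) (X : Ω → Γ) (s : Γ) : 0 ≤ marginal P X s :=
  sum_nonneg fun ω _ => mul_nonneg (hP ω) (by positivity)

lemma marginal_le_one (hP : ∀ ω, 0 ≤ P ω) (hP1 : ∑ ω, P ω = 1) (X : Ω → Γ) (s : Γ) :
    marginal P X s ≤ 1 := by
  rw [← hP1]
  exact sum_le_sum fun ω _ => mul_le_of_le_one_right (hP ω) (by split_ifs <;> norm_num)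

variable [Fintype Γ]

lemma sum_mul_sum_ite_mul (P : Ω → ℝ) (X : Ω → Γ) (c : Γ → ℝ) (f : Ω → ℝ) :
    ∑ s, c s * ∑ ω, P ω * (if X ω = s then 1 else 0) * f ω = ∑ ω, P ω * (c (X ω) * f ω) := by
  simp only [mul_sum]
  rw [sum_comm]
  refine sum_congr rfl fun ω _ => ?_
  simp [mul_left_comm]

lemma sum_marginal_mul (P : Ω → ℝ) (X : Ω → Γ) (f : Γ → ℝ) :
    ∑ s, marginal P X s * f s = ∑ ω, P ω * f (X ω) := by
  simpa [marginal, mul_comm] using sum_mul_sum_ite_mul P X f fun _ => 1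

lemma sum_marginal (P : Ω → ℝ) (X : Ω → Γ) : ∑ s, marginal P X s = ∑ ω, P ω := by
  simpa using sum_marginal_mul P X fun _ => 1

variable {V : Type*} [Fintype V] [DecidableEq V]

theorem sum_marginal_mul_ite_le (hP : ∀ ω, 0 ≤ P ω) (hP1 : ∑ ω, P ω = 1) (X : Ω → V → Γ)
    (g : Γ → Γ) (v x : V) :
    ∑ ω, P ω * (marginal P (X · v) (X ω v) * (if X ω x = g (X ω v) then 1 else 0))
      ≤ ∑ Y : V → Γ, (∏ i, marginal P (X · i) (Y i)) * (if Y x = g (Y v) then 1 else 0) := by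
  have sum_one (i : V) : ∑ s, marginal P (X · i) s = 1 := (sum_marginal P _).trans hP1
  rcases eq_or_ne v x with rfl | hvx
  · rw [sum_prod_mul_apply sum_one v fun s => if s = g s then 1 else 0, sum_marginal_mul]
    exact sum_le_sum fun ω _ => mul_le_mul_of_nonneg_left
      (mul_le_of_le_one_left (by positivity) (marginal_le_one hP hP1 _ _)) (hP ω)
  · have event_le (s : Γ) : ∑ ω, P ω * (if X ω v = s then 1 else 0) *
        (if X ω x = g (X ω v) then 1 else 0) ≤ marginal P (X · x) (g s) := by
      refine sum_le_sum fun ω _ => ?_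
      rw [mul_assoc]
      exact mul_le_mul_of_nonneg_left (by split_ifs <;> simp_all) (hP ω)
    rw [sum_prod_mul_ite_apply_eq sum_one hvx, ← sum_mul_sum_ite_mul]
    exact sum_le_sum fun s _ => mul_le_mul_of_nonneg_left (event_le s) (marginal_nonneg hP _ s)

end Marginal

section WeightedAverage

variable {V : Type*} [Fintype V]

/-- The weighted degree of `v`: the total weight of the oriented edges out of `v`. -/
def weightedDegree (w : V → V → ℝ) (v : V) : ℝ := ∑ u, w v u

/-- The probability `π(v)` of `v` when vertices are sampled proportionally to their weighted degree;
for symmetric weights, `π` is the stationary distribution of the random walk. -/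
noncomputable def stationary (w : V → V → ℝ) (v : V) : ℝ :=
  weightedDegree w v / ∑ u, weightedDegree w u

/-- The expectation of `f x` for a random neighbor `x ∼ v`. -/
noncomputable def neighborAverage (w : V → V → ℝ) (v : V) (f : V → ℝ) : ℝ :=
  (∑ x, w v x * f x) / weightedDegree w v

/-- The expectation of `f v x` for a random oriented edge `(v, x) ∼ E`. -/
noncomputable def edgeAverage (w : V → V → ℝ) (f : V → V → ℝ) : ℝ :=
  (∑ v, ∑ x, w v x * f v x) / ∑ v, weightedDegree w v

variable {w : V → V → ℝ}

lemma stationary_nonneg (hw : ∀ u v, 0 ≤ w u v) (v : V) : 0 ≤ stationary w v :=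
  div_nonneg (sum_nonneg fun _ _ => hw _ _) (sum_nonneg fun _ _ => sum_nonneg fun _ _ => hw _ _)

lemma sum_stationary_mul_neighborAverage (hdeg : ∀ v, weightedDegree w v ≠ 0) (f : V → V → ℝ) :
    ∑ v, stationary w v * neighborAverage w v (f v) = edgeAverage w f := by
  rw [edgeAverage, sum_div]
  refine sum_congr rfl fun v _ => ?_
  rw [stationary, neighborAverage, mul_comm, div_mul_div_cancel₀ (hdeg v)]

lemma sum_mul_neighborAverage {ι : Type*} (S : Finset ι) (c : ι → ℝ) (v : V) (f : ι → V → ℝ) :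
    ∑ i ∈ S, c i * neighborAverage w v (f i)
      = neighborAverage w v fun x => ∑ i ∈ S, c i * f i x := by
  simp only [neighborAverage, ← mul_div_assoc, ← sum_div, mul_sum, mul_left_comm (c _)]
  rw [sum_comm]

lemma sum_mul_edgeAverage {ι : Type*} (S : Finset ι) (c : ι → ℝ) (f : ι → V → V → ℝ) :
    ∑ i ∈ S, c i * edgeAverage w (f i) = edgeAverage w fun v x => ∑ i ∈ S, c i * f i v x := by
  simp only [edgeAverage, ← mul_div_assoc, ← sum_div, mul_sum, mul_left_comm (c _)]
  rw [sum_comm]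
  simp only [sum_comm (s := S)]

lemma edgeAverage_mono (hw : ∀ u v, 0 ≤ w u v) {f g : V → V → ℝ} (hfg : ∀ v x, f v x ≤ g v x) :
    edgeAverage w f ≤ edgeAverage w g :=
  div_le_div_of_nonneg_right
    (sum_le_sum fun v _ => sum_le_sum fun x _ => mul_le_mul_of_nonneg_left (hfg v x) (hw v x))
    (sum_nonneg fun _ _ => sum_nonneg fun _ _ => hw _ _)

end WeightedAverage

theorem sum_stationary_mul_marginal_mul_neighborAverage_le {V Γ Ω : Type*} [Fintype V]
    [DecidableEq V] [Fintype Γ] [DecidableEq Γ] [Fintype Ω] {w : V → V → ℝ}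
    (hw : ∀ u v, 0 ≤ w u v) (hdeg : ∀ v, weightedDegree w v ≠ 0) {P : Ω → ℝ}
    (hP : ∀ ω, 0 ≤ P ω) (hP1 : ∑ ω, P ω = 1) (X : Ω → V → Γ) (g : V → V → Γ → Γ) :
    ∑ v, stationary w v * ∑ ω, P ω * (marginal P (X · v) (X ω v) *
        neighborAverage w v fun x => if X ω x = g v x (X ω v) then 1 else 0)
      ≤ ∑ Y : V → Γ, (∏ i, marginal P (X · i) (Y i)) *
          edgeAverage w fun v x => if Y x = g v x (Y v) then 1 else 0 := by
  simp only [← mul_assoc, sum_mul_neighborAverage]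
  rw [sum_stationary_mul_neighborAverage hdeg
    fun v x => ∑ ω, P ω * marginal P (X · v) (X ω v) * if X ω x = g v x (X ω v) then 1 else 0,
    sum_mul_edgeAverage]
  refine edgeAverage_mono hw fun v x => ?_
  simpa only [mul_assoc] using sum_marginal_mul_ite_le hP hP1 X (g v x) v x

section AffineGame

variable {V Γ : Type*} [Fintype V] [AddGroup Γ] [DecidableEq Γ]

/-- The local value `val_v(X)` of the assignment `X` at the vertex `v`, in the game with weights
`w` and shifts `a`. -/
noncomputable def vertexValue (w : V → V → ℝ) (a : V → V → Γ) (v : V) (X : V → Γ) : ℝ :=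
  neighborAverage w v fun x => if X v - X x = a v x then 1 else 0

/-- The value `val(X)` of the assignment `X`, in the game with weights `w` and shifts `a`. -/
noncomputable def gameValue (w : V → V → ℝ) (a : V → V → Γ) (X : V → Γ) : ℝ :=
  edgeAverage w fun v x => if X v - X x = a v x then 1 else 0

variable [DecidableEq V] [Fintype Γ]

/-- `Pr_μ[X_v - X_u = s]`. -/
def shiftProb (μ : (V → Γ) → ℝ) (v u : V) : Γ → ℝ :=
  marginal μ fun X => X v - X u

/-- `E_μ[val_v(X) | X_v - X_u = s]`, taken to be `0` if the conditioning event is null. -/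
noncomputable def condVertexValue (w : V → V → ℝ) (a : V → V → Γ) (μ : (V → Γ) → ℝ)
    (v u : V) (s : Γ) : ℝ :=
  if shiftProb μ v u s = 0 then 0
  else (∑ X, μ X * (if X v - X u = s then 1 else 0) * vertexValue w a v X) / shiftProb μ v u s

/-- The conditioned shift potential `Ψ(μ)`. -/
noncomputable def shiftPotential (w : V → V → ℝ) (a : V → V → Γ) (μ : (V → Γ) → ℝ) : ℝ :=
  ∑ u, ∑ v, stationary w u * stationary w v *
    ∑ s, shiftProb μ v u s ^ 2 * condVertexValue w a μ v u s

/-- `Pr_μ[X_v = t | X_u = 0]`, the law of the coordinate `Y_v` after conditioning on `u`. -/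
noncomputable def condMarginal (μ : (V → Γ) → ℝ) (u v : V) (t : Γ) : ℝ :=
  (∑ X, μ X * (if X v = t ∧ X u = 0 then 1 else 0)) / ∑ X, μ X * (if X u = 0 then 1 else 0)

lemma sum_sq_shiftProb_mul_condVertexValue (w : V → V → ℝ) (a : V → V → Γ)
    (μ : (V → Γ) → ℝ) (v u : V) :
    ∑ s, shiftProb μ v u s ^ 2 * condVertexValue w a μ v u s
      = ∑ X, μ X * (shiftProb μ v u (X v - X u) * vertexValue w a v X) := by
  rw [← sum_mul_sum_ite_mul μ (fun X => X v - X u) (shiftProb μ v u)]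
  refine sum_congr rfl fun s _ => ?_
  rw [condVertexValue]
  split_ifs with h
  · simp [h]
  · field_simp

lemma sum_eq_card_mul_sum_ite_apply_eq_zero {R : Type*} [NonAssocSemiring R]
    {F : (V → Γ) → R} (hF : ∀ (s : Γ) (X : V → Γ), F (fun v => X v + s) = F X) (u : V) :
    ∑ X, F X = Fintype.card Γ * ∑ X, F X * (if X u = 0 then 1 else 0) := by
  have fiber (t : Γ) : ∑ X, F X * (if X u = t then 1 else 0)
      = ∑ X, F X * (if X u = 0 then 1 else 0) := by
    refine (Fintype.sum_equiv (Equiv.addRight fun _ : V => t) _ _ fun X => ?_).symm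
    have shifted : Equiv.addRight (fun _ : V => t) X = fun v => X v + t := rfl
    simp only [shifted, hF, add_eq_right]
  calc ∑ X, F X = ∑ t, ∑ X, F X * (if X u = t then 1 else 0) := by rw [sum_comm]; simp
    _ = Fintype.card Γ * ∑ X, F X * (if X u = 0 then 1 else 0) := by
        simp only [fiber, sum_const, card_univ, nsmul_eq_mul]

lemma condMarginal_eq_shiftProb {μ : (V → Γ) → ℝ} (hμ1 : ∑ X, μ X = 1)
    (hshift : ∀ (s : Γ) (X : V → Γ), μ (fun v => X v + s) = μ X) (u v : V) :
    condMarginal μ u v = shiftProb μ v u := by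
  ext t
  have card_mul_prob : Fintype.card Γ * ∑ X, μ X * (if X u = 0 then (1 : ℝ) else 0) = 1 := by
    rw [← sum_eq_card_mul_sum_ite_apply_eq_zero hshift u, hμ1]
  have card_mul_joint : shiftProb μ v u t
      = Fintype.card Γ * ∑ X, μ X * (if X v = t ∧ X u = 0 then 1 else 0) := by
    rw [shiftProb, marginal, sum_eq_card_mul_sum_ite_apply_eq_zero _ u]
    · congr! 2 with X
      by_cases hu : X u = 0 <;> simp [hu]
    · simp [hshift]
  rw [condMarginal, card_mul_joint, div_eq_iff (right_ne_zero_of_mul_eq_one card_mul_prob),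
    mul_right_comm, card_mul_prob, one_mul]

end AffineGame

theorem stmt18_general {V Γ : Type*} [Fintype V] [DecidableEq V] [Fintype Γ] [AddGroup Γ]
    [DecidableEq Γ] {w : V → V → ℝ} (hw : ∀ u v, 0 ≤ w u v)
    (hdeg : ∀ v, 0 < weightedDegree w v) (a : V → V → Γ) {μ : (V → Γ) → ℝ}
    (hμ : ∀ X, 0 ≤ μ X) (hμ1 : ∑ X, μ X = 1)
    (hshift : ∀ (s : Γ) (X : V → Γ), μ (fun v => X v + s) = μ X) :
    shiftPotential w a μ
      ≤ ∑ u, stationary w u * ∑ Y, (∏ v, condMarginal μ u v (Y v)) * gameValue w a Y := by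
  simp only [shiftPotential, mul_assoc, ← mul_sum, sum_sq_shiftProb_mul_condVertexValue]
  refine sum_le_sum fun u _ => mul_le_mul_of_nonneg_left ?_ (stationary_nonneg hw u)
  have constraint_iff (X : V → Γ) (v x : V) :
      X v - X x = a v x ↔ X x = -a v x + X v := by
    rw [sub_eq_iff_eq_add, ← neg_add_eq_iff_eq_add, eq_comm]
  have rounding := sum_stationary_mul_marginal_mul_neighborAverage_le hw (fun v => (hdeg v).ne')
    hμ hμ1 (fun X i => X i - X u) fun v x s => -a v x + s
  simpa only [condMarginal_eq_shiftProb hμ1 hshift, shiftProb, vertexValue, gameValue,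
    constraint_iff, ← add_sub_assoc, sub_left_inj] using rounding

/-- the Condition & Round algorithm: for a shift-symmetric distribution μ
over assignments of an affine unique games instance over a finite abelian group Γ, if the
conditioned shift potential Ψ(μ) is at least δ, then conditioning on a stationary-random
vertex and rounding coordinates independently achieves expected value at least δ. -/
theorem stmt18
    {V : Type*} [Fintype V] [Nonempty V] [DecidableEq V]
    {Γ : Type*} [Fintype Γ] [AddCommGroup Γ] [DecidableEq Γ]
    (w : V → V → ℝ) (hsymm : ∀ u v, w u v = w v u) (hnn : ∀ u v, 0 ≤ w u v)
    (deg : V → ℝ) (hdeg : ∀ v, deg v = ∑ u, w v u) (hdegpos : ∀ v, 0 < deg v)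
    (pi : V → ℝ) (hpi : ∀ v, pi v = deg v / ∑ u, deg u)
    (a : V → V → Γ) (ha : ∀ u v, a v u = - a u v)
    (μ : (V → Γ) → ℝ) (hμnn : ∀ X, 0 ≤ μ X) (hμ1 : ∑ X : V → Γ, μ X = 1)
    (hshift : ∀ (s : Γ) (X : V → Γ), μ (fun v => X v + s) = μ X)
    (valv : V → (V → Γ) → ℝ)
    (hvalv : ∀ v X, valv v X
      = (∑ u, w v u * (if X v - X u = a v u then (1 : ℝ) else 0)) / deg v)
    (Pr : V → V → Γ → ℝ)
    (hPr : ∀ v u s, Pr v u s = ∑ X : V → Γ, μ X * (if X v - X u = s then (1 : ℝ) else 0))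
    (condval : V → V → Γ → ℝ)
    (hcond : ∀ v u s, condval v u s =
      if Pr v u s = 0 then 0
      else (∑ X : V → Γ, μ X * (if X v - X u = s then (1 : ℝ) else 0) * valv v X)
            / Pr v u s)
    (Ψ : ℝ)
    (hΨ : Ψ = ∑ u, ∑ v, pi u * pi v * ∑ s : Γ, (Pr v u s) ^ 2 * condval v u s)
    (q : V → V → Γ → ℝ)
    (hq : ∀ u v t, q u v t =
      (∑ X : V → Γ, μ X * (if X v = t ∧ X u = 0 then (1 : ℝ) else 0))
        / (∑ X : V → Γ, μ X * (if X u = 0 then (1 : ℝ) else 0)))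
    (δ : ℝ) (hδ : Ψ ≥ δ) :
    ∑ u, pi u * (∑ Y : V → Γ, (∏ v, q u v (Y v)) *
        ((∑ v, ∑ x, w v x * (if Y v - Y x = a v x then (1 : ℝ) else 0)) / (∑ v, deg v)))
      ≥ δ := by
  rcases funext hdeg, funext hpi, funext₂ hvalv, funext₃ hPr, funext₃ hcond, funext₃ hq, hΨ with
    ⟨rfl, rfl, rfl, rfl, rfl, rfl, rfl⟩
  exact hδ.trans (stmt18_general hnn hdegpos a hμnn hμ1 hshift)
end
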